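/- There exists a positive integer N such that for every non-Brjuno number α ∈ Irr_N, the forward orbit of the critical point of P_α accumulates at the fixed point 0; that is, 0 is a cluster point of the sequence (P_α^{∘n}(cp_α))_{n≥1}, where cp_α = −e^{2πiα}/2. -/

import Mathlib

open MeasureTheory Filter

/-- The quadratic polynomial `P_α(z) = e^{2πiα} z + z²`. -/
noncomputable def Pa (α : ℝ) (z : ℂ) : ℂ :=
  Complex.exp (2 * Real.pi * Complex.I * α) * z + z ^ 2

/-- The critical point `cp_α = -e^{2πiα}/2` of `P_α`. -/
noncomputable def cpa (α : ℝ) : ℂ := -Complex.exp (2 * Real.pi * Complex.I * α) / 2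

/-- The post-critical set of `P_α`: the closure of the forward orbit of the critical point. -/
noncomputable def postCritical (α : ℝ) : Set ℂ :=
  closure {w : ℂ | ∃ n : ℕ, 1 ≤ n ∧ (Pa α)^[n] (cpa α) = w}

/-- The Gauss map orbit of `α`: `x₀ = α`, `x_{n+1} = {1/x_n}`. -/
noncomputable def gaussIter (α : ℝ) : ℕ → ℝ
  | 0 => α
  | n + 1 => Int.fract (1 / gaussIter α n)

/-- `cfa α n` is the partial quotient `a_{n+1}` of the regular continued fraction of `α`. -/
noncomputable def cfa (α : ℝ) (n : ℕ) : ℤ := ⌊1 / gaussIter α n⌋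

/-- `cfq α n = qₙ`, the denominator of the `n`-th convergent of the regular continued
fraction of `α`: `q₀ = 1`, `q₁ = a₁`, `q_{n+1} = a_{n+1} qₙ + q_{n-1}`. -/
noncomputable def cfq (α : ℝ) : ℕ → ℤ
  | 0 => 1
  | 1 => cfa α 0
  | n + 2 => cfa α (n + 1) * cfq α (n + 1) + cfq α n

/-- `α` is a Brjuno number if `∑ (log q_{n+1})/qₙ` converges. -/
def IsBrjuno (α : ℝ) : Prop :=
  Summable fun n : ℕ => Real.log ((cfq α (n + 1) : ℝ)) / ((cfq α n : ℝ))

/-- `Irr_N`: irrational numbers in `(0,1)` whose partial quotients are all at least `N`. -/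
def IrrN (N : ℕ) : Set ℝ :=
  {α | α ∈ Set.Ioo (0 : ℝ) 1 ∧ Irrational α ∧ ∀ n : ℕ, (N : ℤ) ≤ cfa α n}

/-- The rotation multiplier. -/
noncomputable def lam (α : ℝ) : ℂ := Complex.exp (2 * Real.pi * Complex.I * α)

/-- The class of nearly linear maps with multiplier `lam α`. -/
def SC (α : ℝ) : Set (ℂ → ℂ) :=
  {f | DifferentiableOn ℂ f (Metric.ball 0 1) ∧
    ∀ z ∈ Metric.ball (0 : ℂ) 1, ‖f z - lam α * z‖ ≤ (1 / 20) * ‖z‖ ^ 2}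

/-- Uniform stability of the class. -/
def Stab (α ρ : ℝ) : Prop :=
  ∀ f ∈ SC α, ∀ z : ℂ, ‖z‖ < ρ → ∀ n : ℕ, f^[n] z ∈ Metric.ball (0 : ℂ) 1

lemma norm_lam (α : ℝ) : ‖lam α‖ = 1 := by
  have : (2 * Real.pi * Complex.I * α : ℂ) = ((2 * Real.pi * α : ℝ) : ℂ) * Complex.I := by
    push_cast; ring
  rw [lam, this, Complex.norm_exp_ofReal_mul_I]

lemma Stab.le_one {α ρ : ℝ} (h : Stab α ρ) : ρ ≤ 1 := by
  by_contra hc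
  push Not at hc
  have := h (fun z => lam α * z) ⟨by fun_prop, fun z _ => by simp⟩
    (((1 + ρ) / 2 : ℝ) : ℂ) (by rw [Complex.norm_real, Real.norm_of_nonneg (by linarith)]; linarith) 0
  simp only [Function.iterate_zero, id, mem_ball_zero_iff, Complex.norm_real] at this
  rw [Real.norm_of_nonneg (by linarith)] at this
  linarith

lemma gaussIter_pos {N : ℕ} (hN : 2 ≤ N) {α : ℝ} (h : α ∈ IrrN N) (n : ℕ) : 0 < gaussIter α n := by
  have h2 := h.2.2 n
  rw [cfa] at h2
  by_contra hc
  push Not at hc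
  have : 1 / gaussIter α n ≤ 0 := by
    rw [one_div]; exact inv_nonpos.2 hc
  have h3 : (⌊1 / gaussIter α n⌋ : ℝ) ≤ 0 := (Int.floor_le _).trans this
  have h4 : ⌊1 / gaussIter α n⌋ ≤ 0 := by exact_mod_cast h3
  omega

lemma gaussIter_inv_ge {N : ℕ} {α : ℝ} (h : α ∈ IrrN N) (n : ℕ) : (N : ℝ) ≤ 1 / gaussIter α n := by
  have h2 := h.2.2 n
  rw [cfa, Int.le_floor] at h2
  exact_mod_cast h2

/-- products of Gauss iterates -/
noncomputable def gprod (α : ℝ) (n : ℕ) : ℝ := ∏ i ∈ Finset.range n, gaussIter α i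

lemma gprod_pos {N : ℕ} (hN : 2 ≤ N) {α : ℝ} (h : α ∈ IrrN N) (n : ℕ) : 0 < gprod α n :=
  Finset.prod_pos fun i _ => gaussIter_pos hN h i

lemma gprod_succ (α : ℝ) (n : ℕ) : gprod α (n+1) = gprod α n * gaussIter α n :=
  Finset.prod_range_succ _ _

lemma gaussIter_le_half {N : ℕ} (hN : 2 ≤ N) {α : ℝ} (h : α ∈ IrrN N) (n : ℕ) :
    gaussIter α n ≤ 1 / 2 := by
  have h1 := gaussIter_inv_ge h n
  have h2 := gaussIter_pos hN h n
  have h3 : (2:ℝ) ≤ N := by exact_mod_cast hN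
  have h4 : 2 ≤ 1 / gaussIter α n := h3.trans h1
  rw [le_div_iff₀ h2] at h4
  linarith

lemma gprod_le {N : ℕ} (hN : 2 ≤ N) {α : ℝ} (h : α ∈ IrrN N) (n : ℕ) : gprod α n ≤ (1/2)^n := by
  induction n with
  | zero => simp [gprod]
  | succ n ih =>
    rw [gprod_succ, pow_succ]
    exact mul_le_mul ih (gaussIter_le_half hN h n) (gaussIter_pos hN h n).le (by positivity)

lemma cfq_grow {N : ℕ} (hN : 2 ≤ N) {α : ℝ} (h : α ∈ IrrN N) (n : ℕ) :
    0 < cfq α n ∧ 2 * cfq α n ≤ cfq α (n+1) := by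
  induction n with
  | zero =>
    have := h.2.2 0
    simp only [cfq]
    constructor <;> omega
  | succ n ih =>
    have := h.2.2 (n+1)
    have h1 : 0 < cfq α (n+1) := by omega
    refine ⟨h1, ?_⟩
    have : 2 ≤ cfa α (n+1) := by omega
    have e : cfq α (n+1+1) = cfa α (n + 1) * cfq α (n + 1) + cfq α n := rfl
    rw [e]
    nlinarith

lemma cfq_two_pow {N : ℕ} (hN : 2 ≤ N) {α : ℝ} (h : α ∈ IrrN N) (n : ℕ) :
    (2:ℝ)^n ≤ cfq α n := by
  induction n with
  | zero => simp [cfq]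
  | succ n ih =>
    have := (cfq_grow hN h n).2
    have : (2 * cfq α n : ℝ) ≤ cfq α (n+1) := by exact_mod_cast this
    rw [pow_succ]; linarith

lemma inv_gauss {N : ℕ} (hN : 2 ≤ N) {α : ℝ} (h : α ∈ IrrN N) (n : ℕ) :
    gaussIter α n * (cfa α n + gaussIter α (n+1)) = 1 := by
  have : (cfa α n + gaussIter α (n+1) : ℝ) = 1 / gaussIter α n := by
    simp only [cfa, gaussIter]
    exact Int.floor_add_fract _
  rw [this]
  exact mul_one_div_cancel (gaussIter_pos hN h n).ne'

lemma cfq_ident {N : ℕ} (hN : 2 ≤ N) {α : ℝ} (h : α ∈ IrrN N) (n : ℕ) :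
    cfq α (n+1) * gprod α (n+1) + cfq α n * gprod α (n+2) = 1 := by
  induction n with
  | zero =>
    have := inv_gauss hN h 0
    simp [cfq, gprod, Finset.prod_range_succ] at this ⊢
    linarith
  | succ n ih =>
    have h1 := inv_gauss hN h (n+1)
    have e : (cfq α (n+1+1) : ℝ) = cfa α (n + 1) * cfq α (n + 1) + cfq α n := by
      exact_mod_cast (rfl : cfq α (n+1+1) = cfa α (n + 1) * cfq α (n + 1) + cfq α n)
    rw [e, gprod_succ α (n+2), gprod_succ α (n+1)]
    rw [gprod_succ α (n+1)] at ih
    rw [← ih]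
    have e2 : gprod α (n+1) * cfq α (n+1) * (gaussIter α (n+1) * (cfa α (n+1) + gaussIter α (n+1+1)))
      = gprod α (n+1) * cfq α (n+1) := by rw [h1, mul_one]
    linarith

lemma inv_cfq_le {N : ℕ} (hN : 2 ≤ N) {α : ℝ} (h : α ∈ IrrN N) (n : ℕ) :
    1 / (cfq α n : ℝ) ≤ 2 * gprod α n := by
  have hq : (0:ℝ) < cfq α n := by exact_mod_cast (cfq_grow hN h n).1
  rw [div_le_iff₀ hq]
  cases n with
  | zero => simp [gprod, cfq]
  | succ n =>
    have h1 := cfq_ident hN h n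
    have h2 : (2 * cfq α n : ℝ) ≤ cfq α (n+1) := by exact_mod_cast (cfq_grow hN h n).2
    have h3 : (0:ℝ) < cfq α n := by exact_mod_cast (cfq_grow hN h n).1
    rw [gprod_succ α (n+1)] at h1
    have h4 := gaussIter_le_half hN h (n+1)
    have h5 := gprod_pos hN h (n+1)
    have h6 := gaussIter_pos hN h (n+1)
    have h7 : cfq α n * (gprod α (n+1) * gaussIter α (n+1)) ≤ cfq α (n+1) * gprod α (n+1) := by
      apply mul_le_mul (by linarith) _ (by positivity) (by linarith)
      nlinarith
    linarith

theorem brjuno_of_stab {N : ℕ} (hN : 2 ≤ N) {C : ℝ} (hC : 1 ≤ C)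
    (H : ∀ a ρ : ℝ, 0 < a → 0 < ρ → (N:ℝ) ≤ 1 / a → Stab a ρ →
      Stab (Int.fract (1/a)) ((ρ / (C * a)) ^ (1/a)))
    {α : ℝ} (h : α ∈ IrrN N) {ρ : ℝ} (hρ : 0 < ρ) (hs : Stab α ρ) : IsBrjuno α := by
  -- step: telescoping
  have key : ∀ n, ∃ r > 0, Stab (gaussIter α n) r ∧
      ∑ j ∈ Finset.range n, gprod α j * (Real.log (1 / gaussIter α j) - Real.log C)
        = - Real.log ρ - gprod α n * (- Real.log r) := by
    intro n
    induction n with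
    | zero => exact ⟨ρ, hρ, hs, by simp [gprod]⟩
    | succ n ih =>
      obtain ⟨r, hr, hst, hsum⟩ := ih
      have ha := gaussIter_pos hN h n
      have hb : 0 < r / (C * gaussIter α n) := by positivity
      refine ⟨(r / (C * gaussIter α n)) ^ (1 / gaussIter α n), by positivity,
        H _ _ ha hr (gaussIter_inv_ge h n) hst, ?_⟩
      rw [Finset.sum_range_succ, hsum, Real.log_rpow hb, Real.log_div hr.ne' (by positivity),
        Real.log_mul (by positivity) ha.ne', gprod_succ, one_div, Real.log_inv]
      field_simp
      ring
  have key2 : ∀ n, ∑ j ∈ Finset.range n, gprod α j * Real.log (1 / gaussIter α j)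
      ≤ -Real.log ρ + 2 * Real.log C := by
    intro n
    obtain ⟨r, hr, hst, hsum⟩ := key n
    have h1 : Real.log r ≤ 0 := Real.log_nonpos hr.le hst.le_one
    have h2 := gprod_pos hN h n
    have h3 : ∑ j ∈ Finset.range n, gprod α j ≤ 2 := by
      calc _ ≤ ∑ j ∈ Finset.range n, ((1:ℝ)/2)^j := Finset.sum_le_sum fun j _ => gprod_le hN h j
        _ ≤ ∑' j, ((1:ℝ)/2)^j := Summable.sum_le_tsum _ (fun _ _ => by positivity) summable_geometric_two
        _ = 2 := tsum_geometric_two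
    have h4 : 0 ≤ Real.log C := Real.log_nonneg hC
    simp only [mul_sub, Finset.sum_sub_distrib, ← Finset.sum_mul] at hsum
    nlinarith
  have hlogpos : ∀ j, 0 ≤ Real.log (1 / gaussIter α j) := fun j => by
    apply Real.log_nonneg
    have := gaussIter_inv_ge h j
    have h3 : (2:ℝ) ≤ N := by exact_mod_cast hN
    linarith
  have sum1 : Summable fun j => gprod α j * Real.log (1 / gaussIter α j) :=
    summable_of_sum_range_le (fun j => mul_nonneg (gprod_pos hN h j).le (hlogpos j)) key2
  have sum2 : Summable fun j => gprod α j :=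
    Summable.of_nonneg_of_le (fun j => (gprod_pos hN h j).le) (gprod_le hN h) summable_geometric_two
  have sum3 : Summable fun n : ℕ => 2 * (√(1/2:ℝ))^n := by
    apply Summable.mul_left
    apply summable_geometric_of_lt_one (by positivity)
    rw [Real.sqrt_lt' one_pos]; norm_num
  refine Summable.of_nonneg_of_le ?_ ?_
    (((sum1.mul_left 2).add (sum2.mul_left (2 * Real.log 2))).add sum3)
  · intro n
    have hq : (1:ℝ) ≤ cfq α n := by exact_mod_cast (cfq_grow hN h n).1
    have hq : (1:ℝ) ≤ cfq α (n+1) := by exact_mod_cast (cfq_grow hN h (n+1)).1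
    have := Real.log_nonneg hq
    positivity
  · intro n
    have hq0 : (0:ℝ) < cfq α n := by exact_mod_cast (cfq_grow hN h n).1
    have hq1 : (0:ℝ) < cfq α (n+1) := by exact_mod_cast (cfq_grow hN h (n+1)).1
    have ha := gaussIter_pos hN h n
    have hfl : (cfa α n : ℝ) ≤ 1 / gaussIter α n := Int.floor_le _
    have hfl2 : (1:ℝ) ≤ cfa α n := by
      have := h.2.2 n
      have : 1 ≤ cfa α n := by omega
      exact_mod_cast this
    have hqle : (cfq α (n+1) : ℝ) ≤ 2 * (1 / gaussIter α n) * cfq α n := by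
      cases n with
      | zero => simp only [cfq] at *; push_cast; linarith
      | succ n =>
        have h1 : (cfq α (n+1+1) : ℝ) = cfa α (n + 1) * cfq α (n + 1) + cfq α n := by
          exact_mod_cast (rfl : cfq α (n+1+1) = cfa α (n + 1) * cfq α (n + 1) + cfq α n)
        have h2 : (2 * cfq α n : ℝ) ≤ cfq α (n+1) := by exact_mod_cast (cfq_grow hN h n).2
        have h3 : (0:ℝ) < cfq α n := by exact_mod_cast (cfq_grow hN h n).1
        rw [h1]
        nlinarith
    have hl : Real.log (cfq α (n+1)) ≤ Real.log 2 + Real.log (1 / gaussIter α n) + Real.log (cfq α n) := by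
      have := Real.log_le_log hq1 hqle
      rwa [Real.log_mul (by positivity) hq0.ne', Real.log_mul (by norm_num) (by positivity)] at this
    have hlq : Real.log (cfq α n) / cfq α n ≤ 2 * (√(1/2:ℝ))^n := by
      have h2 := cfq_two_pow hN h n
      have e1 : Real.log (cfq α n) = 2 * Real.log (√(cfq α n)) := by
        rw [Real.log_sqrt hq0.le]; ring
      have hsq : 0 < √(cfq α n : ℝ) := Real.sqrt_pos.2 hq0
      have e2 : Real.log (√(cfq α n)) ≤ √(cfq α n) := by
        have := Real.log_le_sub_one_of_pos hsq
        linarith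
      have e3 : Real.log (cfq α n) / cfq α n ≤ 2 / √(cfq α n) := by
        rw [div_le_div_iff₀ hq0 hsq, e1]
        have := Real.mul_self_sqrt hq0.le
        nlinarith
      refine e3.trans ?_
      rw [div_eq_mul_inv]
      apply mul_le_mul_of_nonneg_left _ (by norm_num)
      rw [← Real.sqrt_inv]
      apply Real.sqrt_le_iff.2 ⟨by positivity, ?_⟩
      rw [← pow_mul, mul_comm n 2, pow_mul, Real.sq_sqrt (by norm_num), one_div, inv_pow]
      exact inv_anti₀ (by positivity) h2
    have hi := inv_cfq_le hN h n
    calc Real.log (cfq α (n+1)) / cfq α n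
        ≤ (Real.log 2 + Real.log (1 / gaussIter α n) + Real.log (cfq α n)) / cfq α n := by gcongr
      _ = (Real.log 2 + Real.log (1 / gaussIter α n)) * (1 / cfq α n) + Real.log (cfq α n) / cfq α n := by ring
      _ ≤ (Real.log 2 + Real.log (1 / gaussIter α n)) * (2 * gprod α n) + 2 * (√(1/2:ℝ))^n := by
        have : 0 ≤ Real.log 2 := Real.log_nonneg (by norm_num)
        have := hlogpos n
        gcongr
      _ = _ := by ring

/-- Holomorphic dependence of fixed points of contractions. -/
lemma hol_fixed_point {U : Set ℂ} (hU : IsOpen U) {h : ℂ → ℂ → ℂ} {r : ℝ} (hr : 0 ≤ r)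
    (hm : ∀ x ∈ U, ∀ y, ‖y‖ ≤ r → ‖h x y‖ ≤ r)
    (hl : ∀ x ∈ U, ∀ y y', ‖y‖ ≤ r → ‖y'‖ ≤ r → ‖h x y - h x y'‖ ≤ (1/2) * ‖y - y'‖)
    (hd : ∀ y : ℂ → ℂ, DifferentiableOn ℂ y U → (∀ x ∈ U, ‖y x‖ ≤ r) →
      DifferentiableOn ℂ (fun x => h x (y x)) U) :
    ∃ y : ℂ → ℂ, DifferentiableOn ℂ y U ∧ ∀ x ∈ U, ‖y x‖ ≤ r ∧ h x (y x) = y x := by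
  set Y : ℕ → ℂ → ℂ := fun n x => (h x)^[n] 0 with hY
  have Ys : ∀ n x, Y (n+1) x = h x (Y n x) := fun n x => by
    simp only [hY, Function.iterate_succ_apply']
  have Yb : ∀ n, ∀ x ∈ U, ‖Y n x‖ ≤ r := by
    intro n
    induction n with
    | zero => intro x _; simpa [hY] using hr
    | succ n ih => intro x hx; rw [Ys]; exact hm x hx _ (ih x hx)
  have Yd : ∀ n, DifferentiableOn ℂ (Y n) U := by
    intro n
    induction n with
    | zero => simp only [hY, Function.iterate_zero, id]; fun_prop
    | succ n ih =>
      have := hd (Y n) ih (Yb n)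
      refine this.congr fun x _ => Ys n x
  have Yg : ∀ x ∈ U, ∀ n, dist (Y n x) (Y (n+1) x) ≤ r * (1/2)^n := by
    intro x hx n
    induction n with
    | zero =>
      simp only [pow_zero, mul_one]
      have : Y 0 x = 0 := by simp [hY]
      rw [this, dist_zero_left]; exact Yb 1 x hx
    | succ n ih =>
      rw [Ys, Ys (n+1), dist_eq_norm]
      have := hl x hx _ _ (Yb n x hx) (Yb (n+1) x hx)
      rw [dist_eq_norm] at ih
      rw [Ys n] at this ih ⊢
      rw [pow_succ]; linarith
  have Yc : ∀ x, x ∈ U → ∃ y, Tendsto (fun n => Y n x) atTop (nhds y) := fun x hx =>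
    cauchySeq_tendsto_of_complete (cauchySeq_of_le_geometric _ _ (by norm_num) (Yg x hx))
  choose! y hy using Yc
  have hun : TendstoUniformlyOn Y y atTop U := by
    rw [Metric.tendstoUniformlyOn_iff]
    intro ε hε
    have : Tendsto (fun n : ℕ => r * (1/2:ℝ)^n / (1 - 1/2)) atTop (nhds 0) := by
      have := (tendsto_pow_atTop_nhds_zero_of_lt_one (r := (1/2:ℝ)) (by norm_num) (by norm_num)).const_mul r
      have := this.div_const (1 - 1/2)
      simpa using this
    filter_upwards [this.eventually (gt_mem_nhds hε)] with n hn x hx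
    have := dist_le_of_le_geometric_of_tendsto _ _ (by norm_num) (Yg x hx) (hy x hx) n
    rw [dist_comm]
    exact this.trans_lt hn
  refine ⟨y, hun.tendstoLocallyUniformlyOn.differentiableOn (Eventually.of_forall Yd) hU, ?_⟩
  intro x hx
  have hyb : ‖y x‖ ≤ r := le_of_tendsto (hy x hx).norm (Eventually.of_forall fun n => Yb n x hx)
  refine ⟨hyb, ?_⟩
  have h1 : Tendsto (fun n => Y (n+1) x) atTop (nhds (y x)) := (hy x hx).comp (tendsto_add_atTop_nat 1)
  have h2 : Tendsto (fun n => Y (n+1) x) atTop (nhds (h x (y x))) := by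
    rw [tendsto_iff_norm_sub_tendsto_zero]
    have h3 := (tendsto_iff_norm_sub_tendsto_zero.1 (hy x hx)).const_mul (1/2)
    rw [mul_zero] at h3
    refine squeeze_zero (fun _ => norm_nonneg _) (fun n => ?_) h3
    rw [Ys]
    exact hl x hx _ _ (Yb n x hx) hyb
  exact tendsto_nhds_unique h2 h1

lemma hol_log {c : ℂ} {r : ℝ} (hr : 0 < r) {g : ℂ → ℂ} (hg : DifferentiableOn ℂ g (Metric.ball c r))
    (h0 : ∀ z ∈ Metric.ball c r, g z ≠ 0) :
    ∃ L : ℂ → ℂ, DifferentiableOn ℂ L (Metric.ball c r) ∧ ∀ z ∈ Metric.ball c r, Complex.exp (L z) = g z := by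
  have hd : DifferentiableOn ℂ (fun z => deriv g z / g z) (Metric.ball c r) :=
    (hg.deriv Metric.isOpen_ball).div hg h0
  obtain ⟨L0, hL0⟩ := hd.isExactOn_ball
  have hc : c ∈ Metric.ball c r := Metric.mem_ball_self hr
  have hconst : ∀ z ∈ Metric.ball c r, Complex.exp (-L0 z) * g z = Complex.exp (-L0 c) * g c := by
    intro z hz
    have hD : ∀ w ∈ Metric.ball c r, HasDerivAt (fun z => Complex.exp (-L0 z) * g z) 0 w := by
      intro w hw
      have h1 := hL0 w hw
      have h2 := (hg.differentiableAt (Metric.isOpen_ball.mem_nhds hw)).hasDerivAt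
      have h3 := (h1.neg.cexp).mul h2
      have h4 : Complex.exp (-L0 w) * -(deriv g w / g w) * g w + Complex.exp (-L0 w) * deriv g w = 0 := by
        have := h0 w hw
        field_simp
        ring
      rw [← h4]; exact h3
    exact Metric.isOpen_ball.is_const_of_deriv_eq_zero (convex_ball c r).isPreconnected
      (fun w hw => (hD w hw).differentiableAt.differentiableWithinAt)
      (fun w hw => (hD w hw).deriv) hz hc
  refine ⟨fun z => L0 z + (Complex.log (g c) - L0 c), ?_, ?_⟩
  · intro w hw
    exact ((hL0 w hw).differentiableAt.add_const _).differentiableWithinAt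
  · intro z hz
    have := hconst z hz
    rw [Complex.exp_add, Complex.exp_sub, Complex.exp_log (h0 c hc)]
    rw [Complex.exp_neg, Complex.exp_neg] at this
    have e1 := Complex.exp_ne_zero (L0 z)
    have e2 := Complex.exp_ne_zero (L0 c)
    field_simp at this ⊢
    linear_combination -this

lemma hol_sqrt {c : ℂ} {r : ℝ} (hr : 0 < r) {g : ℂ → ℂ} (hg : DifferentiableOn ℂ g (Metric.ball c r))
    (h0 : ∀ z ∈ Metric.ball c r, g z ≠ 0) {t1 s1 : ℂ} (ht1 : t1 ∈ Metric.ball c r) (hs1 : s1 ^ 2 = g t1) :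
    ∃ s : ℂ → ℂ, DifferentiableOn ℂ s (Metric.ball c r) ∧ (∀ z ∈ Metric.ball c r, s z ^ 2 = g z) ∧
      s t1 = s1 := by
  obtain ⟨L, hL, hLg⟩ := hol_log hr hg h0
  have h1 : ∀ z ∈ Metric.ball c r, Complex.exp (L z / 2) ^ 2 = g z := by
    intro z hz
    rw [← hLg z hz, ← Complex.exp_nat_mul]
    congr 1; push_cast; ring
  have h2 := h1 t1 ht1
  rw [← hs1, sq_eq_sq_iff_eq_or_eq_neg] at h2
  have hd : DifferentiableOn ℂ (fun z => Complex.exp (L z / 2)) (Metric.ball c r) := by fun_prop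
  rcases h2 with h2 | h2
  · exact ⟨fun z => Complex.exp (L z / 2), hd, h1, h2⟩
  · exact ⟨fun z => -Complex.exp (L z / 2), hd.neg, fun z hz => by rw [neg_sq]; exact h1 z hz, by
      simp [h2]⟩

/-- Cauchy/Lipschitz estimate -/
lemma lip_of_bound {f : ℂ → ℂ} {R d M : ℝ} (hd : 0 < d)
    (hf : DifferentiableOn ℂ f (Metric.ball 0 (R + d + d))) (hb : ∀ z, ‖z‖ ≤ R + d → ‖f z‖ ≤ M)
    {x y : ℂ} (hx : ‖x‖ ≤ R) (hy : ‖y‖ ≤ R) : ‖f x - f y‖ ≤ M / d * ‖x - y‖ := by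
  apply (convex_closedBall (0:ℂ) R).norm_image_sub_le_of_norm_deriv_le (𝕜 := ℂ) (f := f) _ _
    (by simpa using hy) (by simpa using hx)
  · intro z hz
    rw [mem_closedBall_zero_iff] at hz
    exact hf.differentiableAt (Metric.isOpen_ball.mem_nhds (by rw [mem_ball_zero_iff]; linarith))
  · intro z hz
    rw [mem_closedBall_zero_iff] at hz
    apply Complex.norm_deriv_le_of_forall_mem_sphere_norm_le hd
    · apply DifferentiableOn.diffContOnCl
      rw [closure_ball _ hd.ne']
      apply hf.mono
      intro w hw
      rw [mem_closedBall_iff_norm] at hw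
      rw [mem_ball_zero_iff]
      have := norm_sub_norm_le w z
      linarith
    · intro w hw
      rw [mem_sphere_iff_norm] at hw
      apply hb
      have := norm_sub_norm_le w z
      linarith

/-- outer factor -/
noncomputable def psi (E : ℂ → ℂ) (m τ y : ℂ) : ℂ := m * y + τ * E y
/-- the family of quadratic-like maps -/
noncomputable def FF (E : ℂ → ℂ) (m b τ z : ℂ) : ℂ := psi E m τ (z + b * z ^ 2)

/-- hypotheses on the perturbation -/
def GoodE (E : ℂ → ℂ) : Prop :=
  DifferentiableOn ℂ E (Metric.ball 0 32) ∧ ∀ y ∈ Metric.ball (0:ℂ) 32, ‖E y‖ ≤ (1/640) * ‖y‖^2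

lemma GoodE.lip {E : ℂ → ℂ} (hE : GoodE E) {x y : ℂ} (hx : ‖x‖ ≤ 21) (hy : ‖y‖ ≤ 21) :
    ‖E x - E y‖ ≤ (107/500) * ‖x - y‖ := by
  have := lip_of_bound (f := E) (R := 21) (d := 5) (M := 107/100) (by norm_num)
    (hE.1.mono (Metric.ball_subset_ball (by norm_num))) (fun z hz => by
      refine (hE.2 z (by rw [mem_ball_zero_iff]; linarith)).trans ?_
      have := norm_nonneg z
      nlinarith) hx hy
  norm_num at this ⊢
  exact this

lemma GoodE.zero {E : ℂ → ℂ} (hE : GoodE E) : E 0 = 0 := by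
  have := hE.2 0 (by simp)
  simpa using this

lemma GoodE.FF_zero {E : ℂ → ℂ} (hE : GoodE E) (m b τ : ℂ) : FF E m b τ 0 = 0 := by
  simp [FF, psi, hE.zero]

lemma psi_inj {E : ℂ → ℂ} (hE : GoodE E) {m τ : ℂ} (hm : 9/10 ≤ ‖m‖) (hτ : ‖τ‖ ≤ 2) {x y : ℂ}
    (hx : ‖x‖ ≤ 21) (hy : ‖y‖ ≤ 21) (h : psi E m τ x = psi E m τ y) : x = y := by
  have h1 : m * (x - y) = - (τ * (E x - E y)) := by
    simp only [psi] at h; linear_combination h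
  have h2 := congrArg norm h1
  rw [norm_neg, norm_mul, norm_mul] at h2
  have h3 := hE.lip hx hy
  have h4 := norm_nonneg (x - y)
  have h5 : ‖τ‖ * ‖E x - E y‖ ≤ 2 * ((107/500) * ‖x - y‖) := by gcongr
  have h6 : 9/10 * ‖x - y‖ ≤ ‖m‖ * ‖x - y‖ := by gcongr
  have : ‖x - y‖ ≤ 0 := by linarith
  rw [← sub_eq_zero]; exact norm_le_zero_iff.1 this

lemma psi_inverse {E : ℂ → ℂ} (hE : GoodE E) {m : ℂ} (hm : 9/10 ≤ ‖m‖) {U : Set ℂ} (hU : IsOpen U)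
    {u τ : ℂ → ℂ} (hu : DifferentiableOn ℂ u U) (hτ : DifferentiableOn ℂ τ U)
    (hub : ∀ t ∈ U, ‖u t‖ ≤ 17) (hτb : ∀ t ∈ U, ‖τ t‖ ≤ 2) :
    ∃ y : ℂ → ℂ, DifferentiableOn ℂ y U ∧ ∀ t ∈ U, ‖y t‖ ≤ 21 ∧ psi E m (τ t) (y t) = u t := by
  have hm0 : m ≠ 0 := by rintro rfl; norm_num at hm
  have hmp : 0 < ‖m‖ := norm_pos_iff.2 hm0
  obtain ⟨y, hy, hy2⟩ := hol_fixed_point hU (h := fun t y => (u t - τ t * E y) / m) (r := 21) (by norm_num)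
    (by
      intro t ht y hy
      rw [norm_div, div_le_iff₀ hmp]
      have h1 := hE.2 y (by rw [mem_ball_zero_iff]; linarith)
      have h2 := hub t ht
      have h3 := hτb t ht
      have h4 : ‖E y‖ ≤ 441/640 := by
        have := norm_nonneg y
        nlinarith
      have h5 : ‖τ t * E y‖ ≤ 2 * (441/640) := by
        rw [norm_mul]; gcongr
      have := norm_sub_le (u t) (τ t * E y)
      nlinarith)
    (by
      intro t ht y y' hy hy'
      have e : (u t - τ t * E y) / m - (u t - τ t * E y') / m = - (τ t * (E y - E y')) / m := by
        field_simp; ring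
      rw [e, norm_div, div_le_iff₀ hmp, norm_neg, norm_mul]
      have h3 := hτb t ht
      have h4 := hE.lip hy hy'
      have h5 : ‖τ t‖ * ‖E y - E y'‖ ≤ 2 * ((107/500) * ‖y - y'‖) := by gcongr
      have := norm_nonneg (y - y')
      nlinarith)
    (by
      intro y hy hyb
      have : DifferentiableOn ℂ (fun x => E (y x)) U := hE.1.comp hy (fun x hx => by
        rw [mem_ball_zero_iff]; have := hyb x hx; linarith)
      exact (hu.sub (hτ.mul this)).div_const m)
  refine ⟨y, hy, fun t ht => ⟨(hy2 t ht).1, ?_⟩⟩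
  have := (hy2 t ht).2
  rw [div_eq_iff hm0] at this
  simp only [psi]
  linear_combination -this

/-- pull back of a holomorphic curve avoiding the critical value -/
lemma pullback {E : ℂ → ℂ} (hE : GoodE E) {m b : ℂ} (hm : 9/10 ≤ ‖m‖) (hb : ‖b‖ = 1)
    {c : ℂ} {r : ℝ} (hr : 0 < r)
    {u τ : ℂ → ℂ} (hu : DifferentiableOn ℂ u (Metric.ball c r)) (hτ : DifferentiableOn ℂ τ (Metric.ball c r))
    (hub : ∀ t ∈ Metric.ball c r, ‖u t‖ ≤ 17) (hτb : ∀ t ∈ Metric.ball c r, ‖τ t‖ ≤ 2)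
    (hv : ∀ t ∈ Metric.ball c r, u t ≠ psi E m (τ t) (-1 / (4 * b)))
    {t1 z1 : ℂ} (ht1 : t1 ∈ Metric.ball c r) (hz1 : ‖z1‖ ≤ 7/2) (hF : FF E m b (τ t1) z1 = u t1) :
    ∃ z : ℂ → ℂ, DifferentiableOn ℂ z (Metric.ball c r) ∧ z t1 = z1 ∧
      ∀ t ∈ Metric.ball c r, FF E m b (τ t) (z t) = u t ∧ ‖z t‖ ≤ 6 ∧ (‖u t‖ ≤ 4 → ‖z t‖ ≤ 3) := by
  have hb0 : b ≠ 0 := by rintro rfl; simp at hb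
  obtain ⟨y, hy, hy2⟩ := psi_inverse hE hm Metric.isOpen_ball hu hτ hub hτb
  have hy1 : y t1 = z1 + b * z1 ^ 2 := by
    refine psi_inj hE hm (hτb t1 ht1) (hy2 t1 ht1).1 ?_ ((hy2 t1 ht1).2.trans hF.symm)
    calc ‖z1 + b * z1^2‖ ≤ ‖z1‖ + ‖b * z1^2‖ := norm_add_le _ _
      _ = ‖z1‖ + ‖z1‖^2 := by rw [norm_mul, hb, norm_pow, one_mul]
      _ ≤ 21 := by have := norm_nonneg z1; nlinarith
  obtain ⟨s, hs, hs2, hs1⟩ := hol_sqrt hr (g := fun t => 1 + 4 * b * y t) (by fun_prop)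
    (by
      intro t ht h0
      apply hv t ht
      rw [← (hy2 t ht).2]
      congr 1
      rw [eq_div_iff (by simpa using hb0)]
      linear_combination h0) (s1 := 2 * b * z1 + 1) ht1 (by rw [hy1]; ring)
  have hz : ∀ t ∈ Metric.ball c r, (s t - 1) / (2 * b) + b * ((s t - 1) / (2 * b)) ^ 2 = y t := by
    intro t ht
    have := hs2 t ht
    field_simp
    linear_combination this
  have hn : ∀ t ∈ Metric.ball c r, ‖s t‖ ^ 2 ≤ 1 + 4 * ‖y t‖ := by
    intro t ht
    rw [← norm_pow, hs2 t ht]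
    refine (norm_add_le _ _).trans ?_
    rw [norm_mul, norm_mul, hb]; simp
  have hzn : ∀ t, ‖(s t - 1) / (2 * b)‖ ≤ (‖s t‖ + 1) / 2 := by
    intro t
    rw [norm_div, norm_mul, hb]
    have := norm_sub_le (s t) 1
    simp at this ⊢
    linarith
  refine ⟨fun t => (s t - 1) / (2 * b), by fun_prop, ?_, ?_⟩
  · simp only [hs1]; field_simp; ring
  · intro t ht
    have h1 := hy2 t ht
    have h2 := hn t ht
    have h3 := hzn t
    have h4 := norm_nonneg (s t)
    refine ⟨?_, ?_, ?_⟩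
    · rw [FF, hz t ht]; exact h1.2
    · have : ‖s t‖ ≤ 11 := by nlinarith
      linarith
    · intro hu4
      have h5 : ‖m * y t‖ ≤ 4 + 21/320 * ‖y t‖ := by
        have e : m * y t = u t - τ t * E (y t) := by rw [← h1.2, psi]; ring
        rw [e]
        refine (norm_sub_le _ _).trans (add_le_add hu4 ?_)
        rw [norm_mul]
        have h6 := hE.2 (y t) (by rw [mem_ball_zero_iff]; linarith)
        have h7 := norm_nonneg (y t)
        calc ‖τ t‖ * ‖E (y t)‖ ≤ 2 * ((1/640) * ‖y t‖^2) := by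
              have := hτb t ht; gcongr
          _ ≤ _ := by nlinarith
      rw [norm_mul] at h5
      have h7 := norm_nonneg (y t)
      have h8 : 9/10 * ‖y t‖ ≤ ‖m‖ * ‖y t‖ := by gcongr
      have h9 : ‖y t‖ ≤ 5 := by linarith
      have : ‖s t‖ ≤ 5 := by nlinarith
      linarith

lemma GoodE.hasDerivAt_zero {E : ℂ → ℂ} (hE : GoodE E) : HasDerivAt E 0 0 := by
  have : HasDerivAt E 0 0 := by
    rw [hasDerivAt_iff_isLittleO_nhds_zero]
    simp only [zero_add, hE.zero, sub_zero, smul_zero]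
    have h1 : (fun h : ℂ => E h) =O[nhds 0] fun h : ℂ => h ^ 2 := by
      apply Asymptotics.IsBigO.of_bound (1/640)
      filter_upwards [Metric.ball_mem_nhds (0:ℂ) (by norm_num : (0:ℝ) < 32)] with h hh
      simpa using hE.2 h hh
    exact h1.trans_isLittleO (Asymptotics.isLittleO_pow_id (by norm_num))
  exact this

lemma GoodE.hasDerivAt_FF {E : ℂ → ℂ} (hE : GoodE E) (m b τ : ℂ) : HasDerivAt (FF E m b τ) m 0 := by
  have h1 : HasDerivAt (fun z : ℂ => z + b * z ^ 2) 1 0 := by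
    have := (hasDerivAt_id (0:ℂ)).add (((hasDerivAt_id (0:ℂ)).pow 2).const_mul b)
    exact this.congr_deriv (by simp)
  have h2 : HasDerivAt (fun y => m * y + τ * E y) m ((fun z : ℂ => z + b * z ^ 2) 0) := by
    simp only [ne_eq, OfNat.ofNat_ne_zero, not_false_eq_true, zero_pow, mul_zero, add_zero]
    have := ((hasDerivAt_id (0:ℂ)).const_mul m).add (hE.hasDerivAt_zero.const_mul τ)
    exact this.congr_deriv (by simp)
  have := h2.comp 0 h1
  rw [mul_one] at this
  exact this

lemma branches {E : ℂ → ℂ} (hE : GoodE E) {m b τ : ℂ} (hm : 9/10 ≤ ‖m‖) (hb : ‖b‖ = 1) (hτ : ‖τ‖ ≤ 2)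
    {r : ℝ} (hr : 0 < r) (hr1 : r ≤ 1)
    (H : ∀ n, (∀ k ≤ n, ‖(FF E m b τ)^[k] (psi E m τ (-1 / (4 * b)))‖ ≤ 3) →
      r ≤ ‖(FF E m b τ)^[n] (psi E m τ (-1 / (4 * b)))‖) (n : ℕ) :
    ∃ g : ℂ → ℂ, DifferentiableOn ℂ g (Metric.ball 0 r) ∧ g 0 = 0 ∧ HasDerivAt g (m⁻¹ ^ n) 0 ∧
      ∀ w ∈ Metric.ball (0:ℂ) r, (FF E m b τ)^[n] (g w) = w ∧
        ∀ k ≤ n, ‖(FF E m b τ)^[k] (g w)‖ ≤ 3 := by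
  have hm0 : m ≠ 0 := by rintro rfl; norm_num at hm
  induction n with
  | zero =>
    refine ⟨id, differentiableOn_id, rfl, by simpa using hasDerivAt_id (0:ℂ), ?_⟩
    intro w hw
    rw [mem_ball_zero_iff] at hw
    refine ⟨rfl, fun k hk => ?_⟩
    obtain rfl : k = 0 := by omega
    simp; linarith
  | succ n ih =>
    obtain ⟨g, hg, hg0, hgd, hgw⟩ := ih
    obtain ⟨z, hz, hz0, hzF⟩ := pullback hE hm hb hr (u := g) (τ := fun _ => τ) hg (by fun_prop)
      (fun t ht => by have := (hgw t ht).2 0 (by omega); simp at this; linarith) (fun _ _ => hτ)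
      (fun t ht h => by
        have h1 := hgw t ht
        rw [h] at h1
        have := H n h1.2
        rw [h1.1] at this
        rw [mem_ball_zero_iff] at ht
        linarith) (t1 := 0) (z1 := 0) (Metric.mem_ball_self hr) (by norm_num)
        (by rw [hE.FF_zero, hg0])
    refine ⟨z, hz, hz0, ?_, ?_⟩
    · have hzd := (hz.differentiableAt (Metric.ball_mem_nhds 0 hr)).hasDerivAt
      have h1 : HasDerivAt (FF E m b τ) m (z 0) := by rw [hz0]; exact hE.hasDerivAt_FF m b τ
      have h2 := h1.comp 0 hzd
      have h3 : HasDerivAt g (m * deriv z 0) 0 := by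
        refine h2.congr_of_eventuallyEq ?_
        filter_upwards [Metric.ball_mem_nhds (0:ℂ) hr] with w hw
        exact (hzF w hw).1.symm
      have h4 := h3.unique hgd
      have : deriv z 0 = m⁻¹ ^ (n+1) := by
        rw [pow_succ, ← h4]; field_simp
      rwa [this] at hzd
    · intro w hw
      have h1 := hzF w hw
      have h2 := hgw w hw
      refine ⟨by rw [Function.iterate_succ_apply, h1.1, h2.1], fun k hk => ?_⟩
      cases k with
      | zero =>
        have := h2.2 0 (by omega)
        simp only [Function.iterate_zero, id] at this ⊢
        exact h1.2.2 (by linarith)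
      | succ k => rw [Function.iterate_succ_apply, h1.1]; exact h2.2 k (by omega)

lemma FF_iter_zero {E : ℂ → ℂ} (hE : GoodE E) (m b τ : ℂ) (n : ℕ) : (FF E m b τ)^[n] 0 = 0 :=
  Function.iterate_fixed (hE.FF_zero m b τ) n

/-- critical value is bounded: attracting case -/
lemma crit_bdd_attr {E : ℂ → ℂ} (hE : GoodE E) {m b τ : ℂ} (hm : 9/10 ≤ ‖m‖) (hm1 : ‖m‖ < 1)
    (hb : ‖b‖ = 1) (hτ : ‖τ‖ ≤ 2) (n : ℕ) :
    ‖(FF E m b τ)^[n] (psi E m τ (-1 / (4 * b)))‖ ≤ 3 := by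
  set v := psi E m τ (-1 / (4 * b)) with hv
  set F := FF E m b τ with hF
  by_contra hc
  have hex : ∃ n, ¬ ‖F^[n] v‖ ≤ 3 := ⟨n, hc⟩
  classical
  set n0 := Nat.find hex with hn0
  have h0 := Nat.find_spec hex
  rw [← hn0] at h0
  have hne : ∀ k < n0, 0 < ‖F^[k] v‖ := by
    intro k hk
    rw [norm_pos_iff]
    intro hz
    apply h0
    have : n0 = (n0 - k) + k := by omega
    rw [this, Function.iterate_add_apply, hz, FF_iter_zero hE]
    simp
  obtain ⟨r, hr, hr1, hrk⟩ : ∃ r > 0, r ≤ 1 ∧ ∀ k < n0, r ≤ ‖F^[k] v‖ := by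
    have : ∀ N, (∀ k < N, 0 < ‖F^[k] v‖) → ∃ r > 0, r ≤ (1:ℝ) ∧ ∀ k < N, r ≤ ‖F^[k] v‖ := by
      intro N
      induction N with
      | zero => intro _; exact ⟨1, one_pos, le_rfl, fun k hk => by omega⟩
      | succ N ih =>
        intro h
        obtain ⟨r, hr, hr1, hrk⟩ := ih fun k hk => h k (by omega)
        refine ⟨min r ‖F^[N] v‖, lt_min hr (h N (by omega)), (min_le_left _ _).trans hr1, ?_⟩
        intro k hk
        rcases Nat.lt_succ_iff_lt_or_eq.1 hk with h1 | rfl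
        · exact (min_le_left _ _).trans (hrk k h1)
        · exact min_le_right _ _
    exact this n0 hne
  have hbr := branches hE hm hb hτ hr hr1 (fun n hn => by
    by_cases hnn : n < n0
    · exact hrk n hnn
    · exact absurd (hn n0 (by omega)) h0)
  have hmp : 0 < ‖m‖ := by linarith
  have hbound : ∀ n : ℕ, (‖m‖⁻¹) ^ n ≤ 3 / r := by
    intro n
    obtain ⟨g, hg, hg0, hgd, hgw⟩ := hbr n
    have := Complex.norm_deriv_le_div_of_mapsTo_ball (R₂ := 3) hg (fun w hw => by
      rw [hg0, mem_closedBall_zero_iff]; exact (hgw w hw).2 0 (by omega)) hr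
    rw [hgd.deriv] at this
    simpa using this
  have htend := tendsto_pow_atTop_atTop_of_one_lt (r := ‖m‖⁻¹) ((one_lt_inv₀ hmp).2 hm1)
  obtain ⟨n, hn⟩ := (htend.eventually (eventually_gt_atTop (3 / r))).exists
  linarith [hbound n]

lemma GoodE.continuousAt {E : ℂ → ℂ} (hE : GoodE E) {y : ℂ} (hy : ‖y‖ < 32) : ContinuousAt E y :=
  hE.1.continuousOn.continuousAt (Metric.isOpen_ball.mem_nhds (by simpa using hy))

/-- critical value is bounded: neutral case -/
lemma crit_bdd {E : ℂ → ℂ} (hE : GoodE E) {m b τ : ℂ} (hm1 : ‖m‖ = 1)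
    (hb : ‖b‖ = 1) (hτ : ‖τ‖ ≤ 2) (n : ℕ) :
    ‖(FF E m b τ)^[n] (psi E m τ (-1 / (4 * b)))‖ ≤ 3 := by
  set M : ℕ → ℂ := fun j => ((1 - 1 / (j + 10 : ℝ) : ℝ) : ℂ) * m with hM
  have hMn : ∀ j, 9/10 ≤ ‖M j‖ ∧ ‖M j‖ < 1 := by
    intro j
    have h1 : (0:ℝ) < 1 / (j + 10 : ℝ) := by positivity
    have h2 : 1 / (j + 10 : ℝ) ≤ 1/10 := by
      apply one_div_le_one_div_of_le (by norm_num); have : (0:ℝ) ≤ j := Nat.cast_nonneg j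
      linarith
    rw [hM]; simp only
    rw [norm_mul, hm1, Complex.norm_real, Real.norm_of_nonneg (by linarith)]
    constructor <;> linarith
  have hMt : Tendsto M atTop (nhds m) := by
    have h1 : Tendsto (fun j : ℕ => (1 - 1 / (j + 10 : ℝ) : ℝ)) atTop (nhds (1 - 0)) := by
      apply tendsto_const_nhds.sub
      apply tendsto_const_nhds.div_atTop
      exact tendsto_atTop_add_const_right _ _ tendsto_natCast_atTop_atTop
    have h2 := ((Complex.continuous_ofReal.tendsto _).comp h1).mul_const m
    rw [hM]
    simpa using h2
  have hbn : ‖-1 / (4 * b)‖ = 1/4 := by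
    rw [norm_div, norm_mul, hb]; norm_num
  have key : ∀ n, Tendsto (fun j => (FF E (M j) b τ)^[n] (psi E (M j) τ (-1 / (4 * b)))) atTop
      (nhds ((FF E m b τ)^[n] (psi E m τ (-1 / (4 * b))))) := by
    intro n
    induction n with
    | zero =>
      simp only [Function.iterate_zero, id, psi]
      exact (hMt.mul_const _).add_const _
    | succ n ih =>
      have hle : ‖(FF E m b τ)^[n] (psi E m τ (-1 / (4 * b)))‖ ≤ 3 :=
        le_of_tendsto ih.norm (Eventually.of_forall fun j => crit_bdd_attr hE (hMn j).1 (hMn j).2 hb hτ n)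
      simp only [Function.iterate_succ_apply']
      simp only [FF, psi] at ih ⊢
      have hy := ih.add ((ih.pow 2).const_mul b)
      refine (hMt.mul hy).add (Tendsto.const_mul _ ?_)
      refine (hE.continuousAt ?_).tendsto.comp hy
      simp only [FF, psi] at hle
      refine (norm_add_le _ _).trans_lt ?_
      rw [norm_mul, hb, norm_pow, one_mul]
      have := norm_nonneg ((FF E m b τ)^[n] (m * (-1 / (4 * b)) + τ * E (-1 / (4 * b))))
      nlinarith
  exact le_of_tendsto (key n).norm (Eventually.of_forall fun j => crit_bdd_attr hE (hMn j).1 (hMn j).2 hb hτ n)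

lemma quant_open {g : ℂ → ℂ} {r : ℝ} {d : ℂ} (hr : 0 < r) (hr1 : r ≤ 1)
    (hg : DifferentiableOn ℂ g (Metric.ball 0 r)) (hg0 : g 0 = 0) (hd : HasDerivAt g d 0) (hd1 : ‖d‖ = 1)
    (hb : ∀ w ∈ Metric.ball (0:ℂ) r, ‖g w‖ ≤ 3) {z : ℂ} (hz : ‖z‖ < r^2 / 32) :
    ∃ w ∈ Metric.ball (0:ℂ) r, g w = z := by
  have hq : ∀ w ∈ Metric.ball (0:ℂ) r, ‖g w - d * w‖ ≤ 4 * (‖w‖ / r)^2 := by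
    intro w hw
    have := Complex.dist_le_mul_div_pow_of_mapsTo_ball_of_isLittleO (f := fun w => g w - d * w)
      (c := 0) (R₁ := r) (R₂ := 4) (n := 1) (by fun_prop) (by
        intro x hx
        have h1 := hb x hx
        rw [mem_ball_zero_iff] at hx
        simp only [hg0, mul_zero, sub_zero, mem_closedBall_zero_iff]
        refine (norm_sub_le _ _).trans ?_
        rw [norm_mul, hd1]; linarith) (by
        have := hd.isLittleO
        simp only [hg0, sub_zero, smul_eq_mul, mul_zero, pow_one] at this ⊢
        rw [← Asymptotics.isLittleO_norm_right] at this
        simpa [mul_comm] using this) hw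
    simpa [hg0, dist_eq_norm] using this
  have hs : 0 < r^2/8 := by positivity
  have hsr : r^2/8 < r := by nlinarith
  have hcl : closure (Metric.ball (0:ℂ) (r^2/8)) ⊆ Metric.ball 0 r := by
    rw [closure_ball _ hs.ne']
    exact Metric.closedBall_subset_ball hsr
  have := DiffContOnCl.ball_subset_image_closedBall (f := g) (z₀ := 0) (r := r^2/8) (ε := r^2/16)
    (DifferentiableOn.diffContOnCl (hg.mono hcl)) hs (by
      intro w hw
      rw [mem_sphere_zero_iff_norm] at hw
      have h1 := hq w (by rw [mem_ball_zero_iff]; linarith)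
      rw [hg0, sub_zero]
      have h2 : ‖d * w‖ = r^2/8 := by rw [norm_mul, hd1, hw, one_mul]
      have h3 := norm_sub_norm_le (d * w) (g w)
      rw [norm_sub_rev] at h3
      have h4 : 4 * (‖w‖ / r)^2 = r^2/16 := by rw [hw]; field_simp; norm_num
      linarith) (by
      have hev := hd.eventually_ne (c := 0) (by rintro rfl; simp at hd1)
      rw [hg0]
      have : (nhdsWithin (0:ℂ) {0}ᶜ).NeBot := inferInstance
      exact (hev.frequently).filter_mono nhdsWithin_le_nhds)
  obtain ⟨w, hw, hwz⟩ := this (show z ∈ Metric.ball (g 0) (r^2/16/2) by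
    rw [hg0, mem_ball_zero_iff]; linarith)
  exact ⟨w, Metric.closedBall_subset_ball hsr hw, hwz⟩

lemma cover_zero {E : ℂ → ℂ} (hE : GoodE E) {m b : ℂ} (hm : ‖m‖ = 1) (hb : ‖b‖ = 1)
    {r : ℝ} (hr : 0 < r) (hr1 : r ≤ 1)
    (H : ∀ n, r ≤ ‖(FF E m b 0)^[n] (psi E m 0 (-1 / (4 * b)))‖) {z : ℂ} (hz : ‖z‖ < r^2/32) (n : ℕ) :
    ‖(FF E m b 0)^[n] z‖ ≤ 3 := by
  obtain ⟨g, hg, hg0, hgd, hgw⟩ := branches hE (m := m) (b := b) (τ := 0) (by rw [hm]; norm_num) hb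
    (by norm_num) hr hr1 (fun n _ => H n) n
  obtain ⟨w, hw, hwz⟩ := quant_open hr hr1 hg hg0 hgd (by simp [hm])
    (fun w hw => (hgw w hw).2 0 (by omega)) hz
  rw [← hwz]
  exact (hgw w hw).2 n le_rfl

lemma FF_norm_le {E : ℂ → ℂ} (hE : GoodE E) {m b τ z : ℂ} (hm : ‖m‖ = 1) (hb : ‖b‖ ≤ 1) (hτ : ‖τ‖ ≤ 1)
    (hz : ‖z‖ ≤ 7/2) : ‖z + b * z^2‖ ≤ 16 ∧ ‖FF E m b τ z‖ ≤ 17 := by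
  have h0 := norm_nonneg z
  have h1 : ‖z + b * z^2‖ ≤ 63/4 := by
    refine (norm_add_le _ _).trans ?_
    rw [norm_mul, norm_pow]
    have : ‖b‖ * ‖z‖^2 ≤ 1 * ‖z‖^2 := by gcongr
    nlinarith
  refine ⟨by linarith, ?_⟩
  rw [FF, psi]
  have h2 := hE.2 (z + b * z^2) (by rw [mem_ball_zero_iff]; linarith)
  have h3 : ‖E (z + b * z^2)‖ ≤ 1 := by
    have := norm_nonneg (z + b * z^2)
    nlinarith
  refine (norm_add_le _ _).trans ?_
  rw [norm_mul, hm, norm_mul]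
  have : ‖τ‖ * ‖E (z + b * z^2)‖ ≤ 1 * 1 := by gcongr
  linarith

/-- stability for unimodular `b` and `|τ| ≤ 1` -/
lemma stab_unimod {E : ℂ → ℂ} (hE : GoodE E) {m b : ℂ} (hm : ‖m‖ = 1) (hb : ‖b‖ = 1)
    {s : ℝ} (hs : 0 < s) (hs1 : s ≤ 1)
    (H : ∀ z : ℂ, ‖z‖ < s → ∀ n, ‖(FF E m b 0)^[n] z‖ ≤ 3) {τ : ℂ} (hτ : ‖τ‖ ≤ 1) {z : ℂ}
    (hz : ‖z‖ < s * (s/6)^2) (n : ℕ) : ‖(FF E m b τ)^[n] z‖ < 7/2 := by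
  by_contra hc
  have hex : ∃ n, ¬ ‖(FF E m b τ)^[n] z‖ < 7/2 := ⟨n, hc⟩
  classical
  set n0 := Nat.find hex with hn0
  have h0 := Nat.find_spec hex
  rw [← hn0] at h0
  push Not at h0
  have hlt : ∀ k < n0, ‖(FF E m b τ)^[k] z‖ < 7/2 := fun k hk => by
    have := Nat.find_min hex hk
    push Not at this; exact this
  have hz1 : ‖z‖ < 7/2 := by
    have : s * (s/6)^2 ≤ 1 * (1/6)^2 := by gcongr
    norm_num at this
    linarith
  set w := (FF E m b τ)^[n0] z with hw
  have hn0pos : 0 < n0 := by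
    rcases Nat.eq_zero_or_pos n0 with h | h
    · rw [hw, h] at h0; simp at h0; linarith
    · exact h
  have hw17 : ‖w‖ ≤ 17 := by
    have e : n0 = (n0 - 1) + 1 := by omega
    rw [hw, e, Function.iterate_succ_apply']
    exact (FF_norm_le hE hm hb.le hτ (hlt (n0-1) (by omega)).le).2
  have hm9 : 9/10 ≤ ‖m‖ := by rw [hm]; norm_num
  have hτ2 : τ ∈ Metric.ball (0:ℂ) 2 := by rw [mem_ball_zero_iff]; linarith
  have key : ∀ k ≤ n0, ∃ u : ℂ → ℂ, DifferentiableOn ℂ u (Metric.ball 0 2) ∧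
      u τ = (FF E m b τ)^[n0 - k] z ∧ ∀ t ∈ Metric.ball (0:ℂ) 2, (FF E m b t)^[k] (u t) = w ∧
        ‖u t‖ ≤ 17 ∧ (0 < k → ‖u t‖ ≤ 6) := by
    intro k
    induction k with
    | zero =>
      intro _
      exact ⟨fun _ => w, by fun_prop, by simp [hw], fun t _ => ⟨rfl, hw17, fun h => absurd h (by norm_num)⟩⟩
    | succ k ih =>
      intro hk
      obtain ⟨u, hu, huτ, hut⟩ := ih (by omega)
      obtain ⟨y, hy, hyτ, hyt⟩ := pullback hE hm9 hb (by norm_num : (0:ℝ) < 2) (u := u) (τ := fun t => t)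
        hu (by fun_prop) (fun t ht => (hut t ht).2.1)
        (fun t ht => by rw [mem_ball_zero_iff] at ht; exact ht.le)
        (fun t ht h => by
          have h1 := (hut t ht).1
          rw [h] at h1
          rw [mem_ball_zero_iff] at ht
          have := crit_bdd hE hm hb ht.le k
          rw [h1] at this
          linarith) (t1 := τ) (z1 := (FF E m b τ)^[n0 - (k+1)] z) hτ2 (hlt _ (by omega)).le
        (by
          rw [huτ, ← Function.iterate_succ_apply' (FF E m b τ)]
          congr 2; omega)
      refine ⟨y, hy, hyτ, fun t ht => ⟨?_, by have := (hyt t ht).2.1; linarith, fun _ => (hyt t ht).2.1⟩⟩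
      rw [Function.iterate_succ_apply, (hyt t ht).1, (hut t ht).1]
  obtain ⟨u, hu, huτ, hut⟩ := key n0 le_rfl
  simp only [Nat.sub_self, Function.iterate_zero, id] at huτ
  have hne : ∀ t ∈ Metric.ball (0:ℂ) 2, u t ≠ 0 := by
    intro t ht h
    have h1 := (hut t ht).1
    rw [h, FF_iter_zero hE] at h1
    rw [← h1] at h0
    norm_num at h0
  have h02 : (0:ℂ) ∈ Metric.ball (0:ℂ) 2 := Metric.mem_ball_self (by norm_num)
  have hu0 : s ≤ ‖u 0‖ := by
    by_contra hlt0
    push Not at hlt0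
    have := H (u 0) hlt0 n0
    rw [(hut 0 h02).1] at this
    linarith
  obtain ⟨L, hL, hLu⟩ := hol_log (by norm_num : (0:ℝ) < 2) hu hne
  have hre : ∀ t ∈ Metric.ball (0:ℂ) 2, Real.exp (L t).re = ‖u t‖ := fun t ht => by
    rw [← hLu t ht, Complex.norm_exp]
  set M := Real.log (6 / s) with hM
  have hMpos : 0 < M := Real.log_pos (by rw [lt_div_iff₀ hs]; linarith)
  have hMe : Real.exp M = 6 / s := Real.exp_log (by positivity)
  have hBC := Complex.borelCaratheodory_zero (f := fun t => L t - L 0) (M := M) (R := 2) (z := τ) hMpos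
    (by fun_prop) (by
      intro t ht
      change (L t - L 0).re ≤ M
      rw [← Real.exp_le_exp, hMe, Complex.sub_re, Real.exp_sub, hre t ht, hre 0 h02]
      have := (hut t ht).2.2 hn0pos
      gcongr) (by norm_num) hτ2 (by simp)
  have hB2 : ‖L τ - L 0‖ ≤ 2 * M := by
    refine hBC.trans ?_
    rw [div_le_iff₀ (by linarith)]
    nlinarith
  have h3 : -(2 * M) ≤ (L τ - L 0).re := by
    have := Complex.abs_re_le_norm (L τ - L 0)
    have := neg_abs_le (L τ - L 0).re
    linarith
  have h4 : Real.exp (-(2*M)) ≤ ‖u τ‖ / ‖u 0‖ := by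
    rw [← hre τ hτ2, ← hre 0 h02, ← Real.exp_sub, ← Complex.sub_re]
    exact Real.exp_le_exp.2 h3
  have h5 : Real.exp (-(2*M)) = (s/6)^2 := by
    have : -(2*M) = ((2:ℕ):ℝ) * (-M) := by push_cast; ring
    rw [this, Real.exp_nat_mul, Real.exp_neg, hMe, inv_div]
  rw [h5, huτ, le_div_iff₀ (by linarith)] at h4
  have : s * (s/6)^2 ≤ (s/6)^2 * ‖u 0‖ := by
    rw [mul_comm]; gcongr
  linarith

/-- removing the quadratic term by the maximum principle -/
lemma stab_disc {E : ℂ → ℂ} (hE : GoodE E) {m : ℂ} (hm : ‖m‖ = 1) {s : ℝ}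
    (H : ∀ b : ℂ, ‖b‖ = 1 → ∀ z : ℂ, ‖z‖ < s → ∀ n, ‖(FF E m b 1)^[n] z‖ < 7/2) {z : ℂ}
    (hz : ‖z‖ < s) (n : ℕ) :
    DiffContOnCl ℂ (fun b => (FF E m b 1)^[n] z) (Metric.ball 0 1) ∧
      ∀ b : ℂ, ‖b‖ ≤ 1 → ‖(FF E m b 1)^[n] z‖ ≤ 7/2 := by
  have hmax : ∀ n, DiffContOnCl ℂ (fun b => (FF E m b 1)^[n] z) (Metric.ball 0 1) →
      ∀ b : ℂ, ‖b‖ ≤ 1 → ‖(FF E m b 1)^[n] z‖ ≤ 7/2 := by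
    intro n hd b hb
    apply Complex.norm_le_of_forall_mem_frontier_norm_le Metric.isBounded_ball hd
    · intro b hb
      rw [frontier_ball _ one_ne_zero, mem_sphere_zero_iff_norm] at hb
      exact (H b hb z hz n).le
    · rw [closure_ball _ one_ne_zero]; simpa using hb
  suffices hd : DiffContOnCl ℂ (fun b => (FF E m b 1)^[n] z) (Metric.ball 0 1) from ⟨hd, hmax n hd⟩
  induction n with
  | zero => exact diffContOnCl_const
  | succ n ih =>
    have hbd := hmax n ih
    have hy : ∀ b : ℂ, ‖b‖ ≤ 1 → ‖(FF E m b 1)^[n] z + b * ((FF E m b 1)^[n] z)^2‖ < 32 := fun b hb => by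
      have := (FF_norm_le hE (τ := 1) hm hb (by norm_num) (hbd b hb)).1
      linarith
    simp only [Function.iterate_succ_apply']
    have e : (fun b => FF E m b 1 ((FF E m b 1)^[n] z)) = fun b =>
      m * ((FF E m b 1)^[n] z + b * ((FF E m b 1)^[n] z)^2) +
        E ((FF E m b 1)^[n] z + b * ((FF E m b 1)^[n] z)^2) := by
      funext b
      rw [FF, psi, one_mul]
    rw [e]
    have hY : DiffContOnCl ℂ (fun b => (FF E m b 1)^[n] z + b * ((FF E m b 1)^[n] z)^2) (Metric.ball 0 1) := by
      have h1 := ih.differentiableOn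
      have h2 := ih.continuousOn
      exact ⟨by fun_prop, by fun_prop⟩
    refine ⟨?_, ?_⟩
    · have h1 := hY.differentiableOn
      refine (h1.const_mul m).add (hE.1.comp h1 fun b hb => ?_)
      rw [mem_ball_zero_iff] at hb ⊢
      exact hy b hb.le
    · have h1 := hY.continuousOn
      refine (h1.const_mul m).add (hE.1.continuousOn.comp h1 fun b hb => ?_)
      rw [closure_ball _ one_ne_zero, mem_closedBall_zero_iff] at hb
      rw [mem_ball_zero_iff]
      exact hy b hb

lemma orbit_lower {α : ℝ} (h : ¬ MapClusterPt (0:ℂ) atTop (fun n : ℕ => (Pa α)^[n + 1] (cpa α))) :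
    ∃ r : ℝ, 0 < r ∧ r ≤ 1 ∧ ∀ n : ℕ, r ≤ ‖(Pa α)^[n + 1] (cpa α)‖ := by
  have hne : ∀ n : ℕ, (Pa α)^[n + 1] (cpa α) ≠ 0 := by
    intro n hn
    apply h
    have hev : ∀ k : ℕ, n ≤ k → (Pa α)^[k + 1] (cpa α) = 0 := by
      intro k hk
      induction k, hk using Nat.le_induction with
      | base => exact hn
      | succ k hk ih => rw [Function.iterate_succ_apply', ih]; simp [Pa]
    apply Tendsto.mapClusterPt
    apply tendsto_const_nhds.congr'
    filter_upwards [eventually_ge_atTop n] with k hk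
    exact (hev k hk).symm
  rw [mapClusterPt_iff_frequently] at h
  push Not at h
  obtain ⟨s, hs, h⟩ := h
  obtain ⟨e, he, hes⟩ := Metric.mem_nhds_iff.1 hs
  obtain ⟨M, hM⟩ := eventually_atTop.1 h
  have key : ∀ M : ℕ, ∃ r : ℝ, 0 < r ∧ ∀ n < M, r ≤ ‖(Pa α)^[n + 1] (cpa α)‖ := by
    intro M
    induction M with
    | zero => exact ⟨1, one_pos, by simp⟩
    | succ M ih =>
      obtain ⟨r, hr, hr2⟩ := ih
      refine ⟨min r ‖(Pa α)^[M + 1] (cpa α)‖, lt_min hr (norm_pos_iff.2 (hne M)), ?_⟩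
      intro n hn
      rcases Nat.lt_succ_iff_lt_or_eq.1 hn with h | h
      · exact (min_le_left _ _).trans (hr2 n h)
      · subst h; exact min_le_right _ _
  obtain ⟨r, hr, hr2⟩ := key M
  refine ⟨min 1 (min r e), by positivity, min_le_left _ _, ?_⟩
  intro n
  by_cases hn : n < M
  · exact (min_le_right _ _).trans ((min_le_left _ _).trans (hr2 n hn))
  · refine (min_le_right _ _).trans ((min_le_right _ _).trans ?_)
    by_contra hc
    push Not at hc
    exact hM n (by omega) (hes (by rwa [mem_ball_zero_iff]))

theorem stab_of_not_cluster {α : ℝ}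
    (h : ¬ MapClusterPt (0:ℂ) atTop (fun n : ℕ => (Pa α)^[n + 1] (cpa α))) :
    ∃ ρ : ℝ, 0 < ρ ∧ Stab α ρ := by
  obtain ⟨r, hr, hr1, hH⟩ := orbit_lower h
  set s : ℝ := r^2/32 with hs
  have hs0 : 0 < s := by positivity
  have hs1 : s ≤ 1 := by rw [hs]; nlinarith
  refine ⟨s * (s/6)^2 / 32, by positivity, ?_⟩
  intro f hf z hz n
  have hm := norm_lam α
  have hm0 : lam α ≠ 0 := by intro h0; rw [h0] at hm; simp at hm
  set E : ℂ → ℂ := fun y => 32 * f (y / 32) - lam α * y with hEdef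
  have hE : GoodE E := by
    constructor
    · refine DifferentiableOn.sub (DifferentiableOn.const_mul ?_ _) (by fun_prop)
      refine hf.1.comp (by fun_prop) ?_
      intro y hy
      rw [mem_ball_zero_iff] at hy ⊢
      rw [norm_div, Complex.norm_ofNat]; linarith
    · intro y hy
      rw [mem_ball_zero_iff] at hy
      have := hf.2 (y/32) (by rw [mem_ball_zero_iff, norm_div, Complex.norm_ofNat]; linarith)
      have e : E y = 32 * (f (y/32) - lam α * (y/32)) := by simp only [hEdef]; ring
      rw [e, norm_mul, Complex.norm_ofNat]
      rw [norm_div, Complex.norm_ofNat] at this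
      nlinarith
  have hcov : ∀ b : ℂ, ‖b‖ = 1 → ∀ z : ℂ, ‖z‖ < s → ∀ n, ‖(FF E (lam α) b 0)^[n] z‖ ≤ 3 := by
    intro b hb z hz n
    have hb0 : b ≠ 0 := by intro h0; rw [h0] at hb; simp at hb
    refine cover_zero hE hm hb hr hr1 ?_ hz n
    intro n
    have : (FF E (lam α) b 0)^[n] (psi E (lam α) 0 (-1/(4*b))) = (1/(lam α*b)) * (Pa α)^[n+1] (cpa α) := by
      induction n with
      | zero =>
        simp only [Function.iterate_zero, id, zero_add, Function.iterate_one, psi, Pa, cpa]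
        change lam α * (-1/(4*b)) + 0 * E (-1/(4*b)) = 1/(lam α*b) * (lam α * (-lam α/2) + (-lam α/2)^2)
        field_simp; ring
      | succ n ih =>
        rw [Function.iterate_succ_apply', ih, Function.iterate_succ_apply' _ (n+1)]
        generalize (Pa α)^[n+1] (cpa α) = x
        simp only [FF, psi, Pa]
        change lam α * _ + 0 * _ = 1/(lam α*b) * (lam α * x + x^2)
        field_simp; ring
    rw [this, norm_mul, norm_div, norm_mul, hm, hb]
    simpa using hH n
  have h2 := (stab_disc hE hm (s := s * (s/6)^2) (fun b hb z hz n =>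
    stab_unimod hE hm hb hs0 hs1 (hcov b hb) (by simp) hz n) (z := 32 * z) (by
      rw [norm_mul, Complex.norm_ofNat]; linarith) n).2 0 (by simp)
  have : ∀ n, (FF E (lam α) 0 1)^[n] (32 * z) = 32 * f^[n] z := by
    intro n
    induction n with
    | zero => simp
    | succ n ih =>
      rw [Function.iterate_succ_apply', ih, Function.iterate_succ_apply']
      generalize f^[n] z = x
      simp only [FF, psi, hEdef]
      have : (32 * x + 0 * (32 * x)^2) / 32 = x := by ring
      rw [this]; ring
  rw [this, norm_mul, Complex.norm_ofNat] at h2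
  rw [mem_ball_zero_iff]; linarith

/-- integrable kernel on the line -/
noncomputable def kk (x : ℝ) : ℝ := Real.exp x / (1 + Real.exp x)^2

lemma kk_nonneg (x : ℝ) : 0 ≤ kk x := by unfold kk; positivity

lemma kk_cont : Continuous kk := by
  unfold kk
  exact Real.continuous_exp.div (by fun_prop) (fun x => by positivity)

lemma kk_deriv (x : ℝ) : HasDerivAt (fun x => -1 / (1 + Real.exp x)) (kk x) x := by
  have h := ((hasDerivAt_const x (-1:ℝ)).div ((Real.hasDerivAt_exp x).const_add 1) (by positivity))
  refine h.congr_deriv ?_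
  unfold kk; ring

lemma kk_integrable : Integrable kk := by
  refine integrable_of_intervalIntegral_norm_bounded (l := atTop) (a := fun n : ℕ => -(n:ℝ)) (b := fun n : ℕ => (n:ℝ)) 1
    (fun i => (kk_cont.integrableOn_Ioc)) (tendsto_neg_atTop_atBot.comp tendsto_natCast_atTop_atTop)
    tendsto_natCast_atTop_atTop (Eventually.of_forall fun n => ?_)
  have : (fun x => ‖kk x‖) = kk := by
    funext x; exact Real.norm_of_nonneg (kk_nonneg x)
  rw [this, intervalIntegral.integral_eq_sub_of_hasDerivAt (fun x _ => kk_deriv x) (kk_cont.intervalIntegrable _ _)]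
  have h1 : 0 < Real.exp (n:ℝ) := Real.exp_pos _
  have h2 : 0 < Real.exp (-n:ℝ) := Real.exp_pos _
  have h3 : 0 ≤ 1/(1 + Real.exp (n:ℝ)) := by positivity
  have h4 : 1/(1 + Real.exp (-n:ℝ)) ≤ 1 := by rw [div_le_one (by positivity)]; linarith
  rw [neg_div, neg_div]; linarith

lemma kk_integral : ∫ x, kk x = 1 := by
  have := integral_of_hasDerivAt_of_tendsto (m := (-1:ℝ)) (n := 0) kk_deriv kk_integrable ?_ ?_
  · rw [this]; norm_num
  · have h : Tendsto (fun x:ℝ => -1/(1+Real.exp x)) atBot (nhds (-1/(1+0))) :=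
      (tendsto_const_nhds).div (tendsto_const_nhds.add Real.tendsto_exp_atBot) (by norm_num)
    simpa using h
  · exact Tendsto.const_div_atTop (tendsto_atTop_add_const_left _ _ Real.tendsto_exp_atTop) _

/-- upper cone -/
def Vc : Set ℂ := {Q | ‖Q‖ < 2 * Q.im}
/-- complement of the narrow closed cone -/
def Rz : Set ℂ := {Q | Q.im < (4/5) * ‖Q‖}
/-- the narrow closed cone -/
def Sn : Set ℂ := {Q | Q ≠ 0 ∧ (4/5) * ‖Q‖ ≤ Q.im}

lemma Vc_open : IsOpen Vc := isOpen_lt (by fun_prop) (by fun_prop)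
lemma Rz_open : IsOpen Rz := isOpen_lt (by fun_prop) (by fun_prop)

lemma Vc_ne {Q : ℂ} (h : Q ∈ Vc) : Q ≠ 0 := by
  rintro rfl; simp [Vc] at h
lemma Vc_im {Q : ℂ} (h : Q ∈ Vc) : 0 < Q.im := by
  have h1 : ‖Q‖ < 2 * Q.im := h
  have := norm_nonneg Q; linarith
lemma Rz_ne {Q : ℂ} (h : Q ∈ Rz) : Q ≠ 0 := by
  rintro rfl; simp [Rz] at h
lemma Sn_Vc {Q : ℂ} (h : Q ∈ Sn) : Q ∈ Vc := by
  have h1 := norm_pos_iff.2 h.1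
  have h2 := h.2
  change ‖Q‖ < 2 * Q.im; linarith

/-- direction of the right ray -/
noncomputable def dA : ℂ := ⟨3/5, 4/5⟩
/-- direction of the left ray -/
noncomputable def dB : ℂ := ⟨-3/5, 4/5⟩

lemma norm_dA : ‖dA‖ = 1 := by
  rw [← sq_eq_sq₀ (norm_nonneg _) one_pos.le, ← Complex.normSq_eq_norm_sq, Complex.normSq_apply]
  norm_num [dA]
lemma norm_dB : ‖dB‖ = 1 := by
  rw [← sq_eq_sq₀ (norm_nonneg _) one_pos.le, ← Complex.normSq_eq_norm_sq, Complex.normSq_apply]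
  norm_num [dB]

/-- points of the rays -/
noncomputable def ry (d : ℂ) (x : ℝ) : ℂ := (Real.exp x : ℂ) * d

lemma norm_ry {d : ℂ} (hd : ‖d‖ = 1) (x : ℝ) : ‖ry d x‖ = Real.exp x := by
  rw [ry, norm_mul, hd, mul_one, Complex.norm_real, Real.norm_of_nonneg (Real.exp_pos x).le]

lemma ry_im (d : ℂ) (x : ℝ) : (ry d x).im = Real.exp x * d.im := by
  simp only [ry]; rw [Complex.im_ofReal_mul]
lemma ry_re (d : ℂ) (x : ℝ) : (ry d x).re = Real.exp x * d.re := by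
  simp only [ry]; rw [Complex.re_ofReal_mul]

lemma ry_cont (d : ℂ) : Continuous (ry d) := by
  unfold ry; fun_prop

/-- admissible directions -/
def Dir (d : ℂ) : Prop := ‖d‖ = 1 ∧ d.im = 4/5

lemma dirA : Dir dA := ⟨norm_dA, rfl⟩
lemma dirB : Dir dB := ⟨norm_dB, rfl⟩

lemma ry_Sn {d : ℂ} (hd : Dir d) (x : ℝ) : ry d x ∈ Sn := by
  have h0 := Real.exp_pos x
  refine ⟨?_, ?_⟩
  · rw [← norm_pos_iff, norm_ry hd.1]; exact h0
  · rw [norm_ry hd.1, ry_im, hd.2]; linarith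

/-- Decay condition -/
def Dec (M : ℝ) (J : ℂ → ℂ) : Prop :=
  0 ≤ M ∧ DifferentiableOn ℂ J Vc ∧ ∀ Q ∈ Vc, ‖J Q‖ ≤ M * (‖Q‖ / (1 + ‖Q‖)^3)

/-- Cauchy integral along a ray -/
noncomputable def Cr (d : ℂ) (J : ℂ → ℂ) (Q : ℂ) : ℂ :=
  (1 / (2 * Real.pi * Complex.I)) * ∫ x : ℝ, J (ry d x) * ry d x / (ry d x - Q)

lemma Dec.cont_ry {M : ℝ} {J : ℂ → ℂ} (hJ : Dec M J) {d : ℂ} (hd : Dir d) :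
    Continuous (fun x => J (ry d x)) := by
  have := hJ.2.1.continuousOn
  exact this.comp_continuous (ry_cont d) (fun x => Sn_Vc (ry_Sn hd x))

lemma Dec.bd1 {M : ℝ} {J : ℂ → ℂ} (hJ : Dec M J) {d : ℂ} (hd : Dir d) (x : ℝ) :
    ‖J (ry d x) * ry d x‖ ≤ M * kk x := by
  have h := hJ.2.2 _ (Sn_Vc (ry_Sn hd x))
  rw [norm_ry hd.1] at h
  have h0 := Real.exp_pos x
  rw [norm_mul, norm_ry hd.1]
  calc _ ≤ M * (Real.exp x / (1 + Real.exp x)^3) * Real.exp x := by gcongr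
    _ = M * kk x * (Real.exp x / (1 + Real.exp x)) := by unfold kk; field_simp
    _ ≤ M * kk x * 1 := by
      have := kk_nonneg x
      have := hJ.1
      gcongr
      rw [div_le_one (by positivity)]; linarith
    _ = _ := by ring

lemma Dec.bd2 {M : ℝ} {J : ℂ → ℂ} (hJ : Dec M J) {d : ℂ} (hd : Dir d) (x : ℝ) :
    ‖J (ry d x) * ry d x‖ ≤ M * kk x * Real.exp x := by
  have h := hJ.2.2 _ (Sn_Vc (ry_Sn hd x))
  rw [norm_ry hd.1] at h
  have h0 := Real.exp_pos x
  rw [norm_mul, norm_ry hd.1]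
  calc _ ≤ M * (Real.exp x / (1 + Real.exp x)^3) * Real.exp x := by gcongr
    _ = M * kk x * (Real.exp x / (1 + Real.exp x)) := by unfold kk; field_simp
    _ ≤ M * kk x * Real.exp x := by
      have := kk_nonneg x
      have := hJ.1
      gcongr
      rw [div_le_iff₀ (by positivity)]; nlinarith

lemma Dec.meas {M : ℝ} {J : ℂ → ℂ} (hJ : Dec M J) {d : ℂ} (hd : Dir d) (Q : ℂ) :
    AEStronglyMeasurable (fun x => J (ry d x) * ry d x / (ry d x - Q)) := by
  have h1 := ((hJ.cont_ry hd).mul (ry_cont d)).measurable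
  have h2 := ((ry_cont d).measurable.sub_const Q)
  exact (h1.div h2).aestronglyMeasurable

lemma Dec.int {M : ℝ} {J : ℂ → ℂ} (hJ : Dec M J) {d : ℂ} (hd : Dir d) {Q : ℂ} {η : ℝ} (hη : 0 < η)
    (h : ∀ x, η ≤ ‖ry d x - Q‖) : Integrable (fun x => J (ry d x) * ry d x / (ry d x - Q)) := by
  refine Integrable.mono' (g := fun x => M / η * kk x) (kk_integrable.const_mul _) (hJ.meas hd Q)
    (Eventually.of_forall fun x => ?_)
  rw [norm_div]
  have h1 := hJ.bd1 hd x
  have h2 := h x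
  have := mul_nonneg hJ.1 (kk_nonneg x)
  calc _ ≤ (M * kk x) / η := by gcongr
    _ = _ := by ring

lemma Cr_bound {M : ℝ} {J : ℂ → ℂ} (hJ : Dec M J) {d : ℂ} (hd : Dir d) {Q : ℂ}
    (h : ∀ x, (3/5) * Real.exp x ≤ ‖ry d x - Q‖) : ‖Cr d J Q‖ ≤ M ∧ ‖Cr d J Q‖ * ‖Q‖ ≤ M := by
  have hpi := Real.pi_gt_three
  have hc : ‖(1 / (2 * Real.pi * Complex.I) : ℂ)‖ = 1 / (2 * Real.pi) := by
    simp [abs_of_pos Real.pi_pos]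
  have hM := hJ.1
  have hpos : ∀ x, 0 < ‖ry d x - Q‖ := fun x => by
    have := Real.exp_pos x; have := h x; linarith
  constructor
  · have : ‖∫ x : ℝ, J (ry d x) * ry d x / (ry d x - Q)‖ ≤ ∫ x, (5/3) * M * kk x := by
      refine norm_integral_le_of_norm_le (kk_integrable.const_mul _) (Eventually.of_forall fun x => ?_)
      rw [norm_div, div_le_iff₀ (hpos x)]
      have := mul_nonneg hM (kk_nonneg x)
      have := h x
      nlinarith [hJ.bd2 hd x]
    rw [integral_const_mul, kk_integral] at this
    rw [Cr, norm_mul, hc]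
    calc _ ≤ 1/(2*Real.pi) * ((5/3) * M * 1) := by gcongr
      _ ≤ 1/(2*3) * ((5/3) * M * 1) := by gcongr
      _ ≤ M := by linarith
  · have hq : ∀ x, ‖Q‖ ≤ (8/3) * ‖ry d x - Q‖ := by
      intro x
      have h1 := norm_sub_le (ry d x) (ry d x - Q)
      rw [sub_sub_cancel, norm_ry hd.1] at h1
      have := h x
      linarith
    have : ‖∫ x : ℝ, J (ry d x) * ry d x / (ry d x - Q)‖ * ‖Q‖ ≤ ∫ x, (8/3) * M * kk x := by
      rw [← norm_mul, ← integral_mul_const]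
      refine norm_integral_le_of_norm_le (kk_integrable.const_mul _) (Eventually.of_forall fun x => ?_)
      rw [norm_mul, norm_div, div_mul_eq_mul_div, div_le_iff₀ (hpos x)]
      have h1 := mul_nonneg hM (kk_nonneg x)
      have h2 := hq x
      have h3 := hJ.bd1 hd x
      calc _ ≤ (M * kk x) * ((8/3) * ‖ry d x - Q‖) := by gcongr
        _ = _ := by ring
    rw [integral_const_mul, kk_integral] at this
    rw [Cr, norm_mul, hc, mul_assoc]
    calc _ ≤ 1/(2*Real.pi) * ((8/3) * M * 1) := by gcongr
      _ ≤ 1/(2*3) * ((8/3) * M * 1) := by gcongr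
      _ ≤ M := by linarith

lemma Cr_diff {M : ℝ} {J : ℂ → ℂ} (hJ : Dec M J) {d : ℂ} (hd : Dir d) {Q : ℂ} {η : ℝ} (hη : 0 < η)
    (h : ∀ x, η ≤ ‖ry d x - Q‖) : DifferentiableAt ℂ (Cr d J) Q := by
  have hb : ∀ x, ∀ Q' ∈ Metric.ball Q (η/2), η/2 ≤ ‖ry d x - Q'‖ := by
    intro x Q' hQ'
    rw [mem_ball_iff_norm] at hQ'
    have h1 := norm_add_le (ry d x - Q') (Q' - Q)
    rw [sub_add_sub_cancel] at h1
    have := h x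
    linarith
  have := hasDerivAt_integral_of_dominated_loc_of_deriv_le (μ := volume) (𝕜 := ℂ) (s := Metric.ball Q (η/2)) (x₀ := Q)
    (F := fun Q x => J (ry d x) * ry d x / (ry d x - Q))
    (F' := fun Q x => J (ry d x) * ry d x / (ry d x - Q)^2) (bound := fun x => M / (η/2)^2 * kk x)
    (Metric.ball_mem_nhds _ (by positivity)) (Eventually.of_forall fun Q => hJ.meas hd Q)
    (hJ.int hd hη h) ?_ ?_ (kk_integrable.const_mul _) ?_
  · unfold Cr
    exact (this.2.differentiableAt).const_mul _
  · have h1 := ((hJ.cont_ry hd).mul (ry_cont d)).measurable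
    have h2 := ((ry_cont d).measurable.sub_const Q)
    exact (h1.div (h2.pow_const 2)).aestronglyMeasurable
  · refine Eventually.of_forall fun x Q' hQ' => ?_
    rw [norm_div, norm_pow]
    have h1 := hJ.bd1 hd x
    have h2 := hb x Q' hQ'
    have h3 := mul_nonneg hJ.1 (kk_nonneg x)
    calc _ ≤ (M * kk x) / (η/2)^2 := by gcongr
      _ = _ := by ring
  · refine Eventually.of_forall fun x Q' hQ' => ?_
    have h2 := hb x Q' hQ'
    have h3 : ry d x - Q' ≠ 0 := by rw [← norm_pos_iff]; linarith
    have := ((hasDerivAt_const Q' (J (ry d x) * ry d x)).div ((hasDerivAt_id Q').const_sub (ry d x)) h3)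
    refine this.congr_deriv ?_
    simp

lemma kk_tendsto_top : Tendsto kk atTop (nhds 0) := by
  refine squeeze_zero kk_nonneg (g := fun x => Real.exp (-x)) (fun x => ?_)
    (Real.tendsto_exp_atBot.comp tendsto_neg_atTop_atBot)
  rw [Real.exp_neg, kk, div_le_iff₀ (by positivity)]
  have := Real.exp_pos x
  rw [inv_mul_eq_div, le_div_iff₀ this]
  nlinarith

lemma kk_tendsto_bot : Tendsto kk atBot (nhds 0) := by
  refine squeeze_zero kk_nonneg (g := fun x => Real.exp x) (fun x => ?_)
    Real.tendsto_exp_atBot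
  have := Real.exp_pos x
  rw [kk]
  exact div_le_self this.le (by nlinarith)

lemma Sn_of_strip {t x y : ℝ} (ht : t = Real.arccos (4/5)) (hy : |y| ≤ t) :
    Complex.I * Complex.exp (x + y * Complex.I) ∈ Sn ∧ ‖Complex.I * Complex.exp (x + y * Complex.I)‖ = Real.exp x := by
  have hn : ‖Complex.I * Complex.exp (x + y * Complex.I)‖ = Real.exp x := by
    rw [norm_mul, Complex.norm_I, one_mul, Complex.norm_exp]; simp
  refine ⟨⟨?_, ?_⟩, hn⟩
  · exact mul_ne_zero Complex.I_ne_zero (Complex.exp_ne_zero _)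
  · rw [hn]
    have h1 : (Complex.I * Complex.exp (x + y * Complex.I)).im = Real.exp x * Real.cos y := by
      rw [Complex.I_mul_im, Complex.exp_re]; simp
    rw [h1]
    have h2 : 4/5 ≤ Real.cos y := by
      have := Real.cos_le_cos_of_nonneg_of_le_pi (abs_nonneg y) (by rw [ht]; exact Real.arccos_le_pi _) hy
      rwa [ht, Real.cos_arccos (by norm_num) (by norm_num), Real.cos_abs] at this
    have := Real.exp_pos x
    nlinarith

lemma dA_eq {t : ℝ} (ht : t = Real.arccos (4/5)) (x : ℝ) :
    Complex.I * Complex.exp (x + ((-t:ℝ):ℂ) * Complex.I) = ry dA x := by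
  have h1 : Real.cos t = 4/5 := by rw [ht, Real.cos_arccos (by norm_num) (by norm_num)]
  have h2 : Real.sin t = 3/5 := by
    rw [ht, Real.sin_arccos]; rw [show (1 - (4/5:ℝ)^2) = (3/5)^2 by norm_num]; rw [Real.sqrt_sq (by norm_num)]
  apply Complex.ext
  · rw [Complex.I_mul_re, Complex.exp_im, ry_re]; simp [h2, dA]
  · rw [Complex.I_mul_im, Complex.exp_re, ry_im]; simp [h1, dA]

lemma dB_eq {t : ℝ} (ht : t = Real.arccos (4/5)) (x : ℝ) :
    Complex.I * Complex.exp (x + (t:ℂ) * Complex.I) = ry dB x := by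
  have h1 : Real.cos t = 4/5 := by rw [ht, Real.cos_arccos (by norm_num) (by norm_num)]
  have h2 : Real.sin t = 3/5 := by
    rw [ht, Real.sin_arccos]; rw [show (1 - (4/5:ℝ)^2) = (3/5)^2 by norm_num]; rw [Real.sqrt_sq (by norm_num)]
  apply Complex.ext
  · rw [Complex.I_mul_re, Complex.exp_im, ry_re]; simp [h2, dB]; ring
  · rw [Complex.I_mul_im, Complex.exp_re, ry_im]; simp [h1, dB]

lemma rot_int {q : ℂ → ℂ} {c : ℝ} (hq : DifferentiableOn ℂ q Sn)
    (hb : ∀ s ∈ Sn, ‖q s‖ ≤ c / (1 + ‖s‖)^2) {d : ℂ} (hd : Dir d) :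
    Integrable (fun x => ry d x * q (ry d x)) := by
  have hcont : Continuous (fun x => ry d x * q (ry d x)) :=
    (ry_cont d).mul (hq.continuousOn.comp_continuous (ry_cont d) (fun x => ry_Sn hd x))
  refine Integrable.mono' (g := fun x => c * kk x) (kk_integrable.const_mul _) hcont.aestronglyMeasurable
    (Eventually.of_forall fun x => ?_)
  have h1 := hb _ (ry_Sn hd x)
  rw [norm_mul, norm_ry hd.1]
  rw [norm_ry hd.1] at h1
  have := Real.exp_pos x
  calc _ ≤ Real.exp x * (c / (1 + Real.exp x)^2) := by gcongr
    _ = _ := by unfold kk; ring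

lemma rot {q : ℂ → ℂ} {c : ℝ} (hq : DifferentiableOn ℂ q Sn)
    (hb : ∀ s ∈ Sn, ‖q s‖ ≤ c / (1 + ‖s‖)^2) :
    ∫ x, ry dA x * q (ry dA x) = ∫ x, ry dB x * q (ry dB x) := by
  obtain ⟨t, ht⟩ : ∃ t, t = Real.arccos (4/5) := ⟨_, rfl⟩
  have ht0 : 0 ≤ t := by rw [ht]; exact Real.arccos_nonneg _
  set h : ℂ → ℂ := fun ζ => (Complex.I * Complex.exp ζ) * q (Complex.I * Complex.exp ζ) with hh
  have hrect : ∀ R : ℕ, (∫ x in (-(R:ℝ))..(R:ℝ), ry dA x * q (ry dA x)) - (∫ x in (-(R:ℝ))..(R:ℝ), ry dB x * q (ry dB x))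
      = - (Complex.I • (∫ y in (-t)..t, h ((R:ℝ) + y * Complex.I))) + Complex.I • (∫ y in (-t)..t, h ((-R:ℝ) + y * Complex.I)) := by
    intro R
    have := Complex.integral_boundary_rect_eq_zero_of_differentiableOn h (⟨-R, -t⟩) (⟨R, t⟩) ?_
    · simp only [hh, dA_eq ht, dB_eq ht] at this ⊢
      linear_combination this
    · have : DifferentiableOn ℂ (fun ζ => Complex.I * Complex.exp ζ) (Set.uIcc (-R:ℝ) R ×ℂ Set.uIcc (-t) t) := by fun_prop
      refine this.mul (hq.comp this ?_)
      intro ζ hζ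
      rw [Complex.mem_reProdIm, Set.uIcc_of_le (by linarith : -t ≤ t)] at hζ
      have := (Sn_of_strip (x := ζ.re) (y := ζ.im) ht (abs_le.2 hζ.2)).1
      rwa [Complex.re_add_im] at this
  have hside : ∀ x : ℝ, ‖∫ y in (-t)..t, h ((x:ℝ) + y * Complex.I)‖ ≤ (2 * t * c) * kk x := by
    intro x
    have := intervalIntegral.norm_integral_le_of_norm_le_const (a := -t) (b := t) (C := c * kk x)
      (f := fun y : ℝ => h ((x:ℝ) + y * Complex.I)) ?_
    · refine this.trans (le_of_eq ?_)
      rw [abs_of_nonneg (by linarith)]; ring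
    · intro y hy
      rw [Set.uIoc_of_le (by linarith)] at hy
      obtain ⟨h1, h2⟩ := Sn_of_strip (x := x) (y := y) ht (abs_le.2 ⟨hy.1.le, hy.2⟩)
      have h3 := hb _ h1
      rw [h2] at h3
      simp only [hh]
      rw [norm_mul, h2]
      have := Real.exp_pos x
      calc _ ≤ Real.exp x * (c / (1 + Real.exp x)^2) := by gcongr
        _ = _ := by unfold kk; ring
  have hz : ∀ u : ℕ → ℝ, Tendsto (fun n => kk (u n)) atTop (nhds 0) →
      Tendsto (fun n => Complex.I • (∫ y in (-t)..t, h ((u n:ℝ) + y * Complex.I))) atTop (nhds 0) := by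
    intro u hu
    have h1 : Tendsto (fun n => ∫ y in (-t)..t, h ((u n:ℝ) + y * Complex.I)) atTop (nhds 0) := by
      apply squeeze_zero_norm (fun n => hside (u n))
      simpa using hu.const_mul (2*t*c)
    simpa using h1.const_smul Complex.I
  have hneg : Tendsto (fun n : ℕ => -(n:ℝ)) atTop atBot := tendsto_neg_atTop_atBot.comp tendsto_natCast_atTop_atTop
  have hpos : Tendsto (fun n : ℕ => (n:ℝ)) atTop atTop := tendsto_natCast_atTop_atTop
  have h1 := hz (fun n : ℕ => (n:ℝ)) (kk_tendsto_top.comp hpos)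
  have h2 := hz (fun n : ℕ => -(n:ℝ)) (kk_tendsto_bot.comp hneg)
  have hA := intervalIntegral_tendsto_integral (rot_int hq hb dirA) hneg hpos
  have hB := intervalIntegral_tendsto_integral (rot_int hq hb dirB) hneg hpos
  have h3 := hA.sub hB
  have h4 := h1.neg.add h2
  rw [neg_zero, add_zero] at h4
  have := tendsto_nhds_unique h3 (h4.congr (fun n => (hrect n).symm))
  exact sub_eq_zero.1 this

lemma Rz_dist {Q s : ℂ} (hs : s ∈ Sn) : (5/9) * ((4/5) * ‖Q‖ - Q.im) ≤ ‖s - Q‖ := by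
  have h1 := hs.2
  have h2 := Complex.abs_im_le_norm (s - Q)
  have h3 := norm_sub_norm_le Q s
  rw [norm_sub_rev] at h3
  rw [Complex.sub_im] at h2
  have := (abs_le.1 h2).2
  linarith

lemma Cr_outside {M : ℝ} {J : ℂ → ℂ} (hJ : Dec M J) {Q : ℂ} (hQ : Q ∈ Rz) : Cr dA J Q = Cr dB J Q := by
  have hQ' : Q.im < (4/5) * ‖Q‖ := hQ
  set η := (5/9) * ((4/5) * ‖Q‖ - Q.im) with hη
  have hη0 : 0 < η := by rw [hη]; linarith
  have := rot (q := fun s => J s / (s - Q)) (c := M / η) ?_ ?_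
  · unfold Cr
    congr 1
    calc _ = ∫ x, ry dA x * (J (ry dA x) / (ry dA x - Q)) := by
          congr 1; funext x; ring
      _ = _ := this
      _ = _ := by congr 1; funext x; ring
  · refine DifferentiableOn.div (hJ.2.1.mono fun s hs => Sn_Vc hs) (by fun_prop) ?_
    intro s hs
    have := Rz_dist (Q := Q) hs
    rw [← norm_pos_iff]; linarith
  · intro s hs
    have h1 := Rz_dist (Q := Q) hs
    have h2 := hJ.2.2 s (Sn_Vc hs)
    have h3 := hJ.1
    have h4 := norm_nonneg s
    rw [norm_div]
    calc _ ≤ (M * (‖s‖ / (1+‖s‖)^3)) / η := by gcongr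
      _ = (M/η) / (1+‖s‖)^2 * (‖s‖ / (1+‖s‖)) := by field_simp
      _ ≤ (M/η) / (1+‖s‖)^2 * 1 := by
        gcongr
        rw [div_le_one (by positivity)]; linarith
      _ = _ := by ring

lemma far_minus {Q s : ℂ} {η : ℝ} (hη : 0 < η) (h : η ≤ ‖s - Q‖) :
    1 + ‖s‖ ≤ ((1 + ‖Q‖)/η + 1) * ‖s - Q‖ := by
  have h1 := norm_add_le (s - Q) Q
  rw [sub_add_cancel] at h1
  have h2 : 1 + ‖Q‖ ≤ (1 + ‖Q‖)/η * ‖s - Q‖ := by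
    rw [div_mul_eq_mul_div, le_div_iff₀ hη]
    have := norm_nonneg Q
    gcongr
  linarith

lemma far_plus {Q s : ℂ} (hQ : Q ∈ Vc) (hs : s ∈ Sn) :
    1 + ‖s‖ ≤ (2/‖Q‖ + 5/4) * ‖s + Q‖ ∧ 0 < ‖s + Q‖ := by
  have h0 := norm_pos_iff.2 (Vc_ne hQ)
  have h1 : ‖Q‖ < 2 * Q.im := hQ
  have h2 := hs.2
  have h3 := (le_abs_self _).trans (Complex.abs_im_le_norm (s + Q))
  rw [Complex.add_im] at h3
  have h4 := norm_nonneg s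
  have h5 : 1 ≤ 2/‖Q‖ * ‖s+Q‖ := by
    rw [div_mul_eq_mul_div, le_div_iff₀ h0]; linarith
  refine ⟨?_, by linarith⟩
  linarith

lemma ker_int {d Q : ℂ} (hd : Dir d) (hQ : Q ∈ Vc) {η : ℝ} (hη : 0 < η) (h : ∀ x, η ≤ ‖ry d x - Q‖)
    (him : ∀ x, ((ry d x - Q) / (ry d x + Q)).im ≠ 0) {L : ℂ}
    (hL : Tendsto (fun x => Complex.log ((ry d x - Q) / (ry d x + Q))) atBot (nhds L)) :
    Integrable (fun x => ry d x * (1 / (ry d x - Q) - 1 / (ry d x + Q))) ∧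
      ∫ x, ry d x * (1 / (ry d x - Q) - 1 / (ry d x + Q)) = - L := by
  have hm : ∀ x, ry d x - Q ≠ 0 := fun x => by rw [← norm_pos_iff]; linarith [h x]
  have hp : ∀ x, ry d x + Q ≠ 0 := fun x => by
    rw [← norm_pos_iff]; exact (far_plus hQ (ry_Sn hd x)).2
  have hcont : Continuous (fun x => ry d x * (1 / (ry d x - Q) - 1 / (ry d x + Q))) := by
    have := ry_cont d
    refine this.mul ((continuous_const.div (by fun_prop) hm).sub (continuous_const.div (by fun_prop) hp))
  have hIntg : Integrable (fun x => ry d x * (1 / (ry d x - Q) - 1 / (ry d x + Q))) := by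
    set A := (1 + ‖Q‖)/η + 1
    set B := 2/‖Q‖ + 5/4
    refine Integrable.mono' (g := fun x => (2 * ‖Q‖ * A * B) * kk x) (kk_integrable.const_mul _)
      hcont.aestronglyMeasurable (Eventually.of_forall fun x => ?_)
    have e : ry d x * (1 / (ry d x - Q) - 1 / (ry d x + Q)) = ry d x * (2 * Q) / ((ry d x - Q) * (ry d x + Q)) := by
      have := hm x; have := hp x
      field_simp; ring
    have h1 := far_minus hη (h x)
    have h2 := far_plus hQ (ry_Sn hd x)
    have h3 := norm_pos_iff.2 (hm x)
    rw [e, norm_div, norm_mul, norm_mul, norm_mul]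
    rw [norm_ry hd.1] at h1 h2 ⊢
    have h0 := Real.exp_pos x
    rw [div_le_iff₀ (mul_pos h3 h2.2), Complex.norm_ofNat, kk]
    have h4 : (1 + Real.exp x)^2 ≤ (A * ‖ry d x - Q‖) * (B * ‖ry d x + Q‖) := by
      rw [pow_two]; gcongr; exact h2.1
    calc _ = 2 * ‖Q‖ * Real.exp x / (1 + Real.exp x)^2 * (1 + Real.exp x)^2 := by field_simp
      _ ≤ 2 * ‖Q‖ * Real.exp x / (1 + Real.exp x)^2 * ((A * ‖ry d x - Q‖) * (B * ‖ry d x + Q‖)) := by gcongr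
      _ = _ := by ring
  refine ⟨hIntg, ?_⟩
  have htop : Tendsto (fun x => Complex.log ((ry d x - Q) / (ry d x + Q))) atTop (nhds 0) := by
    have h1 : Tendsto (fun x => (ry d x - Q) / (ry d x + Q)) atTop (nhds 1) := by
      have h2 : Tendsto (fun x : ℝ => 2 * Q / (ry d x + Q)) atTop (nhds 0) := by
        rw [tendsto_zero_iff_norm_tendsto_zero]
        simp only [norm_div]
        refine Tendsto.const_div_atTop ?_ _
        refine tendsto_atTop_mono (f := fun x => Real.exp x - ‖Q‖) (fun x => ?_)
          (tendsto_atTop_add_const_right _ _ Real.tendsto_exp_atTop)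
        have := norm_sub_le (ry d x + Q) Q
        rw [add_sub_cancel_right, norm_ry hd.1] at this
        linarith
      have h3 := h2.const_sub 1
      rw [sub_zero] at h3
      refine h3.congr fun x => ?_
      have := hp x
      field_simp; ring
    have := (continuousAt_clog (x := 1) (by simp)).tendsto.comp h1
    rwa [Complex.log_one] at this
  have := integral_of_hasDerivAt_of_tendsto (f := fun x => Complex.log ((ry d x - Q) / (ry d x + Q))) ?_ hIntg hL htop
  · rw [this]; ring
  · intro x
    have h0 : HasDerivAt (ry d) (ry d x) x := by
      have := ((Real.hasDerivAt_exp x).ofReal_comp).mul_const d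
      exact this
    have h1 := ((h0.sub_const Q).div (h0.add_const Q) (hp x)).clog_real (Complex.mem_slitPlane_iff.2 (Or.inr (him x)))
    refine h1.congr_deriv ?_
    have := hm x; have := hp x
    field_simp
    simp only [Pi.div_apply]
    field_simp

lemma ratio_im {s Q : ℂ} : ((s - Q) / (s + Q)).im = 2 * (s.im * Q.re - s.re * Q.im) / Complex.normSq (s + Q) := by
  rw [Complex.div_im]
  simp only [Complex.sub_re, Complex.sub_im, Complex.add_re, Complex.add_im]
  ring

lemma ratio_bot {d Q : ℂ} (hd : Dir d) (hQ : Q ≠ 0) :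
    Tendsto (fun x => (ry d x - Q) / (ry d x + Q)) atBot (nhds (-1)) := by
  have h1 : Tendsto (fun x => ry d x) atBot (nhds 0) := by
    rw [tendsto_zero_iff_norm_tendsto_zero]
    simp only [norm_ry hd.1]
    exact Real.tendsto_exp_atBot
  have := (h1.sub_const Q).div (h1.add_const Q) (by simpa using hQ)
  simp only [zero_sub, zero_add, neg_div, div_self hQ] at this
  exact this

lemma line_dist {d Q : ℂ} (hd : ‖d‖ = 1) (x : ℝ) : |Q.im * d.re - Q.re * d.im| ≤ ‖ry d x - Q‖ := by
  have h1 := Complex.abs_im_le_norm ((ry d x - Q) * (starRingEnd ℂ) d)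
  rw [norm_mul, RCLike.norm_conj, hd, mul_one] at h1
  refine le_trans (le_of_eq ?_) h1
  rw [← abs_neg]
  congr 1
  rw [Complex.mul_im]
  simp only [Complex.sub_re, Complex.sub_im, Complex.conj_re, Complex.conj_im, ry_re, ry_im]
  ring

lemma kerA {Q : ℂ} (hQ : Q ∈ Vc) (h : 4 * Q.re < 3 * Q.im) :
    Integrable (fun x => ry dA x * (1 / (ry dA x - Q) - 1 / (ry dA x + Q))) ∧
      ∫ x, ry dA x * (1 / (ry dA x - Q) - 1 / (ry dA x + Q)) = Real.pi * Complex.I := by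
  have him : ∀ x, ((ry dA x - Q) / (ry dA x + Q)).im < 0 := by
    intro x
    rw [ratio_im, ry_re, ry_im]
    have h1 := (far_plus hQ (ry_Sn dirA x)).2
    have h2 := Complex.normSq_pos.2 (norm_pos_iff.1 h1)
    apply div_neg_of_neg_of_pos _ h2
    have := Real.exp_pos x
    simp only [dA]
    nlinarith
  have := ker_int dirA hQ (η := (3 * Q.im - 4 * Q.re)/5) (by linarith) (fun x => by
    refine le_trans ?_ (line_dist (Q := Q) norm_dA x)
    refine le_trans ?_ (le_abs_self _)
    simp only [dA]; linarith) (fun x => (him x).ne) (L := - (Real.pi * Complex.I)) (by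
      have h1 := Complex.tendsto_log_nhdsWithin_im_neg_of_re_neg_of_im_zero (z := -1) (by simp) (by simp)
      have h2 := h1.comp (tendsto_nhdsWithin_iff.2 ⟨ratio_bot dirA (Vc_ne hQ), Eventually.of_forall him⟩)
      simpa [Function.comp_def] using h2)
  rwa [neg_neg] at this

lemma kerB {Q : ℂ} (hQ : Q ∈ Vc) (h : -(4 * Q.re) < 3 * Q.im) :
    Integrable (fun x => ry dB x * (1 / (ry dB x - Q) - 1 / (ry dB x + Q))) ∧
      ∫ x, ry dB x * (1 / (ry dB x - Q) - 1 / (ry dB x + Q)) = - (Real.pi * Complex.I) := by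
  have him : ∀ x, 0 < ((ry dB x - Q) / (ry dB x + Q)).im := by
    intro x
    rw [ratio_im, ry_re, ry_im]
    have h1 := (far_plus hQ (ry_Sn dirB x)).2
    have h2 := Complex.normSq_pos.2 (norm_pos_iff.1 h1)
    apply div_pos _ h2
    have := Real.exp_pos x
    simp only [dB]
    nlinarith
  exact ker_int dirB hQ (η := (3 * Q.im + 4 * Q.re)/5) (by linarith) (fun x => by
    refine le_trans ?_ (line_dist (Q := Q) norm_dB x)
    refine le_trans ?_ (neg_abs_le _ |> neg_le.1)
    simp only [dB]; linarith) (fun x => (him x).ne') (L := (Real.pi * Complex.I)) (by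
      have h1 := Complex.tendsto_log_nhdsWithin_im_nonneg_of_re_neg_of_im_zero (z := -1) (by simp) (by simp)
      have h2 := h1.comp (tendsto_nhdsWithin_iff.2 ⟨ratio_bot dirB (Vc_ne hQ), Eventually.of_forall fun x => (him x).le⟩)
      simpa [Function.comp_def] using h2)

lemma plemelj {M : ℝ} {J : ℂ → ℂ} (hJ : Dec M J) {Q : ℂ} (h : 4 * |Q.re| < 3 * Q.im) :
    Cr dA J Q = Cr dB J Q + J Q := by
  have hl : 4 * Q.re < 3 * Q.im := by have := le_abs_self Q.re; linarith
  have hr : -(4 * Q.re) < 3 * Q.im := by have := neg_abs_le Q.re; linarith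
  have him : 0 < Q.im := by have := abs_nonneg Q.re; linarith
  have hQ : Q ∈ Vc := by
    change ‖Q‖ < 2 * Q.im
    have h1 := Complex.norm_le_abs_re_add_abs_im Q
    rw [abs_of_pos him] at h1
    linarith
  have hQ0 := Vc_ne hQ
  obtain ⟨IA, kA⟩ := kerA hQ hl
  obtain ⟨IB, kB⟩ := kerB hQ hr
  have hA : ∀ x, (3 * Q.im - 4 * Q.re)/5 ≤ ‖ry dA x - Q‖ := fun x => by
    refine le_trans ?_ (line_dist (Q := Q) norm_dA x)
    refine le_trans ?_ (le_abs_self _)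
    simp only [dA]; linarith
  have hB : ∀ x, (3 * Q.im + 4 * Q.re)/5 ≤ ‖ry dB x - Q‖ := fun x => by
    refine le_trans ?_ (line_dist (Q := Q) norm_dB x)
    refine le_trans ?_ (neg_abs_le _ |> neg_le.1)
    simp only [dB]; linarith
  set f : ℂ → ℂ := fun s => J s - J Q * (2 * Q / (s + Q)) with hf
  have hfQ : f Q = 0 := by
    simp only [hf]; rw [← two_mul, div_self (by simpa using hQ0)]; ring
  have hplus : ∀ s ∈ Vc, s + Q ≠ 0 := by
    intro s hs h0
    have h1 := congrArg Complex.im h0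
    rw [Complex.add_im, Complex.zero_im] at h1
    have := Vc_im hs
    linarith
  have hfd : DifferentiableOn ℂ f Vc := by
    refine hJ.2.1.sub (DifferentiableOn.const_mul (DifferentiableOn.div (by fun_prop) (by fun_prop) hplus) _)
  have hqd : DifferentiableOn ℂ (dslope f Q) Vc :=
    (Complex.differentiableOn_dslope (Vc_open.mem_nhds hQ)).2 hfd
  have hqs : ∀ s, s ≠ Q → dslope f Q s = f s / (s - Q) := by
    intro s hs
    rw [dslope_of_ne _ hs, slope_def_field, hfQ, sub_zero]
  obtain ⟨η, hη, hball⟩ := Metric.isOpen_iff.1 Vc_open Q hQ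
  obtain ⟨c2, hc2⟩ := (isCompact_closedBall Q (η/2)).exists_bound_of_continuousOn
    (hqd.continuousOn.mono ((Metric.closedBall_subset_ball (by linarith)).trans hball))
  set A := (1 + ‖Q‖)/(η/2) + 1 with hAdef
  set B := 2/‖Q‖ + 5/4 with hBdef
  have hA0 : 0 < A := by positivity
  have hB0 : 0 < B := by positivity
  have key : ∀ s ∈ Sn, ‖dslope f Q s‖ ≤ ((M + ‖J Q‖ * (2 * ‖Q‖) * B) * A + |c2| * (1 + ‖Q‖ + η/2)^2) / (1 + ‖s‖)^2 := by
    intro s hs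
    have hM := hJ.1
    have hs0 := norm_nonneg s
    rw [le_div_iff₀ (by positivity)]
    by_cases hd : s ∈ Metric.closedBall Q (η/2)
    · have h1 := (hc2 s hd).trans (le_abs_self c2)
      rw [mem_closedBall_iff_norm] at hd
      have h2 := norm_add_le (s - Q) Q
      rw [sub_add_cancel] at h2
      have h3 : 0 ≤ (M + ‖J Q‖ * (2 * ‖Q‖) * B) * A := by positivity
      calc _ ≤ |c2| * (1 + ‖Q‖ + η/2)^2 := by
            gcongr ?_ * ?_ ^ 2
            · linarith
        _ ≤ _ := by linarith
    · rw [mem_closedBall_iff_norm, not_le] at hd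
      have hne : s ≠ Q := by rintro rfl; simp at hd; linarith
      have h1 := far_minus (by positivity) hd.le
      obtain ⟨h2, h3⟩ := far_plus hQ hs
      have h4 := hJ.2.2 s (Sn_Vc hs)
      have h5 : 0 < ‖s - Q‖ := by linarith
      rw [hqs s hne, norm_div, div_mul_eq_mul_div, div_le_iff₀ h5]
      have h6 : ‖f s‖ * (1 + ‖s‖) ≤ M + ‖J Q‖ * (2 * ‖Q‖) * B := by
        have h7 : ‖f s‖ ≤ ‖J s‖ + ‖J Q‖ * (2 * ‖Q‖ / ‖s + Q‖) := by
          refine (norm_sub_le _ _).trans (le_of_eq ?_)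
          rw [norm_mul, norm_div, norm_mul, Complex.norm_ofNat]
        have h8 : ‖J s‖ * (1 + ‖s‖) ≤ M := by
          calc _ ≤ M * (‖s‖ / (1+‖s‖)^3) * (1 + ‖s‖) := by gcongr
            _ = M * (‖s‖ / (1+‖s‖)^2) := by field_simp
            _ ≤ M * 1 := by
              gcongr
              rw [div_le_one (by positivity)]; nlinarith
            _ = M := mul_one M
        have h9 : ‖J Q‖ * (2 * ‖Q‖ / ‖s + Q‖) * (1 + ‖s‖) ≤ ‖J Q‖ * (2 * ‖Q‖) * B := by
          calc _ ≤ ‖J Q‖ * (2 * ‖Q‖ / ‖s + Q‖) * (B * ‖s + Q‖) := by gcongr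
            _ = _ := by field_simp
        calc _ ≤ (‖J s‖ + ‖J Q‖ * (2 * ‖Q‖ / ‖s + Q‖)) * (1 + ‖s‖) := by gcongr
          _ ≤ _ := by linarith
      have h10 : 0 ≤ |c2| * (1 + ‖Q‖ + η/2)^2 := by positivity
      calc ‖f s‖ * (1 + ‖s‖)^2 = ‖f s‖ * (1 + ‖s‖) * (1 + ‖s‖) := by ring
        _ ≤ (M + ‖J Q‖ * (2 * ‖Q‖) * B) * (A * ‖s - Q‖) := by gcongr
        _ = (M + ‖J Q‖ * (2 * ‖Q‖) * B) * A * ‖s - Q‖ := by ring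
        _ ≤ _ := by gcongr; linarith
  have hrot := rot (hqd.mono fun s hs => Sn_Vc hs) key
  have split : ∀ d, Dir d → ∀ η, 0 < η → (∀ x, η ≤ ‖ry d x - Q‖) →
      Integrable (fun x => ry d x * (1 / (ry d x - Q) - 1 / (ry d x + Q))) →
      ∫ x, ry d x * dslope f Q (ry d x) = (∫ x, J (ry d x) * ry d x / (ry d x - Q))
        - J Q * ∫ x, ry d x * (1 / (ry d x - Q) - 1 / (ry d x + Q)) := by
    intro d hd η hη h hI
    rw [← integral_const_mul, ← integral_sub (hJ.int hd hη h) (hI.const_mul _)]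
    congr 1; funext x
    have h1 : ry d x - Q ≠ 0 := by rw [← norm_pos_iff]; linarith [h x]
    have h2 := hplus _ (Sn_Vc (ry_Sn hd x))
    rw [hqs _ (sub_ne_zero.1 h1)]
    simp only [hf]
    field_simp
    ring
  rw [split dA dirA _ (by linarith) hA IA, split dB dirB _ (by linarith) hB IB, kA, kB] at hrot
  have hpi : (Real.pi : ℂ) ≠ 0 := by exact_mod_cast Real.pi_ne_zero
  have hI := Complex.I_ne_zero
  simp only [Cr]
  have e : (∫ x, J (ry dA x) * ry dA x / (ry dA x - Q)) = (∫ x, J (ry dB x) * ry dB x / (ry dB x - Q)) + J Q * (2 * Real.pi * Complex.I) := by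
    linear_combination hrot
  rw [e]
  field_simp

/-- solution of the additive Cousin problem in the upper cone -/
noncomputable def phC (J : ℂ → ℂ) (Q : ℂ) : ℂ := if Q.re ≤ 0 then Cr dA J Q else Cr dB J Q + J Q
/-- solution of the additive Cousin problem in the outer sector -/
noncomputable def thC (J : ℂ → ℂ) (Q : ℂ) : ℂ := if Q.re ≤ 0 then Cr dA J Q else Cr dB J Q

lemma distA {Q : ℂ} (x : ℝ) : (3 * Q.im - 4 * Q.re)/5 ≤ ‖ry dA x - Q‖ := by
  refine le_trans ?_ (line_dist (Q := Q) norm_dA x)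
  refine le_trans ?_ (le_abs_self _)
  simp only [dA]; linarith

lemma distB {Q : ℂ} (x : ℝ) : (3 * Q.im + 4 * Q.re)/5 ≤ ‖ry dB x - Q‖ := by
  refine le_trans ?_ (line_dist (Q := Q) norm_dB x)
  refine le_trans ?_ (neg_abs_le _ |> neg_le.1)
  simp only [dB]; linarith

lemma CrA_bound {M : ℝ} {J : ℂ → ℂ} (hJ : Dec M J) {Q : ℂ} (h : Q.re ≤ 0) :
    ‖Cr dA J Q‖ ≤ M ∧ ‖Cr dA J Q‖ * ‖Q‖ ≤ M := by
  refine Cr_bound hJ dirA fun x => ?_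
  have h1 := (le_abs_self _).trans (Complex.abs_re_le_norm (ry dA x - Q))
  rw [Complex.sub_re, ry_re] at h1
  simp only [dA] at h1 ⊢
  linarith

lemma CrB_bound {M : ℝ} {J : ℂ → ℂ} (hJ : Dec M J) {Q : ℂ} (h : 0 ≤ Q.re) :
    ‖Cr dB J Q‖ ≤ M ∧ ‖Cr dB J Q‖ * ‖Q‖ ≤ M := by
  refine Cr_bound hJ dirB fun x => ?_
  have h1 := (neg_le_abs _).trans (Complex.abs_re_le_norm (ry dB x - Q))
  rw [Complex.sub_re, ry_re] at h1
  simp only [dB] at h1 ⊢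
  linarith

lemma thC_bound {M : ℝ} {J : ℂ → ℂ} (hJ : Dec M J) (Q : ℂ) :
    ‖thC J Q‖ ≤ M ∧ ‖thC J Q‖ * ‖Q‖ ≤ M := by
  unfold thC
  split_ifs with h
  · exact CrA_bound hJ h
  · exact CrB_bound hJ (by linarith)

lemma Dec.simple {M : ℝ} {J : ℂ → ℂ} (hJ : Dec M J) {Q : ℂ} (hQ : Q ∈ Vc) :
    ‖J Q‖ ≤ M ∧ ‖J Q‖ * ‖Q‖ ≤ M := by
  have h := hJ.2.2 Q hQ
  have hM := hJ.1
  have h0 := norm_nonneg Q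
  constructor
  · refine h.trans (mul_le_of_le_one_right hM ?_)
    rw [div_le_one (by positivity)]; nlinarith [pow_nonneg h0 2, pow_nonneg h0 3]
  · calc _ ≤ M * (‖Q‖ / (1 + ‖Q‖)^3) * ‖Q‖ := by gcongr
      _ = M * (‖Q‖^2 / (1 + ‖Q‖)^3) := by ring
      _ ≤ M := by
        refine mul_le_of_le_one_right hM ?_
        rw [div_le_one (by positivity)]; nlinarith [pow_nonneg h0 2, pow_nonneg h0 3]

lemma thC_eq_left {J : ℂ → ℂ} {Q : ℂ} (h : Q.re ≤ 0) : thC J Q = phC J Q := by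
  simp [thC, phC, h]

lemma thC_eq_right {J : ℂ → ℂ} {Q : ℂ} (h : 0 < Q.re) : thC J Q = phC J Q - J Q := by
  simp [thC, phC, h.not_ge]

lemma phC_bound {M : ℝ} {J : ℂ → ℂ} (hJ : Dec M J) {Q : ℂ} (hQ : Q ∈ Vc) :
    ‖phC J Q‖ ≤ 2 * M ∧ ‖phC J Q‖ * ‖Q‖ ≤ 2 * M := by
  have hM := hJ.1
  unfold phC
  split_ifs with h
  · have := CrA_bound hJ h
    exact ⟨by linarith, by linarith⟩
  · have h1 := CrB_bound hJ (Q := Q) (by linarith)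
    have h2 := hJ.simple hQ
    have h3 := norm_add_le (Cr dB J Q) (J Q)
    have h4 := norm_nonneg Q
    refine ⟨by linarith, ?_⟩
    calc _ ≤ (‖Cr dB J Q‖ + ‖J Q‖) * ‖Q‖ := by gcongr
      _ ≤ _ := by linarith

lemma phC_diff {M : ℝ} {J : ℂ → ℂ} (hJ : Dec M J) : DifferentiableOn ℂ (phC J) Vc := by
  intro Q hQ
  apply DifferentiableAt.differentiableWithinAt
  have him := Vc_im hQ
  by_cases h : Q.re ≤ 0
  · have h1 : DifferentiableAt ℂ (Cr dA J) Q := Cr_diff hJ dirA (η := (3 * Q.im - 4 * Q.re)/5) (by linarith) distA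
    refine h1.congr_of_eventuallyEq ?_
    have hopen : IsOpen {Q : ℂ | 4 * Q.re < 3 * Q.im} := isOpen_lt (by fun_prop) (by fun_prop)
    filter_upwards [hopen.mem_nhds (by change 4 * Q.re < 3 * Q.im; linarith)] with P hP
    have hP : 4 * P.re < 3 * P.im := hP
    unfold phC
    split_ifs with h2
    · rfl
    · rw [plemelj hJ (by rw [abs_of_pos (by linarith)]; linarith)]
  · push Not at h
    have h1 : DifferentiableAt ℂ (Cr dB J) Q := Cr_diff hJ dirB (η := (3 * Q.im + 4 * Q.re)/5) (by linarith) distB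
    refine (h1.add (hJ.2.1.differentiableAt (Vc_open.mem_nhds hQ))).congr_of_eventuallyEq ?_
    have hopen : IsOpen {Q : ℂ | 0 < Q.re} := isOpen_lt (by fun_prop) (by fun_prop)
    filter_upwards [hopen.mem_nhds h] with P hP
    have hP : 0 < P.re := hP
    simp [phC, hP]

lemma thC_diff {M : ℝ} {J : ℂ → ℂ} (hJ : Dec M J) : DifferentiableOn ℂ (thC J) Rz := by
  have h1 : DifferentiableOn ℂ (Cr dA J) Rz := by
    intro Q hQ
    have hQ' : Q.im < (4/5) * ‖Q‖ := hQ
    exact (Cr_diff hJ dirA (η := (5/9) * ((4/5) * ‖Q‖ - Q.im)) (by linarith)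
      (fun x => Rz_dist (ry_Sn dirA x))).differentiableWithinAt
  refine h1.congr fun Q hQ => ?_
  unfold thC
  split_ifs
  · rfl
  · exact (Cr_outside hJ hQ).symm

lemma Dec.mono_sub {M₁ M₂ M : ℝ} {J₁ J₂ : ℂ → ℂ} (h₁ : Dec M₁ J₁) (h₂ : Dec M₂ J₂) (hM : 0 ≤ M)
    (h : ∀ Q ∈ Vc, ‖J₁ Q - J₂ Q‖ ≤ M * (‖Q‖ / (1 + ‖Q‖)^3)) : Dec M (fun Q => J₁ Q - J₂ Q) :=
  ⟨hM, h₁.2.1.sub h₂.2.1, h⟩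

lemma phC_sub {M₁ M₂ : ℝ} {J₁ J₂ : ℂ → ℂ} (h₁ : Dec M₁ J₁) (h₂ : Dec M₂ J₂) {Q : ℂ} (hQ : Q ∈ Vc) :
    phC (fun Q => J₁ Q - J₂ Q) Q = phC J₁ Q - phC J₂ Q := by
  have him := Vc_im hQ
  have lin : ∀ d, Dir d → ∀ η, 0 < η → (∀ x, η ≤ ‖ry d x - Q‖) →
      Cr d (fun Q => J₁ Q - J₂ Q) Q = Cr d J₁ Q - Cr d J₂ Q := by
    intro d hd η hη h
    unfold Cr
    rw [← mul_sub, ← integral_sub (h₁.int hd hη h) (h₂.int hd hη h)]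
    congr 2; funext x; ring
  unfold phC
  split_ifs with h
  · exact lin dA dirA ((3 * Q.im - 4 * Q.re)/5) (by linarith) distA
  · rw [lin dB dirB ((3 * Q.im + 4 * Q.re)/5) (by linarith) distB]; ring

/-- class of admissible corrections -/
def AC (φ : ℂ → ℂ) : Prop := DifferentiableOn ℂ φ Vc ∧ ∀ Q ∈ Vc, ‖φ Q‖ ≤ 1/10

lemma cousin {Γ : ℂ → ℂ → ℂ} {M : ℝ} (hM : M ≤ 1/20)
    (hΓ : ∀ φ, AC φ → Dec M (fun Q => Γ Q (φ Q)))
    (hL : ∀ Q ∈ Vc, ∀ u v : ℂ, ‖u‖ ≤ 1/10 → ‖v‖ ≤ 1/10 → ‖Γ Q u - Γ Q v‖ ≤ M * (‖Q‖ / (1 + ‖Q‖)^3) * ‖u - v‖) :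
    ∃ φ, AC φ ∧ ∀ Q ∈ Vc, φ Q = phC (fun Q => Γ Q (φ Q)) Q := by
  set T : (ℂ → ℂ) → (ℂ → ℂ) := fun φ => phC (fun Q => Γ Q (φ Q)) with hT
  have hTA : ∀ φ, AC φ → AC (T φ) := by
    intro φ hφ
    refine ⟨phC_diff (hΓ φ hφ), fun Q hQ => ?_⟩
    have := (phC_bound (hΓ φ hφ) hQ).1
    linarith
  have hTL : ∀ φ₁ φ₂, AC φ₁ → AC φ₂ → ∀ D : ℝ, 0 ≤ D → (∀ Q ∈ Vc, ‖φ₁ Q - φ₂ Q‖ ≤ D) →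
      ∀ Q ∈ Vc, ‖T φ₁ Q - T φ₂ Q‖ ≤ (1/2) * D := by
    intro φ₁ φ₂ h₁ h₂ D hD h Q hQ
    have hM0 := (hΓ φ₁ h₁).1
    have hdec : Dec (M * D) (fun Q => Γ Q (φ₁ Q) - Γ Q (φ₂ Q)) := by
      refine (hΓ φ₁ h₁).mono_sub (hΓ φ₂ h₂) (by positivity) fun Q hQ => ?_
      have h3 := hL Q hQ _ _ (h₁.2 Q hQ) (h₂.2 Q hQ)
      refine h3.trans ?_
      have := h Q hQ
      calc _ ≤ M * (‖Q‖ / (1 + ‖Q‖)^3) * D := by gcongr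
        _ = _ := by ring
    have := (phC_bound hdec hQ).1
    rw [phC_sub (hΓ φ₁ h₁) (hΓ φ₂ h₂) hQ] at this
    refine this.trans ?_
    nlinarith
  set u : ℕ → ℂ → ℂ := fun n => T^[n] (fun _ => 0) with hu
  have huA : ∀ n, AC (u n) := by
    intro n
    induction n with
    | zero => exact ⟨by simp only [hu, Function.iterate_zero, id]; fun_prop, fun Q _ => by simp [hu]⟩
    | succ n ih => simp only [hu]; rw [Function.iterate_succ_apply']; exact hTA _ ih
  have husucc : ∀ n, u (n+1) = T (u n) := fun n => by simp only [hu]; rw [Function.iterate_succ_apply']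
  have hstep : ∀ n, ∀ Q ∈ Vc, ‖u n Q - u (n+1) Q‖ ≤ 1 * (1/2)^n := by
    intro n
    induction n with
    | zero =>
      intro Q hQ
      have h1 := (huA 0).2 Q hQ
      have h2 := (huA 1).2 Q hQ
      have := norm_sub_le (u 0 Q) (u 1 Q)
      simp only [zero_add, pow_zero]; linarith
    | succ n ih =>
      intro Q hQ
      rw [husucc n, husucc (n+1)]
      have := hTL _ _ (huA n) (huA (n+1)) _ (by positivity) ih Q hQ
      refine this.trans (le_of_eq ?_)
      rw [husucc n] at *
      ring
  have hcau : ∀ Q ∈ Vc, ∃ l, Tendsto (fun n => u n Q) atTop (nhds l) := by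
    intro Q hQ
    refine cauchySeq_tendsto_of_complete (cauchySeq_of_le_geometric (1/2) 1 (by norm_num) fun n => ?_)
    rw [dist_eq_norm]; exact hstep n Q hQ
  choose! φ hφ using hcau
  have hdist : ∀ n, ∀ Q ∈ Vc, ‖u n Q - φ Q‖ ≤ 2 * (1/2)^n := by
    intro n Q hQ
    have := dist_le_of_le_geometric_of_tendsto (1/2) 1 (by norm_num) (f := fun n => u n Q) (a := φ Q)
      (fun n => by rw [dist_eq_norm]; exact hstep n Q hQ) (hφ Q hQ) n
    rw [dist_eq_norm] at this
    refine this.trans (le_of_eq ?_)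
    ring
  have hgeo : Tendsto (fun n : ℕ => 2 * (1/2:ℝ)^n) atTop (nhds 0) := by
    simpa using (tendsto_pow_atTop_nhds_zero_of_lt_one (r := (1/2:ℝ)) (by norm_num) (by norm_num)).const_mul 2
  have hunif : TendstoUniformlyOn u φ atTop Vc := by
    rw [Metric.tendstoUniformlyOn_iff]
    intro e he
    filter_upwards [(tendsto_order.1 hgeo).2 e he] with n hn Q hQ
    rw [dist_comm, dist_eq_norm]
    exact (hdist n Q hQ).trans_lt hn
  have hA : AC φ := by
    refine ⟨hunif.tendstoLocallyUniformlyOn.differentiableOn (Eventually.of_forall fun n => (huA n).1) Vc_open, ?_⟩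
    intro Q hQ
    exact le_of_tendsto (hφ Q hQ).norm (Eventually.of_forall fun n => (huA n).2 Q hQ)
  refine ⟨φ, hA, fun Q hQ => ?_⟩
  have h1 : Tendsto (fun n => u (n+1) Q) atTop (nhds (T φ Q)) := by
    rw [tendsto_iff_norm_sub_tendsto_zero]
    refine squeeze_zero (fun n => norm_nonneg _) (fun n => ?_) hgeo
    rw [husucc n]
    have := hTL _ _ (huA n) hA _ (by positivity) (hdist n) Q hQ
    have h2 : (0:ℝ) ≤ 2 * (1/2)^n := by positivity
    linarith
  exact tendsto_nhds_unique ((hφ Q hQ).comp (tendsto_add_atTop_nat 1)) h1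

/-- logarithmic coordinate -/
noncomputable def Wf (β : ℝ) (Q : ℂ) : ℂ :=
  (Complex.I * β / (2 * Real.pi)) * Complex.log (1 - 2 * Real.pi * Complex.I * Q / β)
/-- inverse of the logarithmic coordinate -/
noncomputable def Qf (β : ℝ) (W : ℂ) : ℂ :=
  (β / (2 * Real.pi * Complex.I)) * (1 - Complex.exp (-(2 * Real.pi * Complex.I * W / β)))

lemma cpi_ne : (Real.pi : ℂ) ≠ 0 := by exact_mod_cast Real.pi_ne_zero

lemma base_re {β : ℝ} {Q : ℂ} : (1 - 2 * Real.pi * Complex.I * Q / β).re = 1 + 2 * Real.pi * Q.im / β := by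
  have : (1 - 2 * Real.pi * Complex.I * Q / β : ℂ) = 1 - ((2 * Real.pi / β : ℝ) : ℂ) * (Complex.I * Q) := by
    push_cast; ring
  rw [this, Complex.sub_re, Complex.re_ofReal_mul, Complex.I_mul_re, Complex.one_re]; ring

lemma base_pos {β : ℝ} (hβ : 0 < β) {Q : ℂ} (hQ : 0 < Q.im) : 0 < (1 - 2 * Real.pi * Complex.I * Q / β).re := by
  rw [base_re]; have := Real.pi_pos; positivity

lemma Wf_diff {β : ℝ} (hβ : 0 < β) : DifferentiableOn ℂ (Wf β) {Q | 0 < Q.im} := by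
  unfold Wf
  refine DifferentiableOn.const_mul (DifferentiableOn.clog (by fun_prop) ?_) _
  intro Q hQ
  exact Or.inl (base_pos hβ hQ)

lemma Qf_Wf {β : ℝ} (hβ : 0 < β) {Q : ℂ} (hQ : 0 < Q.im) : Qf β (Wf β Q) = Q := by
  have h0 : (1 - 2 * Real.pi * Complex.I * Q / β : ℂ) ≠ 0 := by
    intro h; have := base_pos hβ hQ; rw [h] at this; simp at this
  have hb : (β:ℂ) ≠ 0 := by exact_mod_cast hβ.ne'
  have hp := cpi_ne
  have hI := Complex.I_ne_zero
  have e : (-(2 * Real.pi * Complex.I * (Complex.I * β / (2 * Real.pi) * Complex.log (1 - 2 * Real.pi * Complex.I * Q / β)) / β) : ℂ)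
      = Complex.log (1 - 2 * Real.pi * Complex.I * Q / β) := by
    field_simp
    rw [Complex.I_sq]; ring
  rw [Qf, Wf, e, Complex.exp_log h0]
  field_simp
  ring

lemma Wf_Qf {β : ℝ} (hβ : 0 < β) {W : ℂ} (hW : |W.re| < β / 2) : Wf β (Qf β W) = W := by
  have hb : (β:ℂ) ≠ 0 := by exact_mod_cast hβ.ne'
  have hp := cpi_ne
  have hI := Complex.I_ne_zero
  have e : (1 - 2 * Real.pi * Complex.I * Qf β W / β : ℂ) = Complex.exp (-(2 * Real.pi * Complex.I * W / β)) := by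
    rw [Qf]; field_simp; ring
  have him : (-(2 * Real.pi * Complex.I * W / β) : ℂ).im = -(2 * Real.pi / β * W.re) := by
    have : (-(2 * Real.pi * Complex.I * W / β) : ℂ) = -(((2 * Real.pi / β : ℝ) : ℂ) * (Complex.I * W)) := by
      push_cast; ring
    rw [this, Complex.neg_im, Complex.im_ofReal_mul, Complex.I_mul_im]
  have hlt : |2 * Real.pi / β * W.re| < Real.pi := by
    have hpi := Real.pi_pos
    rw [abs_mul, abs_of_pos (by positivity), div_mul_eq_mul_div, div_lt_iff₀ hβ]
    nlinarith
  rw [abs_lt] at hlt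
  rw [Wf, e, Complex.log_exp (by rw [him]; linarith) (by rw [him]; linarith)]
  field_simp
  rw [Complex.I_sq]; ring

lemma Wf_re {β : ℝ} {Q : ℂ} : (Wf β Q).re = -(β / (2 * Real.pi)) * (1 - 2 * Real.pi * Complex.I * Q / β : ℂ).arg := by
  have : Wf β Q = ((β / (2 * Real.pi) : ℝ) : ℂ) * (Complex.I * Complex.log (1 - 2 * Real.pi * Complex.I * Q / β)) := by
    rw [Wf]; push_cast; ring
  rw [this, Complex.re_ofReal_mul, Complex.I_mul_re, Complex.log_im]; ring

lemma Wf_im {β : ℝ} {Q : ℂ} : (Wf β Q).im = β / (2 * Real.pi) * Real.log ‖(1 - 2 * Real.pi * Complex.I * Q / β : ℂ)‖ := by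
  have : Wf β Q = ((β / (2 * Real.pi) : ℝ) : ℂ) * (Complex.I * Complex.log (1 - 2 * Real.pi * Complex.I * Q / β)) := by
    rw [Wf]; push_cast; ring
  rw [this, Complex.im_ofReal_mul, Complex.I_mul_im, Complex.log_re]

lemma Wf_re_lt {β : ℝ} (hβ : 0 < β) {Q : ℂ} (hQ : 0 < Q.im) : |(Wf β Q).re| < β / 4 := by
  have h := Complex.abs_arg_lt_pi_div_two_iff.2 (Or.inl (base_pos hβ hQ))
  have hpi := Real.pi_pos
  rw [Wf_re, abs_mul, abs_neg, abs_of_pos (by positivity)]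
  calc _ < β / (2 * Real.pi) * (Real.pi / 2) := by gcongr
    _ = β / 4 := by field_simp; ring

lemma Wf_exp {β : ℝ} (hβ : 3 ≤ β) {Q : ℂ} (hQ : Q ∈ Vc) :
    Real.exp (-(2 * Real.pi * (Wf β Q).im)) ≤ 1 / (1 + ‖Q‖)^3 := by
  have hpi := Real.pi_gt_three
  have hβ0 : 0 < β := by linarith
  have him := Vc_im hQ
  have hV : ‖Q‖ < 2 * Q.im := hQ
  have h0 := norm_nonneg Q
  have h1 : 1 + 2 * Real.pi * Q.im / β ≤ ‖(1 - 2 * Real.pi * Complex.I * Q / β : ℂ)‖ := by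
    rw [← base_re]; exact (le_abs_self _).trans (Complex.abs_re_le_norm _)
  have h2 : 0 < 2 * Real.pi * Q.im / β := by positivity
  have h3 := one_add_mul_self_le_rpow_one_add (s := 2 * Real.pi * Q.im / β) (by linarith) (p := β/3) (by linarith)
  have h4 : 1 + ‖Q‖ ≤ 1 + β / 3 * (2 * Real.pi * Q.im / β) := by
    have : β / 3 * (2 * Real.pi * Q.im / β) = 2 * Real.pi / 3 * Q.im := by field_simp
    rw [this]; nlinarith
  have h5 := Real.log_le_log (by linarith) (h4.trans h3)
  rw [Real.log_rpow (by linarith)] at h5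
  have h6 := Real.log_le_log (by linarith) h1
  have h7 : 3 * Real.log (1 + ‖Q‖) ≤ 2 * Real.pi * (Wf β Q).im := by
    rw [Wf_im]
    have : 2 * Real.pi * (β / (2 * Real.pi) * Real.log ‖(1 - 2 * Real.pi * Complex.I * Q / β : ℂ)‖) = β * Real.log ‖(1 - 2 * Real.pi * Complex.I * Q / β : ℂ)‖ := by
      field_simp
    rw [this]
    nlinarith
  calc _ ≤ Real.exp (-(3 * Real.log (1 + ‖Q‖))) := by gcongr
    _ = _ := by
      rw [Real.exp_neg, one_div]
      congr 1
      rw [show 3 * Real.log (1 + ‖Q‖) = ((3:ℕ):ℝ) * Real.log (1 + ‖Q‖) by norm_num, Real.exp_nat_mul, Real.exp_log (by linarith)]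

/-- admissible periodic perturbations -/
def GoodG (γ : ℂ → ℂ) : Prop :=
  DifferentiableOn ℂ γ {w | -1 < w.im} ∧ (∀ w, γ (w + 1) = γ w) ∧
    ∀ w : ℂ, -1 < w.im → ‖γ w‖ ≤ (1/1000000) * Real.exp (-(2 * Real.pi * w.im))

/-- approximate Fatou coordinate -/
noncomputable def w0f (β : ℝ) (Q : ℂ) : ℂ := Wf β Q - 1 / Q

lemma inv_im' {Q : ℂ} : (1 / Q).im = - (Q.im / ‖Q‖^2) := by
  rw [one_div, Complex.inv_im, Complex.normSq_eq_norm_sq]; ring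

lemma w0f_exp {β : ℝ} (hβ : 3 ≤ β) {Q : ℂ} (hQ : Q ∈ Vc) :
    Real.exp (-(2 * Real.pi * (w0f β Q).im)) ≤ ‖Q‖ / (1 + ‖Q‖)^3 ∧ 0 < (w0f β Q).im := by
  have hpi := Real.pi_gt_three
  have h1 := Wf_exp hβ hQ
  have hV : ‖Q‖ < 2 * Q.im := hQ
  have h0 := norm_pos_iff.2 (Vc_ne hQ)
  have e : (w0f β Q).im = (Wf β Q).im + Q.im / ‖Q‖^2 := by
    rw [w0f, Complex.sub_im, inv_im']; ring
  have h2 : 1 / (2 * ‖Q‖) ≤ Q.im / ‖Q‖^2 := by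
    rw [div_le_div_iff₀ (by positivity) (by positivity)]; nlinarith
  constructor
  · rw [e, mul_add, neg_add, Real.exp_add]
    have h3 : Real.exp (-(2 * Real.pi * (Q.im / ‖Q‖^2))) ≤ ‖Q‖ := by
      rw [Real.exp_neg]
      rw [inv_le_comm₀ (Real.exp_pos _) h0]
      have h4 := Real.add_one_le_exp (2 * Real.pi * (Q.im / ‖Q‖^2))
      have h5 : ‖Q‖⁻¹ ≤ 2 * Real.pi * (1 / (2 * ‖Q‖)) := by
        rw [show 2 * Real.pi * (1 / (2 * ‖Q‖)) = Real.pi * ‖Q‖⁻¹ by field_simp]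
        have : 0 < ‖Q‖⁻¹ := by positivity
        nlinarith
      have h6 : 2 * Real.pi * (1 / (2 * ‖Q‖)) ≤ 2 * Real.pi * (Q.im / ‖Q‖^2) := by gcongr
      linarith
    calc _ ≤ 1 / (1 + ‖Q‖)^3 * ‖Q‖ := by gcongr
      _ = _ := by ring
  · rw [e]
    have h3 : 0 ≤ (Wf β Q).im := by
      rw [Wf_im]
      have h4 : 1 ≤ ‖(1 - 2 * Real.pi * Complex.I * Q / β : ℂ)‖ := by
        refine le_trans ?_ ((le_abs_self _).trans (Complex.abs_re_le_norm _))
        rw [base_re]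
        have := Vc_im hQ
        have : 0 ≤ 2 * Real.pi * Q.im / β := by positivity
        linarith
      have := Real.log_nonneg h4
      positivity
    have : 0 < 1 / (2 * ‖Q‖) := by positivity
    linarith

lemma exp_two : Real.exp (2 * Real.pi * (1/5)) ≤ 4 := by
  have h1 := Real.pi_lt_d2
  have h2 : Real.exp (2 * Real.pi * (1/5)) ≤ Real.exp (2 * Real.log 2) := by
    apply Real.exp_le_exp.2
    have := Real.log_two_gt_d9
    linarith
  rw [show 2 * Real.log 2 = ((2:ℕ):ℝ) * Real.log 2 by norm_num, Real.exp_nat_mul, Real.exp_log (by norm_num)] at h2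
  linarith

lemma gam_bd {γ : ℂ → ℂ} (hγ : GoodG γ) {β : ℝ} (hβ : 3 ≤ β) {Q : ℂ} (hQ : Q ∈ Vc) {u : ℂ} (hu : ‖u‖ ≤ 1/5) :
    ‖γ (w0f β Q + u)‖ ≤ (1/250000) * (‖Q‖ / (1 + ‖Q‖)^3) := by
  have hpi := Real.pi_pos
  obtain ⟨h1, h2⟩ := w0f_exp hβ hQ
  have h3 := (neg_abs_le _).trans' (neg_le_neg ((Complex.abs_im_le_norm u).trans hu))
  have h4 := hγ.2.2 (w0f β Q + u) (by rw [Complex.add_im]; linarith)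
  refine h4.trans ?_
  rw [Complex.add_im, mul_add, neg_add, Real.exp_add]
  have h5 : Real.exp (-(2 * Real.pi * u.im)) ≤ 4 := by
    refine le_trans ?_ exp_two
    apply Real.exp_le_exp.2
    nlinarith
  calc _ ≤ 1/1000000 * ((‖Q‖ / (1 + ‖Q‖)^3) * 4) := by gcongr
    _ = _ := by ring

lemma gam_lip {γ : ℂ → ℂ} (hγ : GoodG γ) {β : ℝ} (hβ : 3 ≤ β) {Q : ℂ} (hQ : Q ∈ Vc) {u v : ℂ}
    (hu : ‖u‖ ≤ 1/10) (hv : ‖v‖ ≤ 1/10) :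
    ‖γ (w0f β Q + u) - γ (w0f β Q + v)‖ ≤ (1/1000) * (‖Q‖ / (1 + ‖Q‖)^3) * ‖u - v‖ := by
  obtain ⟨h1, h2⟩ := w0f_exp hβ hQ
  have := lip_of_bound (f := fun z => γ (w0f β Q + z)) (R := 1/10) (d := 1/10) (M := (1/250000) * (‖Q‖ / (1 + ‖Q‖)^3))
    (by norm_num) (by
      refine hγ.1.comp (by fun_prop) ?_
      intro z hz
      rw [mem_ball_zero_iff] at hz
      change -1 < (w0f β Q + z).im
      rw [Complex.add_im]
      have := (abs_le.1 (Complex.abs_im_le_norm z)).1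
      linarith) (fun z hz => gam_bd hγ hβ hQ (by linarith)) hu hv
  refine this.trans ?_
  have h0 := norm_nonneg Q
  gcongr
  rw [div_le_iff₀ (by norm_num)]
  have : 0 ≤ ‖Q‖ / (1 + ‖Q‖)^3 := by positivity
  linarith

theorem gamma_cousin {γ : ℂ → ℂ} (hγ : GoodG γ) {β : ℝ} (hβ : 3 ≤ β) :
    ∃ φ Θ : ℂ → ℂ, DifferentiableOn ℂ φ Vc ∧ DifferentiableOn ℂ Θ Rz ∧
      (∀ Q ∈ Vc, ‖φ Q‖ ≤ 1/100 ∧ ‖φ Q‖ * ‖Q‖ ≤ 1/100) ∧ (∀ Q, ‖Θ Q‖ ≤ 1/100 ∧ ‖Θ Q‖ * ‖Q‖ ≤ 1/100) ∧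
      (∀ Q ∈ Vc, Q.re ≤ 0 → Θ Q = φ Q) ∧ (∀ Q ∈ Vc, 0 < Q.re → Θ Q = φ Q + γ (w0f β Q + φ Q)) := by
  have hw : DifferentiableOn ℂ (w0f β) Vc := by
    refine ((Wf_diff (by linarith)).mono fun Q hQ => Vc_im hQ).sub ?_
    exact DifferentiableOn.div (by fun_prop) (by fun_prop) fun Q hQ => Vc_ne hQ
  have hΓ : ∀ φ, AC φ → Dec (1/1000) (fun Q => -γ (w0f β Q + φ Q)) := by
    intro φ hφ
    refine ⟨by norm_num, ?_, ?_⟩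
    · refine DifferentiableOn.neg (hγ.1.comp (hw.add hφ.1) ?_)
      intro Q hQ
      change -1 < (w0f β Q + φ Q).im
      rw [Complex.add_im]
      have h1 := (w0f_exp hβ hQ).2
      have h2 := (abs_le.1 ((Complex.abs_im_le_norm (φ Q)).trans (hφ.2 Q hQ))).1
      linarith
    · intro Q hQ
      rw [norm_neg]
      refine (gam_bd hγ hβ hQ ((hφ.2 Q hQ).trans (by norm_num))).trans ?_
      have := norm_nonneg Q
      gcongr
      norm_num
  obtain ⟨φ, hA, hfix⟩ := cousin (Γ := fun Q u => -γ (w0f β Q + u)) (M := 1/1000) (by norm_num) hΓ (by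
    intro Q hQ u v hu hv
    rw [neg_sub_neg, norm_sub_rev]
    exact gam_lip hγ hβ hQ hu hv)
  have hd := hΓ φ hA
  refine ⟨φ, thC (fun Q => -γ (w0f β Q + φ Q)), hA.1, thC_diff hd, ?_, ?_, ?_, ?_⟩
  · intro Q hQ
    have := phC_bound hd hQ
    rw [← hfix Q hQ] at this
    exact ⟨by linarith, by linarith⟩
  · intro Q
    have := thC_bound hd Q
    exact ⟨by linarith, by linarith⟩
  · intro Q hQ h
    rw [thC_eq_left h, ← hfix Q hQ]
  · intro Q hQ h
    rw [thC_eq_right h, ← hfix Q hQ]; ring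

/-- the second fixed point in the coordinate `Q` -/
noncomputable def Qs (β : ℝ) : ℂ := β / (2 * Real.pi * Complex.I)

/-- the flow map for time `1+d` -/
noncomputable def Fd (β : ℝ) (d Q : ℂ) : ℂ :=
  Qs β + (Q - Qs β) * Complex.exp (-(2 * Real.pi * Complex.I * (1 + d) / β))

lemma norm_Qs {β : ℝ} (hβ : 0 < β) : ‖Qs β‖ = β / (2 * Real.pi) := by
  have := Real.pi_pos
  rw [Qs]
  simp [abs_of_pos this, abs_of_pos hβ]

lemma Qf_eq (β : ℝ) (W : ℂ) : Qf β W = Qs β - Qs β * Complex.exp (-(2 * Real.pi * Complex.I * W / β)) := by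
  rw [Qf, Qs]; ring

lemma Fd_Qf (β : ℝ) (d W : ℂ) : Fd β d (Qf β W) = Qf β (W + 1 + d) := by
  rw [Fd, Qf_eq, Qf_eq]
  have : (-(2 * Real.pi * Complex.I * (W + 1 + d) / β) : ℂ)
    = -(2 * Real.pi * Complex.I * W / β) + -(2 * Real.pi * Complex.I * (1 + d) / β) := by ring
  rw [this, Complex.exp_add]; ring

lemma norm_tpi {β : ℝ} (hβ : 0 < β) (x : ℂ) : ‖(-(2 * Real.pi * Complex.I * x / β) : ℂ)‖ = 2 * Real.pi / β * ‖x‖ := by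
  have := Real.pi_pos
  simp [abs_of_pos this, abs_of_pos hβ]; ring

lemma QQs {β : ℝ} (hβ : 1000000 ≤ β) {Q : ℂ} (hQ : 100 ≤ ‖Q‖) :
    ‖Q - Qs β‖ * (2 * Real.pi / β) ≤ ‖Q‖ / 98 := by
  have h1 := norm_sub_le Q (Qs β)
  have hb : 0 < β := by linarith
  rw [norm_Qs hb] at h1
  have hp := Real.pi_pos
  have hp4 := Real.pi_lt_four
  calc _ ≤ (‖Q‖ + β / (2 * Real.pi)) * (2 * Real.pi / β) := by gcongr
    _ = ‖Q‖ * (2 * Real.pi / β) + 1 := by field_simp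
    _ ≤ ‖Q‖ * (1/100000) + ‖Q‖/100 := by
      have h3 : 2 * Real.pi / β ≤ 1/100000 := by
        rw [div_le_div_iff₀ hb (by norm_num)]; nlinarith
      have := mul_le_mul_of_nonneg_left h3 (norm_nonneg Q)
      linarith
    _ ≤ _ := by linarith

lemma Fd_sub {β : ℝ} (hβ : 1000000 ≤ β) {Q : ℂ} (hQ : 100 ≤ ‖Q‖) {d : ℂ} (hd : ‖d‖ ≤ 1/10) :
    ‖Fd β d Q - Q‖ ≤ ‖Q‖ / 40 := by
  have hb : 0 < β := by linarith
  have hp := Real.pi_pos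
  have hp4 := Real.pi_lt_four
  have e : Fd β d Q - Q = (Q - Qs β) * (Complex.exp (-(2 * Real.pi * Complex.I * (1 + d) / β)) - 1) := by
    rw [Fd]; ring
  have hn := norm_tpi hb (1 + d)
  have h1 : ‖(1 + d : ℂ)‖ ≤ 11/10 := (norm_add_le _ _).trans (by rw [norm_one]; linarith)
  have h3 : 2 * Real.pi / β ≤ 1/100 := by
    rw [div_le_div_iff₀ hb (by norm_num)]; nlinarith
  have h2 : ‖(-(2 * Real.pi * Complex.I * (1 + d) / β) : ℂ)‖ ≤ 1 := by
    rw [hn]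
    calc _ ≤ (1/100 * (11/10) : ℝ) := by gcongr
      _ ≤ 1 := by norm_num
  have h4 := Complex.norm_exp_sub_one_le h2
  rw [e, norm_mul]
  have h5 := QQs hβ hQ
  have h0 := norm_nonneg (Q - Qs β)
  calc _ ≤ ‖Q - Qs β‖ * (2 * (2 * Real.pi / β * (11/10))) := by
        gcongr
        exact h4.trans (by rw [hn]; gcongr)
    _ = 11/5 * (‖Q - Qs β‖ * (2 * Real.pi / β)) := by ring
    _ ≤ 11/5 * (‖Q‖ / 98) := by gcongr
    _ ≤ _ := by linarith

lemma Fd_lip {β : ℝ} (hβ : 1000000 ≤ β) {Q : ℂ} (hQ : 100 ≤ ‖Q‖) {d d' : ℂ} (hd : ‖d‖ ≤ 1/10) (hd' : ‖d'‖ ≤ 1/10) :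
    ‖Fd β d Q - Fd β d' Q‖ ≤ ‖Q‖ / 20 * ‖d - d'‖ := by
  have hb : 0 < β := by linarith
  have hp := Real.pi_pos
  have hp4 := Real.pi_lt_four
  have e : Fd β d Q - Fd β d' Q = (Q - Qs β) * (Complex.exp (-(2 * Real.pi * Complex.I * (1 + d') / β)) *
      (Complex.exp (-(2 * Real.pi * Complex.I * (d - d') / β)) - 1)) := by
    rw [Fd, Fd, mul_sub, ← Complex.exp_add]
    rw [show (-(2 * Real.pi * Complex.I * (1 + d') / β) + -(2 * Real.pi * Complex.I * (d - d') / β) : ℂ)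
      = -(2 * Real.pi * Complex.I * (1 + d) / β) by ring]
    ring
  have h3 : 2 * Real.pi / β ≤ 1/100 := by
    rw [div_le_div_iff₀ hb (by norm_num)]; nlinarith
  have hdd : ‖d - d'‖ ≤ 1 := (norm_sub_le _ _).trans (by linarith)
  have hn := norm_tpi hb (d - d')
  have h2 : ‖(-(2 * Real.pi * Complex.I * (d - d') / β) : ℂ)‖ ≤ 1 := by
    rw [hn]
    calc _ ≤ 1/100 * 1 := by gcongr
      _ ≤ (1:ℝ) := by norm_num
  have h4 := Complex.norm_exp_sub_one_le h2
  have h6 : ‖Complex.exp (-(2 * Real.pi * Complex.I * (1 + d') / β))‖ ≤ 2 := by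
    have hn := norm_tpi hb (1 + d')
    have h1 : ‖(1 + d' : ℂ)‖ ≤ 11/10 := (norm_add_le _ _).trans (by rw [norm_one]; linarith)
    have h2 : ‖(-(2 * Real.pi * Complex.I * (1 + d') / β) : ℂ)‖ ≤ 11/1000 := by
      rw [hn]
      calc _ ≤ (1/100 * (11/10) : ℝ) := by gcongr
        _ ≤ _ := by norm_num
    have h4 := Complex.norm_exp_sub_one_le (h2.trans (by norm_num))
    have := norm_le_norm_sub_add (Complex.exp (-(2 * Real.pi * Complex.I * (1 + d') / β))) 1
    rw [norm_one] at this
    linarith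
  rw [e, norm_mul, norm_mul]
  have h5 := QQs hβ hQ
  have h0 := norm_nonneg (Q - Qs β)
  calc _ ≤ ‖Q - Qs β‖ * (2 * (2 * (2 * Real.pi / β * ‖d - d'‖))) := by
        gcongr
        exact h4.trans (by rw [hn])
    _ = 4 * (‖Q - Qs β‖ * (2 * Real.pi / β)) * ‖d - d'‖ := by ring
    _ ≤ 4 * (‖Q‖ / 98) * ‖d - d'‖ := by gcongr
    _ ≤ _ := by
      have := norm_nonneg (d - d')
      have := norm_nonneg Q
      gcongr
      linarith

/-- chart condition -/
def Chart (U : Set ℂ) (ψ : ℂ → ℂ) : Prop :=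
  ∀ Q ∈ U, 100 < ‖Q‖ ∧ DifferentiableOn ℂ ψ (Metric.ball Q (‖Q‖/20)) ∧ ∀ z ∈ Metric.ball Q (‖Q‖/20), ‖ψ z‖ * ‖z‖ ≤ 2

lemma chart_lip {U : Set ℂ} {ψ : ℂ → ℂ} (hψ : Chart U ψ) {Q : ℂ} (hQ : Q ∈ U) {x y : ℂ}
    (hx : ‖x - Q‖ ≤ ‖Q‖/40) (hy : ‖y - Q‖ ≤ ‖Q‖/40) : ‖ψ x - ψ y‖ ≤ 176/‖Q‖^2 * ‖x - y‖ := by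
  obtain ⟨h1, h2, h3⟩ := hψ Q hQ
  have h0 : 0 < ‖Q‖ := by linarith
  have := lip_of_bound (f := fun t => ψ (Q + t)) (R := ‖Q‖/40) (d := ‖Q‖/80) (M := (11/5)/‖Q‖) (by positivity)
    (by
      refine h2.comp (by fun_prop) ?_
      intro t ht
      rw [mem_ball_zero_iff] at ht
      simp only [Metric.mem_ball, dist_eq_norm, add_sub_cancel_left]
      linarith)
    (by
      intro t ht
      have := h3 (Q + t) (by simp only [Metric.mem_ball, dist_eq_norm, add_sub_cancel_left]; linarith)
      have hn : 19/20 * ‖Q‖ ≤ ‖Q + t‖ := by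
        have := norm_sub_norm_le Q (-t)
        rw [sub_neg_eq_add, norm_neg] at this
        linarith
      have h4 := norm_nonneg (ψ (Q + t))
      show ‖ψ (Q + t)‖ ≤ _
      rw [le_div_iff₀ h0]
      nlinarith)
    hx hy
  simp only [add_sub_cancel, sub_sub_sub_cancel_right] at this
  refine this.trans (le_of_eq ?_)
  field_simp
  ring

lemma chart_contr {U : Set ℂ} {ψ : ℂ → ℂ} (hψ : Chart U ψ) {β : ℝ} (hβ : 1000000 ≤ β) {Q : ℂ} (hQ : Q ∈ U)
    {d d' : ℂ} (hd : ‖d‖ ≤ 1/10) (hd' : ‖d'‖ ≤ 1/10) :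
    ‖(ψ Q - ψ (Fd β d Q)) - (ψ Q - ψ (Fd β d' Q))‖ ≤ 1/2 * ‖d - d'‖ := by
  have h1 := (hψ Q hQ).1
  have h0 : 0 < ‖Q‖ := by linarith
  rw [show (ψ Q - ψ (Fd β d Q)) - (ψ Q - ψ (Fd β d' Q)) = ψ (Fd β d' Q) - ψ (Fd β d Q) by ring]
  have h2 := chart_lip hψ hQ (Fd_sub hβ h1.le hd') (Fd_sub hβ h1.le hd)
  have h3 := Fd_lip hβ h1.le hd' hd
  rw [norm_sub_rev d']  at h3
  have := norm_nonneg (d - d')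
  calc _ ≤ 176/‖Q‖^2 * (‖Q‖ / 20 * ‖d - d'‖) := h2.trans (by gcongr)
    _ = (44/5) / ‖Q‖ * ‖d - d'‖ := by field_simp; ring
    _ ≤ _ := by
      have h4 : (44/5) / ‖Q‖ ≤ 1/2 := by
        rw [div_le_div_iff₀ h0 (by norm_num)]; linarith
      gcongr

lemma chart_uniq {U : Set ℂ} {ψ : ℂ → ℂ} (hψ : Chart U ψ) {β : ℝ} (hβ : 1000000 ≤ β) {Q : ℂ} (hQ : Q ∈ U)
    {d d' : ℂ} (hd : ‖d‖ ≤ 1/10) (hd' : ‖d'‖ ≤ 1/10) (e : ψ Q - ψ (Fd β d Q) = d) (e' : ψ Q - ψ (Fd β d' Q) = d') : d = d' := by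
  have := chart_contr hψ hβ hQ hd hd'
  rw [e, e'] at this
  have h := norm_nonneg (d - d')
  have : ‖d - d'‖ = 0 := by linarith
  rwa [norm_eq_zero, sub_eq_zero] at this

lemma chart_bd {U : Set ℂ} {ψ : ℂ → ℂ} (hψ : Chart U ψ) {β : ℝ} (hβ : 1000000 ≤ β) {Q : ℂ} (hQ : Q ∈ U)
    {d : ℂ} (hd : ‖d‖ ≤ 1/10) : ‖ψ Q - ψ (Fd β d Q)‖ ≤ 5 / ‖Q‖ := by
  obtain ⟨h1, -, h3⟩ := hψ Q hQ
  have h0 : 0 < ‖Q‖ := by linarith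
  have hs := Fd_sub hβ h1.le hd
  have ha := h3 Q (Metric.mem_ball_self (by positivity))
  have hb := h3 (Fd β d Q) (by rw [Metric.mem_ball, dist_eq_norm]; linarith)
  have hn : 39/40 * ‖Q‖ ≤ ‖Fd β d Q‖ := by
    have := norm_sub_norm_le Q (Fd β d Q)
    rw [norm_sub_rev] at this
    linarith
  have := norm_nonneg (ψ (Fd β d Q))
  rw [le_div_iff₀ h0]
  have := norm_sub_le (ψ Q) (ψ (Fd β d Q))
  nlinarith

lemma chart_sol {U : Set ℂ} (hU : IsOpen U) {ψ : ℂ → ℂ} (hψ : Chart U ψ) {β : ℝ} (hβ : 1000000 ≤ β) :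
    ∃ δ : ℂ → ℂ, DifferentiableOn ℂ δ U ∧ ∀ Q ∈ U, ‖δ Q‖ ≤ 5/‖Q‖ ∧ ‖δ Q‖ ≤ 1/10 ∧ ψ Q - ψ (Fd β (δ Q) Q) = δ Q := by
  obtain ⟨δ, h1, h2⟩ := hol_fixed_point hU (h := fun Q d => ψ Q - ψ (Fd β d Q)) (r := 1/10) (by norm_num)
    (by
      intro Q hQ d hd
      refine (chart_bd hψ hβ hQ hd).trans ?_
      have := (hψ Q hQ).1
      rw [div_le_div_iff₀ (by linarith) (by norm_num)]; linarith)
    (by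
      intro Q hQ d d' hd hd'
      exact chart_contr hψ hβ hQ hd hd')
    (by
      intro y hy hyb Q hQ
      obtain ⟨g1, g2, g3⟩ := hψ Q hQ
      have g0 : 0 < ‖Q‖ := by linarith
      have hy' := hy.differentiableAt (hU.mem_nhds hQ)
      have hF : DifferentiableAt ℂ (fun Q => Fd β (y Q) Q) Q := by
        unfold Fd; fun_prop
      have hψ1 : DifferentiableAt ℂ ψ Q := g2.differentiableAt (Metric.ball_mem_nhds _ (by positivity))
      have hψ2 : DifferentiableAt ℂ ψ (Fd β (y Q) Q) := g2.differentiableAt (Metric.isOpen_ball.mem_nhds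
        (by rw [Metric.mem_ball, dist_eq_norm]; have := Fd_sub hβ g1.le (hyb Q hQ); linarith))
      exact (hψ1.sub (DifferentiableAt.comp Q (g := ψ) (f := fun Q => Fd β (y Q) Q) hψ2 hF)).differentiableWithinAt)
  refine ⟨δ, h1, fun Q hQ => ?_⟩
  obtain ⟨h3, h4⟩ := h2 Q hQ
  refine ⟨?_, h3, h4⟩
  have := chart_bd hψ hβ hQ h3
  rwa [h4] at this

lemma ball_im {Q z : ℂ} {r : ℝ} (h : ‖z - Q‖ < r) : |z.im - Q.im| < r ∧ |z.re - Q.re| < r ∧ |‖z‖ - ‖Q‖| < r := by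
  refine ⟨?_, ?_, (abs_norm_sub_norm_le z Q).trans_lt h⟩
  · rw [← Complex.sub_im]; exact (Complex.abs_im_le_norm _).trans_lt h
  · rw [← Complex.sub_re]; exact (Complex.abs_re_le_norm _).trans_lt h

lemma ball_Vc {Q z : ℂ} (h1 : 100 < ‖Q‖) (h : (69/100) * ‖Q‖ < Q.im) (hz : ‖z - Q‖ < ‖Q‖/20) : z ∈ Vc := by
  obtain ⟨a, b, c⟩ := ball_im hz
  rw [abs_lt] at a c
  change ‖z‖ < 2 * z.im
  linarith

lemma ball_Rz {Q z : ℂ} (_ : 100 < ‖Q‖) (h : Q.im < (71/100) * ‖Q‖) (hz : ‖z - Q‖ < ‖Q‖/20) : z ∈ Rz := by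
  obtain ⟨a, b, c⟩ := ball_im hz
  rw [abs_lt] at a c
  change z.im < (4/5) * ‖z‖
  linarith

lemma psi_bd {x z : ℂ} (hz : z ≠ 0) (h : ‖x‖ * ‖z‖ ≤ 1/100) : ‖x - 1/z‖ * ‖z‖ ≤ 2 := by
  have h0 := norm_pos_iff.2 hz
  have h1 := norm_sub_le x (1/z)
  have h2 : ‖1/z‖ * ‖z‖ = 1 := by rw [← norm_mul, one_div_mul_cancel hz, norm_one]
  nlinarith

lemma delta_exists {β : ℝ} (hβ : 1000000 ≤ β) {γ φ Θ : ℂ → ℂ} (hper : ∀ w, γ (w + 1) = γ w)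
    (hφ : DifferentiableOn ℂ φ Vc) (hΘ : DifferentiableOn ℂ Θ Rz)
    (hφb : ∀ Q ∈ Vc, ‖φ Q‖ * ‖Q‖ ≤ 1/100) (hΘb : ∀ Q, ‖Θ Q‖ * ‖Q‖ ≤ 1/100)
    (hl : ∀ Q ∈ Vc, Q.re ≤ 0 → Θ Q = φ Q) (hr : ∀ Q ∈ Vc, 0 < Q.re → Θ Q = φ Q + γ (w0f β Q + φ Q)) :
    ∃ δ : ℂ → ℂ, DifferentiableOn ℂ δ {Q | 100 < ‖Q‖} ∧ ∀ Q, 100 < ‖Q‖ → ‖δ Q‖ ≤ 5/‖Q‖ ∧ ‖δ Q‖ ≤ 1/10 ∧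
      (Q.im < (7/10) * ‖Q‖ → δ Q = (Θ Q - 1/Q) - (Θ (Fd β (δ Q) Q) - 1 / Fd β (δ Q) Q)) ∧
      ((7/10) * ‖Q‖ ≤ Q.im → δ Q = (φ Q - 1/Q) - (φ (Fd β (δ Q) Q) - 1 / Fd β (δ Q) Q)) := by
  set U1 : Set ℂ := {Q | 100 < ‖Q‖ ∧ (69/100) * ‖Q‖ < Q.im} with hU1
  set U0 : Set ℂ := {Q | 100 < ‖Q‖ ∧ Q.im < (71/100) * ‖Q‖} with hU0
  have o1 : IsOpen {Q : ℂ | 100 < ‖Q‖} := isOpen_lt (by fun_prop) (by fun_prop)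
  have o2 : IsOpen {Q : ℂ | (69/100) * ‖Q‖ < Q.im} := isOpen_lt (by fun_prop) (by fun_prop)
  have o3 : IsOpen {Q : ℂ | Q.im < (71/100) * ‖Q‖} := isOpen_lt (by fun_prop) (by fun_prop)
  have oU1 : IsOpen U1 := o1.inter o2
  have oU0 : IsOpen U0 := o1.inter o3
  have c1 : Chart U1 (fun Q => φ Q - 1/Q) := by
    intro Q hQ
    have hV : ∀ z ∈ Metric.ball Q (‖Q‖/20), z ∈ Vc := fun z hz => by
      rw [Metric.mem_ball, dist_eq_norm] at hz
      exact ball_Vc hQ.1 hQ.2 hz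
    refine ⟨hQ.1, ?_, fun z hz => psi_bd (Vc_ne (hV z hz)) (hφb z (hV z hz))⟩
    refine (hφ.mono hV).sub (DifferentiableOn.div (by fun_prop) (by fun_prop) fun z hz => Vc_ne (hV z hz))
  have c0 : Chart U0 (fun Q => Θ Q - 1/Q) := by
    intro Q hQ
    have hV : ∀ z ∈ Metric.ball Q (‖Q‖/20), z ∈ Rz := fun z hz => by
      rw [Metric.mem_ball, dist_eq_norm] at hz
      exact ball_Rz hQ.1 hQ.2 hz
    refine ⟨hQ.1, ?_, fun z hz => psi_bd (Rz_ne (hV z hz)) (hΘb z)⟩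
    refine (hΘ.mono hV).sub (DifferentiableOn.div (by fun_prop) (by fun_prop) fun z hz => Rz_ne (hV z hz))
  obtain ⟨d1, hd1, h1⟩ := chart_sol oU1 c1 hβ
  obtain ⟨d0, hd0, h0⟩ := chart_sol oU0 c0 hβ
  have agree : ∀ Q ∈ U1, Q ∈ U0 → d1 Q = d0 Q := by
    intro Q hQ1 hQ0
    obtain ⟨-, b1, e1⟩ := h1 Q hQ1
    obtain ⟨-, b0, e0⟩ := h0 Q hQ0
    refine chart_uniq c0 hβ hQ0 b1 b0 ?_ e0
    have hs := Fd_sub hβ hQ1.1.le b1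
    have hpos : 100 < ‖Q‖ := hQ1.1
    have hs' : ‖Fd β (d1 Q) Q - Q‖ < ‖Q‖/20 := by linarith
    have hVQ : Q ∈ Vc := ball_Vc hQ1.1 hQ1.2 (by rw [sub_self, norm_zero]; linarith)
    have hVF : Fd β (d1 Q) Q ∈ Vc := ball_Vc hQ1.1 hQ1.2 hs'
    obtain ⟨-, hre, -⟩ := ball_im hs'
    have hQre : ‖Q‖/20 < |Q.re| := by
      have : ‖Q‖^2 = Q.re^2 + Q.im^2 := by
        rw [← Complex.normSq_eq_norm_sq, Complex.normSq_apply]; ring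
      have h71 : Q.im < (71/100) * ‖Q‖ := hQ0.2
      have h69 : (69/100) * ‖Q‖ < Q.im := hQ1.2
      apply lt_of_pow_lt_pow_left₀ 2 (abs_nonneg _)
      rw [sq_abs]
      nlinarith
    rcases le_or_gt Q.re 0 with hre0 | hre0
    · rw [abs_of_nonpos hre0] at hQre
      rw [abs_lt] at hre
      have : (Fd β (d1 Q) Q).re ≤ 0 := by linarith
      simp only [hl Q hVQ hre0, hl _ hVF this]
      exact e1
    · rw [abs_of_pos hre0] at hQre
      rw [abs_lt] at hre
      have : 0 < (Fd β (d1 Q) Q).re := by linarith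
      simp only [hr Q hVQ hre0, hr _ hVF this]
      have hβ0 : 0 < β := by linarith
      have hW : Wf β (Fd β (d1 Q) Q) = Wf β Q + 1 + d1 Q := by
        conv_lhs => rw [← Qf_Wf hβ0 (Vc_im hVQ), Fd_Qf]
        have e2 : Qf β (Wf β Q) = Q := Qf_Wf hβ0 (Vc_im hVQ)
        rw [e2]
        apply Wf_Qf hβ0
        have a1 := Wf_re_lt hβ0 (Vc_im hVQ)
        have a2 := (Complex.abs_re_le_norm (d1 Q)).trans b1
        rw [abs_lt] at a1 ⊢
        rw [abs_le] at a2
        simp only [Complex.add_re, Complex.one_re]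
        constructor <;> linarith
      have : w0f β (Fd β (d1 Q) Q) + φ (Fd β (d1 Q) Q) = w0f β Q + φ Q + 1 := by
        rw [w0f, w0f, hW]
        have e1' : φ Q - 1/Q - (φ (Fd β (d1 Q) Q) - 1/Fd β (d1 Q) Q) = d1 Q := e1
        linear_combination -e1'
      rw [this, hper]
      have e1' : φ Q - 1/Q - (φ (Fd β (d1 Q) Q) - 1/Fd β (d1 Q) Q) = d1 Q := e1
      linear_combination e1'
  classical
  refine ⟨fun Q => if (7/10) * ‖Q‖ ≤ Q.im then d1 Q else d0 Q, ?_, ?_⟩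
  · intro Q hQ
    change 100 < ‖Q‖ at hQ
    apply DifferentiableAt.differentiableWithinAt
    by_cases hc : (69/100) * ‖Q‖ < Q.im
    · have hQ1 : Q ∈ U1 := ⟨hQ, hc⟩
      refine (hd1.differentiableAt (oU1.mem_nhds hQ1)).congr_of_eventuallyEq ?_
      filter_upwards [oU1.mem_nhds hQ1] with z hz
      split_ifs with h
      · rfl
      · exact (agree z hz ⟨hz.1, by have := hz.1; change z.im < _; push Not at h; linarith⟩).symm
    · have hQ0 : Q ∈ U0 := ⟨hQ, by push Not at hc; linarith⟩
      refine (hd0.differentiableAt (oU0.mem_nhds hQ0)).congr_of_eventuallyEq ?_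
      filter_upwards [oU0.mem_nhds hQ0] with z hz
      split_ifs with h
      · exact agree z ⟨hz.1, by have := hz.1; linarith⟩ hz
      · rfl
  · intro Q hQ
    by_cases hc : (7/10) * ‖Q‖ ≤ Q.im
    · obtain ⟨a, b, e⟩ := h1 Q ⟨hQ, by linarith⟩
      simp only [if_pos hc]
      exact ⟨a, b, fun h => absurd hc (not_le.2 h), fun _ => e.symm⟩
    · push Not at hc
      obtain ⟨a, b, e⟩ := h0 Q ⟨hQ, by linarith⟩
      simp only [if_neg (not_le.2 hc)]
      exact ⟨a, b, fun _ => e.symm, fun h => absurd hc (not_lt.2 h)⟩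

lemma lam_inv_exp {β : ℝ} : lam (1/β) * Complex.exp (-(2 * Real.pi * Complex.I / β)) = 1 := by
  rw [lam, ← Complex.exp_add]
  push_cast
  rw [show (2 * Real.pi * Complex.I * (1/β) + -(2 * Real.pi * Complex.I / β) : ℂ) = 0 by ring, Complex.exp_zero]

/-- the map in the coordinate near zero -/
noncomputable def fdel (β : ℝ) (δ : ℂ → ℂ) (z : ℂ) : ℂ :=
  if z = 0 then 0 else 100 / Fd β (δ (100/z)) (100/z)

lemma SC_of_delta {β : ℝ} (hβ : 1000000 ≤ β) {δ : ℂ → ℂ} (hd : DifferentiableOn ℂ δ {Q | 100 < ‖Q‖})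
    (hb : ∀ Q, 100 < ‖Q‖ → ‖δ Q‖ ≤ 5/‖Q‖) : fdel β δ ∈ SC (1/β) := by
  have hβ0 : 0 < β := by linarith
  have hp := Real.pi_pos
  have hp4 := Real.pi_lt_four
  have hb' : ∀ Q, 100 < ‖Q‖ → ‖δ Q‖ ≤ 1/10 := fun Q hQ => (hb Q hQ).trans (by
    rw [div_le_div_iff₀ (by linarith) (by norm_num)]; linarith)
  have hF0 : ∀ Q, 100 < ‖Q‖ → 39/40 * ‖Q‖ ≤ ‖Fd β (δ Q) Q‖ := fun Q hQ => by
    have h1 := Fd_sub hβ hQ.le (hb' Q hQ)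
    have := norm_sub_norm_le Q (Fd β (δ Q) Q)
    rw [norm_sub_rev] at this
    linarith
  have hz : ∀ z : ℂ, z ≠ 0 → z ∈ Metric.ball (0:ℂ) 1 → 100 < ‖100/z‖ := fun z hz h => by
    rw [mem_ball_zero_iff] at h
    have := norm_pos_iff.2 hz
    rw [norm_div, lt_div_iff₀ this]
    norm_num
    linarith
  have key : ∀ Q, 100 < ‖Q‖ → ‖Q - lam (1/β) * Fd β (δ Q) Q‖ ≤ 4 := by
    intro Q hQ
    have e : Q - lam (1/β) * Fd β (δ Q) Q = Qs β * (1 - lam (1/β)) +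
        (Q - Qs β) * (1 - Complex.exp (-(2 * Real.pi * Complex.I * δ Q / β))) := by
      have := lam_inv_exp (β := β)
      rw [Fd, show (-(2 * Real.pi * Complex.I * (1 + δ Q) / β) : ℂ) =
        -(2 * Real.pi * Complex.I / β) + -(2 * Real.pi * Complex.I * δ Q / β) by ring, Complex.exp_add]
      linear_combination -(Q - Qs β) * Complex.exp (-(2 * Real.pi * Complex.I * δ Q / β)) * this
    have h1 : ‖Qs β * (1 - lam (1/β))‖ ≤ 2 := by
      rw [norm_mul, norm_Qs hβ0, norm_sub_rev, lam]
      have hn : ‖(2 * Real.pi * Complex.I * ((1/β : ℝ):ℂ) : ℂ)‖ = 2 * Real.pi / β := by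
        simp [abs_of_pos hp, abs_of_pos hβ0]; ring
      have h3 : 2 * Real.pi / β ≤ 1 := by
        rw [div_le_iff₀ hβ0]; linarith
      have := Complex.norm_exp_sub_one_le (x := 2 * Real.pi * Complex.I * ((1/β : ℝ):ℂ)) (by rw [hn]; exact h3)
      rw [hn] at this
      calc _ ≤ β / (2 * Real.pi) * (2 * (2 * Real.pi / β)) := by gcongr
        _ = 2 := by field_simp
    have h2 : ‖(Q - Qs β) * (1 - Complex.exp (-(2 * Real.pi * Complex.I * δ Q / β)))‖ ≤ 2 := by
      rw [norm_mul, norm_sub_rev 1]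
      have hn := norm_tpi hβ0 (δ Q)
      have h3 : 2 * Real.pi / β ≤ 1 := by
        rw [div_le_iff₀ hβ0]; linarith
      have h4 := Complex.norm_exp_sub_one_le (x := -(2 * Real.pi * Complex.I * δ Q / β)) (by
        rw [hn]
        have := hb' Q hQ
        calc _ ≤ (1 * (1/10) : ℝ) := by gcongr
          _ ≤ 1 := by norm_num)
      rw [hn] at h4
      have h5 := QQs hβ hQ.le
      have hQ0 : 0 < ‖Q‖ := by linarith
      calc _ ≤ ‖Q - Qs β‖ * (2 * (2 * Real.pi / β * (5/‖Q‖))) := by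
            gcongr
            exact h4.trans (by gcongr; exact hb Q hQ)
        _ = (‖Q - Qs β‖ * (2 * Real.pi / β)) * (10/‖Q‖) := by ring
        _ ≤ ‖Q‖/98 * (10/‖Q‖) := by gcongr
        _ = 10/98 := by field_simp
        _ ≤ 2 := by norm_num
    rw [e]
    exact (norm_add_le _ _).trans (by linarith)
  have est : ∀ z ∈ Metric.ball (0 : ℂ) 1, ‖fdel β δ z - lam (1/β) * z‖ ≤ (1 / 20) * ‖z‖ ^ 2 := by
    intro z hzb
    by_cases h : z = 0
    · simp [fdel, h]
    · rw [fdel, if_neg h]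
      have hQ := hz z h hzb
      set Q := 100/z with hQd
      have hzQ : z = 100/Q := by rw [hQd]; field_simp
      clear_value Q
      have hQ0 : 0 < ‖Q‖ := by linarith
      have hQn : Q ≠ 0 := norm_pos_iff.1 hQ0
      have hF := hF0 Q hQ
      have hFp : 0 < ‖Fd β (δ Q) Q‖ := by linarith
      have hFn : Fd β (δ Q) Q ≠ 0 := norm_pos_iff.1 hFp
      have e : 100 / Fd β (δ Q) Q - lam (1/β) * z = 100 * (Q - lam (1/β) * Fd β (δ Q) Q) / (Fd β (δ Q) Q * Q) := by
        rw [hzQ]; field_simp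
      have h100 : ‖(100:ℂ)‖ = 100 := by norm_num
      rw [e, hzQ, norm_div, norm_mul, norm_mul, norm_div, h100]
      have := key Q hQ
      rw [div_pow, ← mul_div_assoc, div_le_div_iff₀ (by positivity) (by positivity)]
      have h1 : ‖Q - lam (1/β) * Fd β (δ Q) Q‖ * ‖Q‖ ≤ 5 * ‖Fd β (δ Q) Q‖ := by nlinarith
      nlinarith
  refine ⟨?_, est⟩
  intro z hzb
  apply DifferentiableAt.differentiableWithinAt
  by_cases h : z = 0
  · subst h
    have : HasDerivAt (fdel β δ) (lam (1/β)) 0 := by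
      rw [hasDerivAt_iff_isLittleO]
      have h0 : fdel β δ 0 = 0 := by simp [fdel]
      have hO : (fun x' => fdel β δ x' - fdel β δ 0 - (x' - 0) • lam (1/β)) =O[nhds 0] fun x : ℂ => x^2 := by
        refine Asymptotics.IsBigO.of_bound (1/20) ?_
        filter_upwards [Metric.ball_mem_nhds (0:ℂ) one_pos] with x hx
        have := est x hx
        rw [h0, sub_zero, sub_zero, smul_eq_mul, mul_comm x, norm_pow]
        exact this
      refine hO.trans_isLittleO ?_
      simp only [sub_zero]
      have := Asymptotics.isLittleO_pow_pow (𝕜 := ℂ) (m := 1) (n := 2) (by norm_num)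
      simpa using this
    exact this.differentiableAt
  · have hQ := hz z h hzb
    have hg : DifferentiableAt ℂ (fun z => 100 / Fd β (δ (100/z)) (100/z)) z := by
      have e1 : DifferentiableAt ℂ (fun z : ℂ => 100/z) z := by fun_prop (disch := exact h)
      have e2 : DifferentiableAt ℂ δ (100/z) := hd.differentiableAt ((isOpen_lt (by fun_prop) (by fun_prop)).mem_nhds hQ)
      have e3 : DifferentiableAt ℂ (fun z => δ (100/z)) z := DifferentiableAt.comp z (g := δ) e2 e1
      have e4 : DifferentiableAt ℂ (fun z => Fd β (δ (100/z)) (100/z)) z := by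
        unfold Fd; fun_prop
      refine DifferentiableAt.div (by fun_prop) e4 ?_
      apply norm_pos_iff.1
      have := hF0 _ hQ
      linarith
    refine hg.congr_of_eventuallyEq ?_
    filter_upwards [isOpen_ne.mem_nhds h] with x hx
    rw [fdel, if_neg hx]

lemma stab_Q {β ρ : ℝ} (hβ : 1000000 ≤ β) (hs : Stab (1/β) ρ) {δ : ℂ → ℂ} (hd : DifferentiableOn ℂ δ {Q | 100 < ‖Q‖})
    (hb : ∀ Q, 100 < ‖Q‖ → ‖δ Q‖ ≤ 5/‖Q‖) (hρ : 0 < ρ) {Q0 : ℂ} (hQ0 : 100/ρ < ‖Q0‖) (k : ℕ) :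
    100 < ‖(fun Q => Fd β (δ Q) Q)^[k] Q0‖ := by
  have hρ1 := hs.le_one
  have hf := SC_of_delta hβ hd hb
  have hQp : 0 < ‖Q0‖ := lt_trans (by positivity) hQ0
  have hQn : Q0 ≠ 0 := norm_pos_iff.1 hQp
  have hz : ‖100/Q0‖ < ρ := by
    rw [norm_div, div_lt_iff₀ hQp]; norm_num
    rw [div_lt_iff₀ hρ] at hQ0; linarith
  have hall := hs _ hf _ hz
  have : 100 < ‖(fun Q => Fd β (δ Q) Q)^[k] Q0‖ ∧ (fdel β δ)^[k] (100/Q0) = 100 / (fun Q => Fd β (δ Q) Q)^[k] Q0 := by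
    induction k with
    | zero =>
      simp only [Function.iterate_zero, id, and_true]
      refine lt_of_le_of_lt ?_ hQ0
      rw [le_div_iff₀ hρ]; linarith
    | succ k ih =>
      rw [Function.iterate_succ_apply', Function.iterate_succ_apply']
      obtain ⟨h1, h2⟩ := ih
      set Q := (fun Q => Fd β (δ Q) Q)^[k] Q0
      have hQ : Q ≠ 0 := norm_pos_iff.1 (by linarith)
      have hb' : ‖δ Q‖ ≤ 1/10 := (hb Q h1).trans (by
        rw [div_le_div_iff₀ (by linarith) (by norm_num)]; linarith)
      have hFp : 0 < ‖Fd β (δ Q) Q‖ := by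
        have h3 := Fd_sub hβ h1.le hb'
        have := norm_sub_norm_le Q (Fd β (δ Q) Q)
        rw [norm_sub_rev] at this
        linarith
      have e : fdel β δ (100/Q) = 100 / Fd β (δ Q) Q := by
        rw [fdel, if_neg (by simp [hQ])]
        rw [show (100/(100/Q) : ℂ) = Q by field_simp]
      have h4 := hall (k+1)
      rw [Function.iterate_succ_apply', h2, e] at h4
      refine ⟨?_, by rw [h2, e]⟩
      rw [mem_ball_zero_iff, norm_div, div_lt_one hFp] at h4
      norm_num at h4
      exact h4
  exact this.1

lemma targ_re {β : ℝ} {W : ℂ} : (-(2 * Real.pi * Complex.I * W / β) : ℂ).re = 2 * Real.pi / β * W.im := by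
  have : (-(2 * Real.pi * Complex.I * W / β) : ℂ) = -(((2 * Real.pi / β : ℝ) : ℂ) * (Complex.I * W)) := by
    push_cast; ring
  rw [this, Complex.neg_re, Complex.re_ofReal_mul, Complex.I_mul_re]; ring

lemma targ_im {β : ℝ} {W : ℂ} : (-(2 * Real.pi * Complex.I * W / β) : ℂ).im = -(2 * Real.pi / β * W.re) := by
  have : (-(2 * Real.pi * Complex.I * W / β) : ℂ) = -(((2 * Real.pi / β : ℝ) : ℂ) * (Complex.I * W)) := by
    push_cast; ring
  rw [this, Complex.neg_im, Complex.im_ofReal_mul, Complex.I_mul_im]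

lemma Qs_eq {β : ℝ} : Qs β = ((β / (2 * Real.pi) : ℝ) : ℂ) * (-Complex.I) := by
  rw [Qs, mul_comm (2 * (Real.pi:ℂ)), ← div_div, div_right_comm, div_eq_mul_inv, Complex.inv_I]
  push_cast; ring

lemma Qf_re {β : ℝ} {W : ℂ} : (Qf β W).re = β / (2 * Real.pi) * (Real.exp (2 * Real.pi / β * W.im) * Real.sin (2 * Real.pi / β * W.re)) := by
  rw [Qf_eq, show Qs β - Qs β * Complex.exp (-(2 * Real.pi * Complex.I * W / β)) =
    Qs β * (1 - Complex.exp (-(2 * Real.pi * Complex.I * W / β))) by ring, Qs_eq, mul_assoc, Complex.re_ofReal_mul,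
    neg_mul, Complex.neg_re, Complex.I_mul_re, Complex.sub_im, Complex.exp_im, targ_re, targ_im, Real.sin_neg]
  simp

lemma Qf_im {β : ℝ} {W : ℂ} : (Qf β W).im = β / (2 * Real.pi) * (Real.exp (2 * Real.pi / β * W.im) * Real.cos (2 * Real.pi / β * W.re) - 1) := by
  rw [Qf_eq, show Qs β - Qs β * Complex.exp (-(2 * Real.pi * Complex.I * W / β)) =
    Qs β * (1 - Complex.exp (-(2 * Real.pi * Complex.I * W / β))) by ring, Qs_eq, mul_assoc, Complex.im_ofReal_mul,
    neg_mul, Complex.neg_im, Complex.I_mul_im, Complex.sub_re, Complex.exp_re, targ_re, targ_im, Real.cos_neg]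
  simp

lemma Qf_re_pos {β : ℝ} (hβ : 0 < β) {W : ℂ} (h0 : 0 < W.re) (h1 : W.re < β/2) : 0 < (Qf β W).re := by
  rw [Qf_re]
  have hp := Real.pi_pos
  have : 0 < Real.sin (2 * Real.pi / β * W.re) := by
    apply Real.sin_pos_of_pos_of_lt_pi (by positivity)
    rw [div_mul_eq_mul_div, div_lt_iff₀ hβ]; nlinarith
  positivity

lemma Qf_re_nonpos {β : ℝ} (hβ : 0 < β) {W : ℂ} (h0 : W.re ≤ 0) (h1 : -(β/2) < W.re) : (Qf β W).re ≤ 0 := by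
  rw [Qf_re]
  have hp := Real.pi_pos
  have : Real.sin (2 * Real.pi / β * W.re) ≤ 0 := by
    apply Real.sin_nonpos_of_nonpos_of_neg_pi_le
    · exact mul_nonpos_of_nonneg_of_nonpos (by positivity) h0
    · rw [div_mul_eq_mul_div, le_div_iff₀ hβ]; nlinarith
  have h2 : Real.exp (2 * Real.pi / β * W.im) * Real.sin (2 * Real.pi / β * W.re) ≤ 0 :=
    mul_nonpos_of_nonneg_of_nonpos (Real.exp_pos _).le this
  exact mul_nonpos_of_nonneg_of_nonpos (by positivity) h2

/-- points with bounded real part and large imaginary part lie in the vertical cone -/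
lemma Qf_cone {β : ℝ} (hβ : 1000000 ≤ β) {W : ℂ} (hx : |W.re| ≤ 3) (hy : 30 ≤ W.im) :
    (7/10) * ‖Qf β W‖ ≤ (Qf β W).im := by
  have hb : 0 < β := by linarith
  have hp := Real.pi_pos
  have hp4 := Real.pi_lt_four
  set t := 2 * Real.pi / β with ht
  have ht0 : 0 < t := by positivity
  have ht1 : t ≤ 1/100000 := by rw [ht, div_le_div_iff₀ hb (by norm_num)]; nlinarith
  have hre := Qf_re (β := β) (W := W)
  have him := Qf_im (β := β) (W := W)
  rw [← ht] at hre him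
  set c := β / (2 * Real.pi) with hc
  have hc0 : 0 < c := by positivity
  set E := Real.exp (t * W.im) with hE
  have hE1 : 1 + t * W.im ≤ E := by rw [hE]; linarith [Real.add_one_le_exp (t * W.im)]
  have hxt : |t * W.re| ≤ 3 * t := by rw [abs_mul, abs_of_pos ht0]; nlinarith
  have hcos : 1 - 3 * t ≤ Real.cos (t * W.re) := by
    have h1 := Real.one_sub_sq_div_two_le_cos (x := t * W.re)
    have h2 : (t * W.re)^2 ≤ (3*t)^2 := by rw [← sq_abs]; gcongr
    nlinarith
  have hsin : |Real.sin (t * W.re)| ≤ 3 * t := (Real.abs_sin_le_abs).trans hxt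
  have hE0 : 0 < E := Real.exp_pos _
  have key : E * |Real.sin (t * W.re)| ≤ E * Real.cos (t * W.re) - 1 := by
    have h1 : E * (1 - 6*t) ≤ E * (Real.cos (t * W.re) - |Real.sin (t * W.re)|) := by
      apply mul_le_mul_of_nonneg_left _ hE0.le
      linarith
    have h2 : (1 + t * W.im) * (1 - 6 * t) ≤ E * (1 - 6*t) := by
      gcongr; linarith
    have h3 : 1 ≤ (1 + t * W.im) * (1 - 6 * t) := by
      have : 0 ≤ t * (W.im * (1 - 6*t) - 6) := by
        apply mul_nonneg ht0.le; nlinarith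
      nlinarith
    linarith
  have hri : |(Qf β W).re| ≤ (Qf β W).im := by
    rw [hre, him, abs_mul, abs_of_pos hc0, abs_mul, abs_of_pos hE0]
    gcongr
  have hsq : ‖Qf β W‖^2 = (Qf β W).re^2 + (Qf β W).im^2 := by
    rw [← Complex.normSq_eq_norm_sq, Complex.normSq_apply]; ring
  have h0 : 0 ≤ (Qf β W).im := (abs_nonneg _).trans hri
  have h2 : (Qf β W).re^2 ≤ (Qf β W).im^2 := by
    rw [← sq_abs]; gcongr
  apply le_of_sq_le_sq _ h0
  rw [mul_pow, hsq]; nlinarith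

lemma Qf_le {β : ℝ} (hβ : 1000000 ≤ β) {W : ℂ} (hW : ‖W‖ ≤ 1000) : ‖Qf β W‖ ≤ 2 * ‖W‖ := by
  have hb : 0 < β := by linarith
  have hp := Real.pi_pos
  have hp4 := Real.pi_lt_four
  rw [Qf_eq, show Qs β - Qs β * Complex.exp (-(2 * Real.pi * Complex.I * W / β)) =
    -(Qs β * (Complex.exp (-(2 * Real.pi * Complex.I * W / β)) - 1)) by ring, norm_neg, norm_mul, norm_Qs hb]
  have hn := norm_tpi hb W
  have h3 : 2 * Real.pi / β ≤ 1/1000 := by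
    rw [div_le_div_iff₀ hb (by norm_num)]; nlinarith
  have h4 := Complex.norm_exp_sub_one_le (x := -(2 * Real.pi * Complex.I * W / β)) (by
    rw [hn]
    calc _ ≤ (1/1000 * 1000 : ℝ) := by gcongr
      _ ≤ 1 := by norm_num)
  rw [hn] at h4
  calc _ ≤ β / (2 * Real.pi) * (2 * (2 * Real.pi / β * ‖W‖)) := by gcongr
    _ = _ := by field_simp

lemma Qf_ge {β : ℝ} (hβ : 0 < β) {W : ℂ} : β / (2 * Real.pi) * (Real.exp (2 * Real.pi / β * W.im) - 1) ≤ ‖Qf β W‖ := by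
  have hp := Real.pi_pos
  rw [Qf_eq, show Qs β - Qs β * Complex.exp (-(2 * Real.pi * Complex.I * W / β)) =
    -(Qs β * (Complex.exp (-(2 * Real.pi * Complex.I * W / β)) - 1)) by ring, norm_neg, norm_mul, norm_Qs hβ]
  gcongr
  have := norm_sub_norm_le (Complex.exp (-(2 * Real.pi * Complex.I * W / β))) 1
  rw [Complex.norm_exp, targ_re, norm_one] at this
  exact this

lemma Qf_per {β : ℝ} (hβ : 0 < β) (W : ℂ) (j : ℤ) : Qf β (W + β * j) = Qf β W := by
  have hb : (β:ℂ) ≠ 0 := by exact_mod_cast hβ.ne'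
  rw [Qf_eq, Qf_eq]
  have : (-(2 * Real.pi * Complex.I * (W + β * j) / β) : ℂ) = -(2 * Real.pi * Complex.I * W / β) + ((-j : ℤ) : ℂ) * (2 * Real.pi * Complex.I) := by
    push_cast; field_simp; ring
  rw [this, Complex.exp_add, Complex.exp_int_mul_two_pi_mul_I, mul_one]

lemma Qf_inj {β : ℝ} (hβ : 0 < β) {W X : ℂ} (h : Qf β W = Qf β X) : ∃ j : ℤ, W = X + β * j := by
  have hb : (β:ℂ) ≠ 0 := by exact_mod_cast hβ.ne'
  have hp := cpi_ne
  have hI := Complex.I_ne_zero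
  have hQ : Qs β ≠ 0 := by rw [Qs]; simp [hb, hp]
  rw [Qf_eq, Qf_eq, sub_right_inj] at h
  have h := mul_left_cancel₀ hQ h
  obtain ⟨n, hn⟩ := Complex.exp_eq_exp_iff_exists_int.1 h
  refine ⟨-n, ?_⟩
  push_cast
  field_simp at hn
  linear_combination -hn

/-- the base bound -/
lemma base_bound {β ρ : ℝ} (hβ : 1000000 ≤ β) (hρ : 0 < ρ) (hs : Stab (1/β) ρ) : ρ * β ≤ 100 * Real.pi := by
  have hb : 0 < β := by linarith
  have hbc : (β:ℂ) ≠ 0 := by exact_mod_cast hb.ne'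
  have hp := Real.pi_pos
  by_contra hc
  push Not at hc
  have hQ0 : ‖Qf β (β/2)‖ = β/Real.pi := by
    have e : Qf β (β/2) = 2 * Qs β := by
      rw [Qf_eq, show (-(2 * Real.pi * Complex.I * (β/2) / β) : ℂ) = -(Real.pi * Complex.I) by field_simp,
        Complex.exp_neg, Complex.exp_pi_mul_I]
      norm_num; ring
    rw [e, norm_mul, norm_Qs hb]; norm_num; field_simp
  have h := fun k => stab_Q hβ hs (δ := fun _ => 0) (by fun_prop) (by intro Q hQ; simp; positivity) hρ (Q0 := Qf β (β/2)) (by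
    rw [hQ0, div_lt_div_iff₀ hρ hp]; linarith) k
  have it : ∀ k : ℕ, (fun Q => Fd β 0 Q)^[k] (Qf β (β/2)) = Qf β (β/2 + k) := by
    intro k
    induction k with
    | zero => simp
    | succ k ih => rw [Function.iterate_succ_apply', ih, Fd_Qf]; congr 1; push_cast; ring
  have h1 := h ⌊β/2⌋₊
  rw [it] at h1
  have h2 := Nat.floor_le (show 0 ≤ β/2 by positivity)
  have h3 := Nat.lt_floor_add_one (β/2)
  set n := ⌊β/2⌋₊
  have e : (β/2 + n : ℂ) = ((n - β/2 : ℝ) : ℂ) + β * ((1:ℤ):ℂ) := by push_cast; ring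
  rw [e, Qf_per hb] at h1
  have hn : ‖((n - β/2 : ℝ) : ℂ)‖ ≤ 1 := by
    rw [Complex.norm_real, Real.norm_eq_abs, abs_le]; constructor <;> linarith
  have := Qf_le hβ (W := ((n - β/2 : ℝ) : ℂ)) (by linarith)
  linarith

lemma goodG_of_SC {α : ℝ} {g : ℂ → ℂ} (hg : g ∈ SC (-α)) : ∃ γ, GoodG γ ∧
    ∀ w : ℂ, -3 < w.im → Complex.exp (2 * Real.pi * Complex.I * ((w - α + γ (w - α)) + 3 * Complex.I))
      = g (Complex.exp (2 * Real.pi * Complex.I * (w + 3 * Complex.I))) := by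
  have hp := Real.pi_pos
  have hp3 := Real.pi_gt_three
  obtain ⟨g1, g2⟩ := hg
  have hll : lam (-α) * lam α = 1 := by
    rw [lam, lam, ← Complex.exp_add]; push_cast
    rw [show (2 * Real.pi * Complex.I * -α + 2 * Real.pi * Complex.I * α : ℂ) = 0 by ring, Complex.exp_zero]
  set u : ℂ → ℂ := fun z => g z * lam α / z - 1 with hu
  have hub : ∀ z : ℂ, z ≠ 0 → ‖z‖ < 1 → ‖u z‖ ≤ ‖z‖/20 := by
    intro z hz h1
    have h0 := norm_pos_iff.2 hz
    have := g2 z (by rwa [mem_ball_zero_iff])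
    have e : u z = lam α * (g z - lam (-α) * z) / z := by
      rw [hu]; field_simp; linear_combination z * hll
    rw [e, norm_div, norm_mul, norm_lam, one_mul, div_le_iff₀ h0]
    nlinarith
  set ζ : ℂ → ℂ := fun w => Complex.exp (2 * Real.pi * Complex.I * (w + 3 * Complex.I)) with hζ
  have hζ0 : ∀ w, ζ w ≠ 0 := fun w => Complex.exp_ne_zero _
  have hζn : ∀ w, ‖ζ w‖ = Real.exp (-(6 * Real.pi)) * Real.exp (-(2 * Real.pi * w.im)) := by
    intro w
    rw [hζ, Complex.norm_exp, ← Real.exp_add]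
    congr 1
    have : (2 * Real.pi * Complex.I * (w + 3 * Complex.I) : ℂ) = ((2 * Real.pi : ℝ):ℂ) * (Complex.I * (w + 3 * Complex.I)) := by
      push_cast; ring
    rw [this, Complex.re_ofReal_mul, Complex.I_mul_re]
    simp; ring
  have hζ1 : ∀ w : ℂ, -3 < w.im → ‖ζ w‖ < 1 := by
    intro w hw
    rw [hζn, ← Real.exp_add, Real.exp_lt_one_iff]; nlinarith
  have hζd : Differentiable ℂ ζ := by rw [hζ]; fun_prop
  refine ⟨fun w => 1 / (2 * Real.pi * Complex.I) * Complex.log (1 + u (ζ (w + α))), ⟨?_, ?_, ?_⟩, ?_⟩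
  · intro w hw
    change -1 < w.im at hw
    apply DifferentiableAt.differentiableWithinAt
    have him : -3 < (w + α).im := by simp; linarith
    have h1 := hζ1 _ him
    have hgd : DifferentiableAt ℂ g (ζ (w + α)) := g1.differentiableAt (Metric.isOpen_ball.mem_nhds (by rwa [mem_ball_zero_iff]))
    have hzd : DifferentiableAt ℂ (fun w => ζ (w + α)) w := by fun_prop
    have hgz : DifferentiableAt ℂ (fun w => g (ζ (w + α))) w := DifferentiableAt.comp w (g := g) hgd hzd
    have hud : DifferentiableAt ℂ (fun w => u (ζ (w + α))) w := by
      simp only [hu]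
      exact ((hgz.mul_const _).div hzd (hζ0 _)).sub_const 1
    refine DifferentiableAt.const_mul ((hud.const_add 1).clog ?_) _
    apply Complex.mem_slitPlane_of_norm_lt_one
    have := hub _ (hζ0 _) h1
    linarith
  · intro w
    have : ζ (w + 1 + α) = ζ (w + α) := by
      simp only [hζ]
      rw [show (2 * Real.pi * Complex.I * (w + 1 + α + 3 * Complex.I) : ℂ) = 2 * Real.pi * Complex.I * (w + α + 3 * Complex.I) + 2 * Real.pi * Complex.I by ring,
        Complex.exp_add, Complex.exp_two_pi_mul_I, mul_one]
    simp only [this]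
  · intro w hw
    have him : -3 < (w + α).im := by simp; linarith
    have h1 := hζ1 _ him
    have h2 := hub _ (hζ0 (w + α)) h1
    have h3 := Complex.norm_log_one_add_half_le_self (z := u (ζ (w + α))) (by linarith)
    have h4 := hζn (w + α)
    have him2 : (w + α).im = w.im := by simp
    rw [him2] at h4
    have h5 : ‖(1 / (2 * Real.pi * Complex.I) : ℂ)‖ ≤ 1 := by
      simp [abs_of_pos hp]
      rw [← mul_inv]; apply inv_le_one_of_one_le₀; linarith
    have h6 : Real.exp (-(6 * Real.pi)) ≤ 1/1000000 := by
      have : Real.exp (-(6 * Real.pi)) ≤ Real.exp (-18) := by gcongr; linarith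
      refine this.trans ?_
      rw [Real.exp_neg, inv_le_comm₀ (Real.exp_pos _) (by norm_num)]
      have h := Real.add_one_le_exp (1:ℝ)
      calc (1/1000000)⁻¹ ≤ ((2:ℝ)^18)*4 := by norm_num
        _ ≤ (5/2)^18 := by norm_num
        _ ≤ (Real.exp 1)^18 := by
          gcongr
          linarith [Real.exp_one_gt_d9]
        _ = Real.exp 18 := by rw [← Real.exp_nat_mul]; norm_num
    have h7 := Real.exp_pos (-(2 * Real.pi * w.im))
    rw [norm_mul]
    calc _ ≤ 1 * (3/2 * (‖ζ (w + α)‖/20)) := by gcongr; linarith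
      _ ≤ ‖ζ (w+α)‖ := by have := norm_nonneg (ζ (w+α)); linarith
      _ ≤ _ := by rw [h4]; gcongr
  · intro w hw
    have h1 := hζ1 _ hw
    have h2 := hub _ (hζ0 w) h1
    have hne : 1 + u (ζ w) ≠ 0 := by
      intro h
      have : u (ζ w) = -1 := by linear_combination h
      rw [this, norm_neg, norm_one] at h2
      linarith
    have hpi := cpi_ne
    have hI := Complex.I_ne_zero
    simp only [sub_add_cancel]
    have e : (2 * Real.pi * Complex.I * (w - α + 1 / (2 * Real.pi * Complex.I) * Complex.log (1 + u (ζ w)) + 3 * Complex.I) : ℂ)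
       = 2 * Real.pi * Complex.I * ((-α : ℝ):ℂ) + 2 * Real.pi * Complex.I * (w + 3 * Complex.I) + Complex.log (1 + u (ζ w)) := by
      push_cast; field_simp; ring
    rw [e, Complex.exp_add, Complex.exp_add, Complex.exp_log hne]
    have e1 : Complex.exp (2 * Real.pi * Complex.I * ((-α : ℝ):ℂ)) = lam (-α) := rfl
    have e2 : Complex.exp (2 * Real.pi * Complex.I * (w + 3 * Complex.I)) = ζ w := rfl
    rw [e1, e2]
    have hz := hζ0 w
    simp only [hu]
    field_simp
    linear_combination g (ζ w) * hll

/-- all the data of the construction -/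
structure Dat (β : ℝ) (γ φ Θ δ : ℂ → ℂ) : Prop where
  hβ : 1000000 ≤ β
  per : ∀ w, γ (w + 1) = γ w
  hφ : DifferentiableOn ℂ φ Vc
  φb : ∀ Q ∈ Vc, ‖φ Q‖ * ‖Q‖ ≤ 1/100
  Θb : ∀ Q, ‖Θ Q‖ * ‖Q‖ ≤ 1/100
  hl : ∀ Q ∈ Vc, Q.re ≤ 0 → Θ Q = φ Q
  hr : ∀ Q ∈ Vc, 0 < Q.re → Θ Q = φ Q + γ (w0f β Q + φ Q)
  dd : DifferentiableOn ℂ δ {Q | 100 < ‖Q‖}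
  db : ∀ Q, 100 < ‖Q‖ → ‖δ Q‖ ≤ 5/‖Q‖
  db' : ∀ Q, 100 < ‖Q‖ → ‖δ Q‖ ≤ 1/10
  d0 : ∀ Q, 100 < ‖Q‖ → Q.im < (7/10) * ‖Q‖ → δ Q = (Θ Q - 1/Q) - (Θ (Fd β (δ Q) Q) - 1 / Fd β (δ Q) Q)
  d1 : ∀ Q, 100 < ‖Q‖ → (7/10) * ‖Q‖ ≤ Q.im → δ Q = (φ Q - 1/Q) - (φ (Fd β (δ Q) Q) - 1 / Fd β (δ Q) Q)

lemma dat_exists {β : ℝ} (hβ : 1000000 ≤ β) {γ : ℂ → ℂ} (hγ : GoodG γ) : ∃ φ Θ δ, Dat β γ φ Θ δ := by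
  obtain ⟨φ, Θ, h1, h2, h3, h4, h5, h6⟩ := gamma_cousin hγ (show 3 ≤ β by linarith)
  obtain ⟨δ, k1, k2⟩ := delta_exists hβ hγ.2.1 h1 h2 (fun Q hQ => (h3 Q hQ).2) (fun Q => (h4 Q).2) h5 h6
  exact ⟨φ, Θ, δ, hβ, hγ.2.1, h1, fun Q hQ => (h3 Q hQ).2, fun Q => (h4 Q).2, h5, h6, k1,
    fun Q hQ => (k2 Q hQ).1, fun Q hQ => (k2 Q hQ).2.1, fun Q hQ => (k2 Q hQ).2.2.1, fun Q hQ => (k2 Q hQ).2.2.2⟩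

lemma chart1_facts {β : ℝ} {γ φ Θ δ : ℂ → ℂ} (D : Dat β γ φ Θ δ) {Q : ℂ} (hQ : 100 < ‖Q‖) (hc : (7/10) * ‖Q‖ ≤ Q.im) :
    Q ∈ Vc ∧ Fd β (δ Q) Q ∈ Vc ∧ Wf β (Fd β (δ Q) Q) = Wf β Q + 1 + δ Q ∧
    w0f β (Fd β (δ Q) Q) + φ (Fd β (δ Q) Q) = w0f β Q + φ Q + 1 := by
  have hβ := D.hβ
  have hβ0 : 0 < β := by linarith
  have hVQ : Q ∈ Vc := ball_Vc hQ (by linarith) (by rw [sub_self, norm_zero]; linarith)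
  have hs := Fd_sub hβ hQ.le (D.db' Q hQ)
  have hVF : Fd β (δ Q) Q ∈ Vc := ball_Vc hQ (by linarith) (by linarith)
  have hW : Wf β (Fd β (δ Q) Q) = Wf β Q + 1 + δ Q := by
    conv_lhs => rw [← Qf_Wf hβ0 (Vc_im hVQ), Fd_Qf]
    have e2 : Qf β (Wf β Q) = Q := Qf_Wf hβ0 (Vc_im hVQ)
    rw [e2]
    apply Wf_Qf hβ0
    have a1 := Wf_re_lt hβ0 (Vc_im hVQ)
    have a2 := (Complex.abs_re_le_norm (δ Q)).trans (D.db' Q hQ)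
    rw [abs_lt] at a1 ⊢
    rw [abs_le] at a2
    simp only [Complex.add_re, Complex.one_re]
    constructor <;> linarith
  refine ⟨hVQ, hVF, hW, ?_⟩
  rw [w0f, w0f, hW]
  linear_combination D.d1 Q hQ hc

/-- the tracking invariant -/
def Tr (β : ℝ) (Θ : ℂ → ℂ) (w : ℕ → ℂ) (W : ℂ) : Prop :=
  ∃ (n : ℕ) (m : ℤ), β * n < W.re ∧ W.re ≤ β * (n + 1) ∧ W + Θ (Qf β W) - 1 / Qf β W = β * n + w n + m ∧
    ∀ i ≤ n, 40 < (w i).im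

lemma Tr_im {β : ℝ} {γ φ Θ δ : ℂ → ℂ} (D : Dat β γ φ Θ δ) {Q : ℂ} (hQ : 100 < ‖Q‖) : |(Θ Q - 1/Q).im| ≤ 1 := by
  have h0 : Q ≠ 0 := norm_pos_iff.1 (by linarith)
  have h1 := psi_bd h0 (D.Θb Q)
  refine (Complex.abs_im_le_norm _).trans ?_
  have := norm_nonneg (Θ Q - 1/Q)
  nlinarith

lemma Tr_step {β : ℝ} {γ φ Θ δ : ℂ → ℂ} (D : Dat β γ φ Θ δ) {w : ℕ → ℂ} {a : ℤ} {α : ℝ} (ha : β = a + α)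
    (hw : ∀ n, w (n+1) = w n - α + γ (w n - α)) {W : ℂ} (hQ : 100 < ‖Qf β W‖)
    (hF : 100 < ‖Qf β (W + 1 + δ (Qf β W))‖) (h : Tr β Θ w W) : Tr β Θ w (W + 1 + δ (Qf β W)) := by
  have hβ := D.hβ
  have hβ0 : 0 < β := by linarith
  obtain ⟨n, m, h1, h2, h3, h4⟩ := h
  set Q := Qf β W with hQd
  have eF : Fd β (δ Q) Q = Qf β (W + 1 + δ Q) := by
    have := Fd_Qf β (δ Q) W
    rwa [← hQd] at this
  rw [Tr, ← eF]
  rw [← eF] at hF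
  have hdre := (Complex.abs_re_le_norm (δ Q)).trans (D.db' Q hQ)
  have hdim := (Complex.abs_im_le_norm (δ Q)).trans (D.db' Q hQ)
  rw [abs_le] at hdre hdim
  have hWre : (W + 1 + δ Q).re = W.re + 1 + (δ Q).re := by simp
  have hWim : (W + 1 + δ Q).im = W.im + (δ Q).im := by simp
  have hpsi := Tr_im D hQ
  rw [abs_le] at hpsi
  have him : W.im + (Θ Q - 1/Q).im = (w n).im := by
    have := congrArg Complex.im h3
    rw [add_sub_assoc, Complex.add_im] at this
    rw [this]
    have e : (β * n + w n + m : ℂ) = ((β * n + m : ℝ) : ℂ) + w n := by push_cast; ring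
    rw [e, Complex.add_im, Complex.ofReal_im, zero_add]
  have hwn := h4 n le_rfl
  have same : W.re + 1 + (δ Q).re ≤ β * (n+1) → (W + 1 + δ Q + Θ (Fd β (δ Q) Q) - 1 / Fd β (δ Q) Q = W + Θ Q - 1/Q + 1) →
      ∃ (n : ℕ) (m : ℤ), β * n < (W + 1 + δ Q).re ∧ (W + 1 + δ Q).re ≤ β * (n + 1) ∧
      W + 1 + δ Q + Θ (Fd β (δ Q) Q) - 1 / Fd β (δ Q) Q = β * n + w n + m ∧ ∀ i ≤ n, 40 < (w i).im := by
    intro k1 k2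
    refine ⟨n, m + 1, by rw [hWre]; linarith, by rw [hWre]; exact k1, ?_, h4⟩
    rw [k2, h3]; push_cast; ring
  -- behaviour near the seam
  have seam : ∀ Y : ℂ, Y = W - β * (n+1) → Qf β Y = Q := by
    intro Y hY
    have := Qf_per hβ0 Y (n+1)
    rw [← this, hY, hQd]; congr 1; push_cast; ring
  rcases lt_or_ge Q.im ((7/10) * ‖Q‖) with hc | hc
  · apply same
    · by_contra hcon
      push Not at hcon
      have := Qf_cone hβ (W := W - β * (n+1)) (by
        have : (W - β * (n+1)).re = W.re - β * (n+1) := by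
          rw [show (β * (n+1) : ℂ) = ((β * (n+1) : ℝ):ℂ) by push_cast; ring, Complex.sub_re, Complex.ofReal_re]
        rw [this, abs_le]; constructor <;> linarith) (by
        have : (W - β * (n+1)).im = W.im := by
          rw [show (β * (n+1) : ℂ) = ((β * (n+1) : ℝ):ℂ) by push_cast; ring, Complex.sub_im, Complex.ofReal_im, sub_zero]
        rw [this]; linarith)
      rw [seam _ rfl] at this
      linarith
    · linear_combination D.d0 Q hQ hc
  · obtain ⟨hVQ, hVF, hWF, hw0⟩ := chart1_facts D hQ hc
    have hd1 := D.d1 Q hQ hc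
    obtain ⟨j, hj⟩ := Qf_inj hβ0 (W := W) (X := Wf β Q) (by rw [Qf_Wf hβ0 (Vc_im hVQ)])
    set ξ := Wf β Q with hξ
    have r1 := Wf_re_lt hβ0 (Vc_im hVQ)
    have r2 := Wf_re_lt hβ0 (Vc_im hVF)
    rw [← hξ] at r1
    rw [hWF] at r2
    rw [abs_lt] at r1 r2
    have hre2 : (ξ + 1 + δ Q).re = ξ.re + 1 + (δ Q).re := by simp
    rw [hre2] at r2
    have hWj : W.re = ξ.re + β * j := by
      rw [hj, show (β * j : ℂ) = ((β * j : ℝ):ℂ) by push_cast; ring, Complex.add_re, Complex.ofReal_re]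
    have hWji : W.im = ξ.im := by
      rw [hj, show (β * j : ℂ) = ((β * j : ℝ):ℂ) by push_cast; ring, Complex.add_im, Complex.ofReal_im, add_zero]
    have eQ : Qf β ξ = Q := Qf_Wf hβ0 (Vc_im hVQ)
    have eF' : Qf β (ξ + 1 + δ Q) = Fd β (δ Q) Q := by rw [← hWF]; exact Qf_Wf hβ0 (Vc_im hVF)
    have j1 : (n:ℤ) ≤ j := by
      by_contra hcon
      push Not at hcon
      have : (j:ℝ) + 1 ≤ n := by exact_mod_cast hcon
      nlinarith
    have j2 : j ≤ n + 1 := by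
      by_contra hcon
      push Not at hcon
      have : (n:ℝ) + 1 + 1 ≤ j := by exact_mod_cast hcon
      nlinarith
    rcases eq_or_lt_of_le j1 with hjn | hjn
    · -- just after the seam
      have hjr : (j:ℝ) = n := by rw [← hjn]; simp
      have p1 : 0 < ξ.re := by rw [hjr] at hWj; linarith
      have q1 : 0 < Q.re := by rw [← eQ]; exact Qf_re_pos hβ0 p1 (by linarith)
      have q2 : 0 < (Fd β (δ Q) Q).re := by
        rw [← eF']; exact Qf_re_pos hβ0 (by rw [hre2]; linarith) (by rw [hre2]; linarith)
      apply same
      · rw [hWj, hjr]; nlinarith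
      · rw [D.hr Q hVQ q1, D.hr _ hVF q2, hw0, D.per]
        linear_combination hd1
    · have hjn1 : j = n + 1 := by omega
      have hjr : (j:ℝ) = n + 1 := by rw [hjn1]; push_cast; ring
      have p1 : ξ.re ≤ 0 := by rw [hjr] at hWj; linarith
      have q1 : Q.re ≤ 0 := by rw [← eQ]; exact Qf_re_nonpos hβ0 p1 (by linarith)
      rcases le_or_gt (ξ.re + 1 + (δ Q).re) 0 with p2 | p2
      · have q2 : (Fd β (δ Q) Q).re ≤ 0 := by
          rw [← eF']; exact Qf_re_nonpos hβ0 (by rw [hre2]; linarith) (by rw [hre2]; linarith)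
        apply same
        · rw [hWj, hjr]; linarith
        · rw [D.hl Q hVQ q1, D.hl _ hVF q2]
          linear_combination hd1
      · -- crossing
        have q2 : 0 < (Fd β (δ Q) Q).re := by
          rw [← eF']; exact Qf_re_pos hβ0 (by rw [hre2]; linarith) (by rw [hre2]; linarith)
        have hbig : 48 < W.im := by
          by_contra hcon
          push Not at hcon
          have hn : ‖ξ‖ ≤ 50 := by
            have := Complex.norm_le_abs_re_add_abs_im ξ
            have h5 : |ξ.re| ≤ 2 := by rw [abs_le]; constructor <;> linarith
            have h6 : |ξ.im| ≤ 48 := by rw [← hWji, abs_le]; constructor <;> linarith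
            linarith
          have := Qf_le hβ (W := ξ) (by linarith)
          rw [eQ] at this
          linarith
        have hper : ∀ (x : ℂ) (k : ℤ), γ (x + k) = γ x := by
          intro x k
          have hP : Function.Periodic γ 1 := D.per
          have := hP.int_mul k x
          rwa [mul_one] at this
        have hac : (β:ℂ) = a + α := by exact_mod_cast ha
        have hV : W + φ Q - 1/Q = β * n + w n + m := by rw [← D.hl Q hVQ q1]; exact h3
        have harg : w0f β (Fd β (δ Q) Q) + φ (Fd β (δ Q) Q) = (w n - α) + ((m + 1 - a : ℤ) : ℂ) := by
          rw [hw0, w0f, ← hξ]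
          have : (j:ℂ) = n + 1 := by rw [hjn1]; push_cast; ring
          rw [this] at hj
          push_cast
          linear_combination hV - hj - hac
        have hfin : W + 1 + δ Q + Θ (Fd β (δ Q) Q) - 1 / Fd β (δ Q) Q = β * ((n + 1 : ℕ):ℂ) + w (n+1) + ((m + 1 - a : ℤ) : ℂ) := by
          rw [D.hr _ hVF q2, harg, hper, hw]
          push_cast
          linear_combination hV + hd1 - hac
        refine ⟨n + 1, m + 1 - a, ?_, ?_, hfin, ?_⟩
        · rw [hWre, hWj, hjr]; push_cast; linarith
        · rw [hWre, hWj, hjr]; push_cast; nlinarith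
        · intro i hi
          rcases Nat.lt_or_ge i (n+1) with hi' | hi'
          · exact h4 i (by omega)
          · have : i = n + 1 := by omega
            subst this
            have hpsiF := Tr_im D hF
            rw [abs_le] at hpsiF
            have h5 := congrArg Complex.im hfin
            rw [add_sub_assoc, Complex.add_im, hWim,
              show (β * ((n + 1 : ℕ):ℂ) + w (n+1) + ((m + 1 - a : ℤ) : ℂ)) = ((β * (n+1 : ℕ) + (m + 1 - a : ℤ) : ℝ) : ℂ) + w (n+1) by push_cast; ring,
              Complex.add_im, Complex.ofReal_im, zero_add] at h5
            linarith

lemma Tr_all {β ρ : ℝ} {γ φ Θ δ : ℂ → ℂ} (D : Dat β γ φ Θ δ) (hρ : 0 < ρ) (hs : Stab (1/β) ρ)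
    {w : ℕ → ℂ} {a : ℤ} {α : ℝ} (ha : β = a + α)
    (hw : ∀ n, w (n+1) = w n - α + γ (w n - α)) {W0 : ℂ} (hQ : 100/ρ < ‖Qf β W0‖) (h0 : Tr β Θ w W0) :
    ∀ i, 40 < (w i).im := by
  have hβ := D.hβ
  have hβ0 : 0 < β := by linarith
  set W : ℕ → ℂ := fun k => (fun W => W + 1 + δ (Qf β W))^[k] W0 with hW
  have W0' : W 0 = W0 := rfl
  have Ws : ∀ k, W (k+1) = W k + 1 + δ (Qf β (W k)) := fun k => by
    simp only [hW, Function.iterate_succ_apply']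
  have hQk : ∀ k, Qf β (W k) = (fun Q => Fd β (δ Q) Q)^[k] (Qf β W0) := by
    intro k
    induction k with
    | zero => rfl
    | succ k ih => rw [Function.iterate_succ_apply', ← ih, Ws, ← Fd_Qf]
  have hbig : ∀ k, 100 < ‖Qf β (W k)‖ := fun k => by
    rw [hQk]; exact stab_Q hβ hs D.dd D.db hρ hQ k
  have hT : ∀ k, Tr β Θ w (W k) := by
    intro k
    induction k with
    | zero => exact h0
    | succ k ih =>
      have := Tr_step D ha hw (hbig k) (by rw [← Ws]; exact hbig (k+1)) ih
      rwa [← Ws] at this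
  have hre : ∀ k : ℕ, W0.re + (9/10) * k ≤ (W k).re := by
    intro k
    induction k with
    | zero => simp [W0']
    | succ k ih =>
      rw [Ws]
      have := (Complex.abs_re_le_norm (δ (Qf β (W k)))).trans (D.db' _ (hbig k))
      rw [abs_le] at this
      simp only [Complex.add_re, Complex.one_re]
      push_cast
      linarith
  intro i
  obtain ⟨k, hk⟩ := exists_nat_gt ((β * (i + 1) - W0.re) * (10/9))
  obtain ⟨n, m, -, h2, -, h4⟩ := hT k
  have := hre k
  apply h4
  by_contra hcon
  push Not at hcon
  have h5 : (n:ℝ) + 1 ≤ i := by exact_mod_cast hcon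
  nlinarith

lemma Tr_start {β : ℝ} {γ φ Θ δ : ℂ → ℂ} (D : Dat β γ φ Θ δ) (w : ℕ → ℂ) {R : ℝ} (hR : 100 ≤ R)
    (hbig : 1 + 2 * Real.pi / β * (2 * R) < Real.exp (2 * Real.pi / β * (w 0).im)) :
    ∃ W0, R < ‖Qf β W0‖ ∧ Tr β Θ w W0 := by
  have hβ := D.hβ
  have hβ0 : 0 < β := by linarith
  have hp := Real.pi_pos
  set y0 := (w 0).im with hy0
  have hy : 0 < y0 := by
    by_contra hcon
    push Not at hcon
    have h1 : Real.exp (2 * Real.pi / β * y0) ≤ 1 := by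
      rw [Real.exp_le_one_iff]; exact mul_nonpos_of_nonneg_of_nonpos (by positivity) hcon
    have : 0 < 2 * Real.pi / β * (2 * R) := by positivity
    linarith
  -- integer shift
  set m : ℤ := ⌊β - (w 0).re - 1/5⌋ with hm
  have m1 := Int.floor_le (β - (w 0).re - 1/5)
  have m2 := Int.lt_floor_add_one (β - (w 0).re - 1/5)
  rw [← hm] at m1 m2
  set ω : ℂ := w 0 + m - β with hω
  have hωre : ω.re = (w 0).re + m - β := by
    rw [hω, show (w 0 + m - β : ℂ) = w 0 + ((m - β : ℝ):ℂ) by push_cast; ring, Complex.add_re, Complex.ofReal_re]; ring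
  have hωim : ω.im = y0 := by
    rw [hω, show (w 0 + m - β : ℂ) = w 0 + ((m - β : ℝ):ℂ) by push_cast; ring, Complex.add_im, Complex.ofReal_im, add_zero]
  set Q := Qf β (ω - 1) with hQ
  have hQn : 2 * R < ‖Q‖ := by
    refine lt_of_lt_of_le ?_ (Qf_ge hβ0)
    have : (ω - 1).im = y0 := by simp [hωim]
    rw [this]
    have e : 2 * R = β / (2 * Real.pi) * (2 * Real.pi / β * (2 * R)) := by field_simp
    rw [e]
    apply mul_lt_mul_of_pos_left _ (by positivity)
    linarith
  have h1re : (ω - 1).re = ω.re - 1 := by simp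
  have h1im : (ω - 1).im = y0 := by simp [hωim]
  have hxa : |(ω - 1).re| ≤ 3 := by
    rw [h1re, hωre, abs_le]; constructor <;> linarith
  have hyb : 90 < y0 := by
    by_contra hcon
    push Not at hcon
    have hn : ‖ω - 1‖ ≤ 93 := by
      have := Complex.norm_le_abs_re_add_abs_im (ω - 1)
      rw [h1im, abs_of_pos hy] at this
      linarith
    have := Qf_le hβ (W := ω - 1) (by linarith)
    linarith
  have hcone := Qf_cone hβ hxa (by rw [h1im]; linarith)
  rw [← hQ] at hcone
  have hQ100 : 100 < ‖Q‖ := by linarith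
  have hchart : Chart {Q} (fun Q => φ Q - 1/Q) := by
    intro Q' hQ'
    rw [Set.mem_singleton_iff] at hQ'
    subst hQ'
    have hV : ∀ z ∈ Metric.ball Q (‖Q‖/20), z ∈ Vc := fun z hz => by
      rw [Metric.mem_ball, dist_eq_norm] at hz
      exact ball_Vc hQ100 (by linarith) hz
    refine ⟨hQ100, ?_, fun z hz => psi_bd (Vc_ne (hV z hz)) (D.φb z (hV z hz))⟩
    refine (D.hφ.mono hV).sub (DifferentiableOn.div (by fun_prop) (by fun_prop) fun z hz => Vc_ne (hV z hz))
  have hFV : ∀ y : ℂ, ‖y‖ ≤ 1/10 → Fd β y Q ∈ Vc ∧ 39/40 * ‖Q‖ ≤ ‖Fd β y Q‖ := by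
    intro y hy
    have hs := Fd_sub hβ hQ100.le hy
    refine ⟨ball_Vc hQ100 (by linarith) (by linarith), ?_⟩
    have := norm_sub_norm_le Q (Fd β y Q)
    rw [norm_sub_rev] at this
    linarith
  obtain ⟨y, -, hy2⟩ := hol_fixed_point (U := Set.univ) isOpen_univ
    (h := fun _ y => -(φ (Fd β y Q) - 1/Fd β y Q)) (r := 1/10) (by norm_num)
    (by
      intro _ _ y hy
      obtain ⟨a1, a2⟩ := hFV y hy
      have := psi_bd (Vc_ne a1) (D.φb _ a1)
      rw [norm_neg]
      have := norm_nonneg (φ (Fd β y Q) - 1/Fd β y Q)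
      nlinarith)
    (by
      intro _ _ y y' hy hy'
      have := chart_contr hchart hβ (Set.mem_singleton Q) hy hy'
      refine le_trans (le_of_eq ?_) this
      congr 1; ring)
    (by
      intro y hyd hyb Q' _
      have h1 : DifferentiableAt ℂ y Q' := hyd.differentiableAt Filter.univ_mem
      have h2 : DifferentiableAt ℂ (fun x => Fd β (y x) Q) Q' := by unfold Fd; fun_prop
      obtain ⟨a1, -⟩ := hFV (y Q') (hyb Q' trivial)
      have h3 : DifferentiableAt ℂ (fun Q => φ Q - 1/Q) (Fd β (y Q') Q) := by
        refine (D.hφ.differentiableAt (Vc_open.mem_nhds a1)).sub ?_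
        exact DifferentiableAt.div (by fun_prop) (by fun_prop) (Vc_ne a1)
      exact (DifferentiableAt.comp Q' (g := fun Q => φ Q - 1/Q) h3 h2).neg.differentiableWithinAt)
  obtain ⟨hyn, hye⟩ := hy2 0 trivial
  set d := y 0
  have hFdQ : Fd β d Q = Qf β (ω + d) := by
    rw [hQ, Fd_Qf]; congr 1; ring
  have hQW : Qf β (ω + d + β) = Fd β d Q := by
    rw [hFdQ]; have := Qf_per hβ0 (ω + d) 1
    rw [← this]; congr 1; push_cast; ring
  obtain ⟨a1, a2⟩ := hFV d hyn
  have hdre := (Complex.abs_re_le_norm d).trans hyn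
  rw [abs_le] at hdre
  have hor : (ω + d).re = ω.re + d.re := by simp
  have hor2 : (ω + d + β).re = ω.re + d.re + β := by simp
  refine ⟨ω + d + β, by rw [hQW]; linarith, 0, m, ?_, ?_, ?_, ?_⟩
  · rw [hor2, hωre]; push_cast; linarith
  · rw [hor2, hωre]; push_cast; linarith
  · have hq : (Fd β d Q).re ≤ 0 := by
      rw [hFdQ]; exact Qf_re_nonpos hβ0 (by rw [hor, hωre]; linarith) (by rw [hor, hωre]; linarith)
    rw [hQW, D.hl _ a1 hq]
    push_cast
    rw [hω]
    linear_combination -hye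
  · intro i hi
    have : i = 0 := by omega
    subst this
    linarith

lemma stab_neg_of {β ρ : ℝ} (hβ : 1000000 ≤ β) (hρ : 0 < ρ) (hs : Stab (1/β) ρ) :
    Stab (-Int.fract β) ((ρ * β / 4000)^β) := by
  have hβ0 : 0 < β := by linarith
  have hp := Real.pi_pos
  have hp4 := Real.pi_lt_d2
  have hp3 := Real.pi_gt_three
  have hbase := base_bound hβ hρ hs
  have hρ1 := hs.le_one
  intro g hg z hz
  obtain ⟨γ, hγ, hconj⟩ := goodG_of_SC hg
  by_cases hz0 : z = 0
  · subst hz0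
    have g0 : g 0 = 0 := by
      have := hg.2 0 (by simp)
      simpa using this
    intro n
    rw [Function.iterate_fixed g0]; simp
  obtain ⟨φ, Θ, δ, D⟩ := dat_exists hβ hγ
  set α := Int.fract β with hα
  have ha : β = (⌊β⌋ : ℤ) + α := by rw [hα]; exact (Int.floor_add_fract β).symm
  set w0 : ℂ := Complex.log z / (2 * Real.pi * Complex.I) - 3 * Complex.I with hw0
  have hI := Complex.I_ne_zero
  have hpc := cpi_ne
  have hexp0 : Complex.exp (2 * Real.pi * Complex.I * (w0 + 3 * Complex.I)) = z := by
    rw [hw0, sub_add_cancel, mul_div_cancel₀ _ (by simp [hpc]), Complex.exp_log hz0]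
  set w : ℕ → ℂ := fun n => (fun x => x - α + γ (x - α))^[n] w0 with hw
  have ws : ∀ n, w (n+1) = w n - α + γ (w n - α) := fun n => by
    simp only [hw, Function.iterate_succ_apply']
  have hnorm : ∀ x : ℂ, ‖Complex.exp (2 * Real.pi * Complex.I * (x + 3 * Complex.I))‖ = Real.exp (-(2 * Real.pi * (x.im + 3))) := by
    intro x
    rw [Complex.norm_exp]
    congr 1
    have : (2 * Real.pi * Complex.I * (x + 3 * Complex.I) : ℂ) = ((2 * Real.pi : ℝ):ℂ) * (Complex.I * (x + 3 * Complex.I)) := by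
      push_cast; ring
    rw [this, Complex.re_ofReal_mul, Complex.I_mul_re]
    simp; ring
  have hzn : ‖z‖ = Real.exp (-(2 * Real.pi * (w0.im + 3))) := by rw [← hexp0]; exact hnorm w0
  -- size of the starting point
  have hbig : 1 + 2 * Real.pi / β * (2 * (100/ρ)) < Real.exp (2 * Real.pi / β * (w 0).im) := by
    have w00 : w 0 = w0 := rfl
    rw [w00]
    set t := 2 * Real.pi / β with ht
    have ht0 : 0 < t := by positivity
    have ht1 : t ≤ 1/100 := by rw [ht, div_le_div_iff₀ hβ0 (by norm_num)]; linarith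
    have hx : 0 < ρ * β / 4000 := by positivity
    rw [hzn, ← Real.exp_log (Real.rpow_pos_of_pos hx β), Real.exp_lt_exp, Real.log_rpow hx] at hz
    have h1 : -(Real.log (ρ * β / 4000)) < t * (w0.im + 3) := by
      rw [ht, div_mul_eq_mul_div, lt_div_iff₀ hβ0]; linarith
    have h2 : 4000 / (ρ * β) < Real.exp (t * (w0.im + 3)) := by
      have := Real.exp_lt_exp.2 h1
      rwa [Real.exp_neg, Real.exp_log hx, inv_div] at this
    have h3 : Real.exp (t * (w0.im + 3)) = Real.exp (t * w0.im) * Real.exp (t * 3) := by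
      rw [← Real.exp_add]; congr 1; ring
    have h4 : Real.exp (t * 3) ≤ 2 := by
      have h5 : t * 3 ≤ Real.log 2 := by linarith [Real.log_two_gt_d9]
      calc _ ≤ Real.exp (Real.log 2) := Real.exp_le_exp.2 h5
        _ = 2 := Real.exp_log (by norm_num)
    have h6 : 4000 / (ρ * β) < Real.exp (t * w0.im) * 2 := by
      rw [h3] at h2
      refine h2.trans_le ?_
      gcongr
    have h7 : 2 * (1 + t * (2 * (100/ρ))) ≤ 4000 / (ρ * β) := by
      rw [le_div_iff₀ (by positivity)]
      have : 2 * (1 + t * (2 * (100/ρ))) * (ρ * β) = 2 * (ρ * β) + 800 * Real.pi := by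
        rw [ht]; field_simp; ring
      rw [this]; linarith
    linarith
  obtain ⟨W0, hW1, hW2⟩ := Tr_start D w (R := 100/ρ) (by rw [le_div_iff₀ hρ]; linarith) hbig
  have hall := Tr_all D hρ hs ha ws hW1 hW2
  have horb : ∀ n, g^[n] z = Complex.exp (2 * Real.pi * Complex.I * (w n + 3 * Complex.I)) := by
    intro n
    induction n with
    | zero => exact hexp0.symm
    | succ n ih =>
      rw [Function.iterate_succ_apply', ih, ← hconj _ (by have := hall n; linarith), ← ws]
  intro n
  rw [horb, mem_ball_zero_iff, hnorm, Real.exp_lt_one_iff]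
  have := hall n
  nlinarith

lemma stab_conj {α ρ : ℝ} (h : Stab (-α) ρ) : Stab α ρ := by
  intro f hf z hz n
  set g : ℂ → ℂ := fun z => (starRingEnd ℂ) (f ((starRingEnd ℂ) z)) with hg
  have hlam : (starRingEnd ℂ) (lam α) = lam (-α) := by
    rw [lam, lam, ← Complex.exp_conj]
    congr 1
    have h2 : (starRingEnd ℂ) 2 = 2 := Complex.conj_ofNat 2
    simp [h2]
  have hgS : g ∈ SC (-α) := by
    refine ⟨?_, ?_⟩
    · intro x hx
      apply DifferentiableAt.differentiableWithinAt
      have hx' : (starRingEnd ℂ) x ∈ Metric.ball (0:ℂ) 1 := by simpa using hx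
      have : DifferentiableAt ℂ f ((starRingEnd ℂ) x) := hf.1.differentiableAt (Metric.isOpen_ball.mem_nhds hx')
      have h2 := this.conj_conj
      rw [Complex.conj_conj] at h2
      exact h2
    · intro x hx
      have hx' : (starRingEnd ℂ) x ∈ Metric.ball (0:ℂ) 1 := by simpa using hx
      have := hf.2 _ hx'
      rw [hg, ← hlam, ← Complex.norm_conj]
      simpa using this
  have hit : ∀ n, g^[n] ((starRingEnd ℂ) z) = (starRingEnd ℂ) (f^[n] z) := by
    intro n
    induction n with
    | zero => rfl
    | succ n ih => rw [Function.iterate_succ_apply', Function.iterate_succ_apply', ih, hg]; simp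
  have := h g hgS ((starRingEnd ℂ) z) (by simpa using hz) n
  rw [hit] at this
  simpa using this

lemma stab_renorm (a ρ : ℝ) (ha : 0 < a) (hρ : 0 < ρ) (hN : ((1000000:ℕ):ℝ) ≤ 1/a) (hs : Stab a ρ) :
    Stab (Int.fract (1/a)) ((ρ/(4000*a))^(1/a)) := by
  apply stab_conj
  have h := stab_neg_of (β := 1/a) (by exact_mod_cast hN) hρ (by rwa [one_div_one_div])
  have e : ρ * (1/a) / 4000 = ρ/(4000*a) := by field_simp
  rwa [e] at h

/-- For some `N`, for every non-Brjuno `α ∈ Irr_N` the forward orbit of the critical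
point of `P_α` accumulates at the fixed point `0`. -/
theorem critical_orbit_accumulates_at_zero :
    ∃ N : ℕ, 0 < N ∧ ∀ α : ℝ, α ∈ IrrN N → ¬ IsBrjuno α →
      MapClusterPt (0 : ℂ) atTop (fun n : ℕ => (Pa α)^[n + 1] (cpa α)) := by
  refine ⟨1000000, by norm_num, fun α hα hB => ?_⟩
  by_contra hc
  obtain ⟨ρ, hρ, hs⟩ := stab_of_not_cluster hc
  exact hB (brjuno_of_stab (N := 1000000) (by norm_num) (C := 4000) (by norm_num) stab_renorm hα hρ hs)
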